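/- With probability 1, f(3) = ∞; that is, almost surely there are infinitely many times t ≥ 1 at which the currently occupied site S_t is a favorite site and there are exactly three favorite sites. -/

import Mathlib

open MeasureTheory ProbabilityTheory

/-!
It is enough to meet, at arbitrarily large heights `h`, favorite triples `{x, x + 1, x + 3}` of
common local time `h` while the walk stands at `x`. Let the walk read its directions from stacks of
fair arrows, one stack per site. When the numbers of departures from all sites are prescribed, the
crossings of successive edges to the left and to the right of the final position form two
independent chains, as in the Ray–Knight description. Boundedly many of the events that a left
chain starts at `x` and a right chain at `x + 3` can occur together, and prescribing the departures
from `x + 1` as well costs a factor `O(1 / j)` when the local times are `j` below `h`. So from a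
favorite triple of height `h - j` the expected number of triples of height `h` is `O(1 / j)`,
which amounts to `O(1 + log m)` for the heights in `[2 m, 4 m)`. Conversely, when the walk first
reaches local time `H` inside `[-l H, l H]`, survival estimates for the chains bound the expected
number of triples with height in `[2 m, 4 m)` below by a constant, with `m` a large multiple of
`l H`. Decomposing that expectation according to the first triple shows that one is met with
probability at least a constant over `1 + log m`. Along geometrically growing heights these
probabilities have a divergent sum, so a triple is met beyond every height unless the confinement
to `[-l H, l H]` fails. The probability of that is at most `4 / l`, and `l` is arbitrary.
-/

namespace FavoriteSites

section ProductMeasure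

variable {ι : Type*} {X : ι → Type*}

lemma dependsOn_mem_inter {S : Set ι} {A B : Set (∀ i, X i)} (hA : DependsOn (· ∈ A) S)
    (hB : DependsOn (· ∈ B) S) : DependsOn (· ∈ A ∩ B) S :=
  fun _ _ h ↦ congrArg₂ And (hA h) (hB h)

variable [∀ i, MeasurableSpace (X i)]

lemma measurableSet_of_dependsOn_finite [∀ i, Countable (X i)]
    [∀ i, MeasurableSingletonClass (X i)] {S : Set ι} (hS : S.Finite) {A : Set (∀ i, X i)}
    (hA : DependsOn (· ∈ A) S) : MeasurableSet A := by
  have : Finite S := hS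
  have hpre : A = S.domRestrict ⁻¹' (S.domRestrict '' A) := by
    refine (Set.subset_preimage_image _ _).antisymm ?_
    rintro s ⟨s', hs', heq⟩
    exact (hA fun i hi ↦ congrFun heq ⟨i, hi⟩).mp hs'
  rw [hpre]
  exact (Set.to_countable _).measurableSet.preimage (by fun_prop)

variable {μ : ∀ i, Measure (X i)} [∀ i, IsProbabilityMeasure (μ i)]

lemma measurableSet_iSup_comap_of_dependsOn [∀ i, Nonempty (X i)] {S : Set ι}
    {A : Set (∀ i, X i)} (hA : MeasurableSet A) (hdep : DependsOn (· ∈ A) S) :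
    MeasurableSet[⨆ i ∈ S, MeasurableSpace.comap (fun s : ∀ i, X i ↦ s i) inferInstance] A := by
  classical
  let reset : (∀ i, X i) → ∀ i, X i :=
    fun s i ↦ if i ∈ S then s i else Classical.arbitrary _
  have hpre : A = reset ⁻¹' A := by
    ext s
    exact (hdep fun i hi ↦ by simp [reset, hi]).to_iff
  rw [hpre]
  refine hA.preimage (@measurable_pi_lambda _ _ _
    (⨆ i ∈ S, MeasurableSpace.comap (fun s : ∀ i, X i ↦ s i) inferInstance) _ _ fun i ↦ ?_)
  by_cases hi : i ∈ S
  · simp only [reset, hi, if_true]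
    exact (comap_measurable _).mono (le_iSup₂_of_le i hi le_rfl) le_rfl
  · simp only [reset, hi, if_false]
    exact measurable_const

lemma infinitePi_real_inter_of_dependsOn {S T : Set ι} (hST : Disjoint S T)
    {A B : Set (∀ i, X i)} (hA : MeasurableSet A) (hB : MeasurableSet B)
    (hAS : DependsOn (· ∈ A) S) (hBT : DependsOn (· ∈ B) T) :
    (Measure.infinitePi μ).real (A ∩ B) =
      (Measure.infinitePi μ).real A * (Measure.infinitePi μ).real B := by
  have : ∀ i, Nonempty (X i) := fun i ↦ (μ i).nonempty_of_neZero
  have hcoord : iIndepFun (fun i (s : ∀ i, X i) ↦ s i) (Measure.infinitePi μ) :=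
    iIndepFun_infinitePi (X := fun _ x ↦ x) fun _ ↦ measurable_id
  have hindep := (Indep_iff _ _ _).mp (indep_iSup_of_disjoint
    (fun i ↦ (measurable_pi_apply i).comap_le) hcoord.iIndep hST) A B
    (measurableSet_iSup_comap_of_dependsOn hA hAS) (measurableSet_iSup_comap_of_dependsOn hB hBT)
  simp only [Measure.real, hindep, ENNReal.toReal_mul]

end ProductMeasure

section PrefixCylinders

variable {X : Type*}

lemma dependsOn_prefixCylinder (n : ℕ) (w : ℕ → X) :
    DependsOn (· ∈ {s : ℕ → X | ∀ i < n, s i = w i}) (Set.Iio n) :=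
  fun _ _ h ↦ propext <| forall₂_congr fun i hi ↦ by rw [h i hi]

lemma measurableSet_prefixCylinder [MeasurableSpace X] [Countable X] [MeasurableSingletonClass X]
    (n : ℕ) (w : ℕ → X) : MeasurableSet {s : ℕ → X | ∀ i < n, s i = w i} :=
  measurableSet_of_dependsOn_finite (Set.finite_Iio n) (dependsOn_prefixCylinder n w)

lemma ext_of_prefixCylinder [Nonempty X] [MeasurableSpace X] [Countable X]
    [MeasurableSingletonClass X]
    {μ ν : Measure (ℕ → X)} [IsFiniteMeasure ν]
    (h : ∀ n (w : ℕ → X), μ {s | ∀ i < n, s i = w i} = ν {s | ∀ i < n, s i = w i}) : μ = ν := by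
  classical
  have hproj : IsProjectiveMeasureFamily fun I : Finset ℕ ↦ ν.map I.restrict := by
    intro I J hJI
    rw [Measure.map_map (Finset.measurable_restrict₂ hJI) (Finset.measurable_restrict I)]
    rfl
  refine IsProjectiveLimit.unique ((isProjectiveLimit_nat_iff hproj μ).mpr fun n ↦ ?_)
    fun I ↦ (rfl : ν.map I.restrict = _)
  refine Measure.ext_of_singleton fun v ↦ ?_
  have hpre : (Preorder.frestrictLe n : (ℕ → X) → _) ⁻¹' {v} = {s | ∀ i < n + 1, s i =
      (fun i ↦ if hi : i ∈ Finset.Iic n then v ⟨i, hi⟩ else Classical.arbitrary X) i} := by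
    ext s
    simp +contextual [funext_iff]
  rw [Measure.map_apply (by fun_prop) (measurableSet_singleton v),
    Measure.map_apply (by fun_prop) (measurableSet_singleton v)]
  change μ (Preorder.frestrictLe n ⁻¹' {v}) = ν (Preorder.frestrictLe n ⁻¹' {v})
  rw [hpre]
  exact h _ _

end PrefixCylinders

section CoinFlips

/-- The law of one fair coin flip. -/
noncomputable def fairCoin : Measure Bool := (PMF.uniformOfFintype Bool).toMeasure

instance : IsProbabilityMeasure fairCoin := by unfold fairCoin; infer_instance

lemma fairCoin_singleton (b : Bool) : fairCoin {b} = 1 / 2 := by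
  rw [fairCoin, PMF.toMeasure_apply_singleton _ _ (measurableSet_singleton _)]
  simp

/-- The law of a family of independent fair coin flips indexed by `I`. -/
noncomputable def coinFlips (I : Type*) : Measure (I → Bool) :=
  Measure.infinitePi fun _ ↦ fairCoin

instance (I : Type*) : IsProbabilityMeasure (coinFlips I) := by unfold coinFlips; infer_instance

lemma coinFlips_cylinder {I : Type*} (F : Finset I) (w : I → Bool) :
    coinFlips I {s | ∀ i ∈ F, s i = w i} = (1 / 2) ^ F.card := by
  have hpi : {s : I → Bool | ∀ i ∈ F, s i = w i} = Set.pi F fun i ↦ {w i} := by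
    ext s
    simp [Set.pi]
  rw [hpi, coinFlips, Measure.infinitePi_pi _ fun _ _ ↦ measurableSet_singleton _]
  simp [fairCoin_singleton]

lemma coinFlips_prefixCylinder (n : ℕ) (w : ℕ → Bool) :
    coinFlips ℕ {s | ∀ i < n, s i = w i} = (1 / 2) ^ n := by
  simpa using coinFlips_cylinder (Finset.range n) w

lemma eq_coinFlips_of_prefixCylinder {μ : Measure (ℕ → Bool)}
    (h : ∀ n (w : ℕ → Bool), μ {s | ∀ i < n, s i = w i} = (1 / 2) ^ n) : μ = coinFlips ℕ :=
  ext_of_prefixCylinder fun n w ↦ by rw [h, coinFlips_prefixCylinder]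

lemma coinFlips_real_inter_of_dependsOn {I : Type*} {S T : Set I} (hST : Disjoint S T)
    {A B : Set (I → Bool)} (hA : MeasurableSet A) (hB : MeasurableSet B)
    (hAS : DependsOn (· ∈ A) S) (hBT : DependsOn (· ∈ B) T) :
    (coinFlips I).real (A ∩ B) = (coinFlips I).real A * (coinFlips I).real B :=
  infinitePi_real_inter_of_dependsOn hST hA hB hAS hBT

/-- The sequence that follows `s` up to time `t` and then `s'`, read from its beginning. -/
def splice (t : ℕ) (s s' : ℕ → Bool) : ℕ → Bool := fun i ↦ if i < t then s i else s' (i - t)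

lemma splice_of_lt {t i : ℕ} (h : i < t) (s s' : ℕ → Bool) : splice t s s' i = s i := if_pos h

@[simp]
lemma splice_add (t i : ℕ) (s s' : ℕ → Bool) : splice t s s' (t + i) = s' i := by simp [splice]

lemma measurable_splice (t : ℕ) :
    Measurable fun p : (ℕ → Bool) × (ℕ → Bool) ↦ splice t p.1 p.2 := by
  refine measurable_pi_lambda _ fun i ↦ ?_
  by_cases h : i < t
  · simp only [splice, h, if_true]; fun_prop
  · simp only [splice, h, if_false]; fun_prop

lemma splice_mem_prefixCylinder_iff {n t : ℕ} {s s' w : ℕ → Bool} :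
    (∀ i < n, splice t s s' i = w i) ↔
      (∀ i < min n t, s i = w i) ∧ ∀ i < n - t, s' i = w (t + i) := by
  constructor
  · intro h
    refine ⟨fun i hi ↦ ?_, fun i hi ↦ ?_⟩
    · rw [← splice_of_lt (t := t) (by omega) s s', h i (by omega)]
    · rw [← splice_add t i s s', h (t + i) (by omega)]
  · rintro ⟨hs, hs'⟩ i hi
    obtain hit | ⟨k, rfl⟩ := (lt_or_ge i t).imp_right Nat.exists_eq_add_of_le
    · rw [splice_of_lt hit, hs i (by omega)]
    · rw [splice_add, hs' k (by omega)]

lemma map_splice_prod_coinFlips (t : ℕ) :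
    ((coinFlips ℕ).prod (coinFlips ℕ)).map (fun p ↦ splice t p.1 p.2) = coinFlips ℕ := by
  refine eq_coinFlips_of_prefixCylinder fun n w ↦ ?_
  have hpre : (fun p : (ℕ → Bool) × (ℕ → Bool) ↦ splice t p.1 p.2) ⁻¹'
      {s | ∀ i < n, s i = w i} =
        {s | ∀ i < min n t, s i = w i} ×ˢ {s' | ∀ i < n - t, s' i = w (t + i)} :=
    Set.ext fun _ ↦ splice_mem_prefixCylinder_iff
  rw [Measure.map_apply (measurable_splice t) (measurableSet_prefixCylinder n w), hpre,
    Measure.prod_prod, coinFlips_prefixCylinder, coinFlips_prefixCylinder (w := fun i ↦ w (t + i)),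
    ← pow_add]
  congr 1
  omega

variable {t : ℕ} {D : Set (ℕ → Bool)}

lemma coinFlips_inter_eq_setLIntegral (hD : DependsOn (· ∈ D) (Set.Iio t))
    {E : Set (ℕ → Bool)} (hE : MeasurableSet E) :
    coinFlips ℕ (D ∩ E) = ∫⁻ s in D, coinFlips ℕ {s' | splice t s s' ∈ E} ∂(coinFlips ℕ) := by
  have hDmeas : MeasurableSet D := measurableSet_of_dependsOn_finite (Set.finite_Iio t) hD
  have hmem : ∀ s s', splice t s s' ∈ D ↔ s ∈ D :=
    fun s s' ↦ (hD fun i hi ↦ splice_of_lt hi s s').to_iff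
  conv_lhs => rw [← map_splice_prod_coinFlips t]
  rw [Measure.map_apply (measurable_splice t) (hDmeas.inter hE),
    Measure.prod_apply (measurable_splice t (hDmeas.inter hE)), ← lintegral_indicator hDmeas]
  refine lintegral_congr fun s ↦ ?_
  change coinFlips ℕ {s' | splice t s s' ∈ D ∧ splice t s s' ∈ E} = _
  by_cases hs : s ∈ D
  · simp [hmem, hs]
  · simp [hmem, hs]

lemma measurable_coinFlips_splice_mem (t : ℕ) {E : Set (ℕ → Bool)} (hE : MeasurableSet E) :
    Measurable fun s ↦ coinFlips ℕ {s' | splice t s s' ∈ E} :=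
  measurable_measure_prodMk_left (measurable_splice t hE)

lemma integrable_coinFlips_splice_mem (t : ℕ) {E : Set (ℕ → Bool)} (hE : MeasurableSet E) :
    Integrable (fun s ↦ (coinFlips ℕ).real {s' | splice t s s' ∈ E}) (coinFlips ℕ) :=
  .of_bound (measurable_coinFlips_splice_mem t hE).ennreal_toReal.aestronglyMeasurable 1 <|
    .of_forall fun _ ↦ by
      simpa only [Real.norm_of_nonneg measureReal_nonneg] using measureReal_le_one

lemma coinFlips_real_inter_eq_setIntegral (hD : DependsOn (· ∈ D) (Set.Iio t))
    {E : Set (ℕ → Bool)} (hE : MeasurableSet E) :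
    (coinFlips ℕ).real (D ∩ E) =
      ∫ s in D, (coinFlips ℕ).real {s' | splice t s s' ∈ E} ∂(coinFlips ℕ) := by
  rw [integral_eq_lintegral_of_nonneg_ae (.of_forall fun _ ↦ measureReal_nonneg)
      (measurable_coinFlips_splice_mem t hE).ennreal_toReal.aestronglyMeasurable,
    Measure.real, coinFlips_inter_eq_setLIntegral hD hE]
  simp [Measure.real]

lemma sum_coinFlips_real_inter_le {J : Type*} (F : Finset J) (hD : DependsOn (· ∈ D) (Set.Iio t))
    {E : J → Set (ℕ → Bool)} (hE : ∀ j ∈ F, MeasurableSet (E j)) {C : ℝ}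
    (h : ∀ s ∈ D, ∑ j ∈ F, (coinFlips ℕ).real {s' | splice t s s' ∈ E j} ≤ C) :
    ∑ j ∈ F, (coinFlips ℕ).real (D ∩ E j) ≤ C * (coinFlips ℕ).real D := by
  have hDmeas : MeasurableSet D := measurableSet_of_dependsOn_finite (Set.finite_Iio t) hD
  have hintegrable : ∀ j ∈ F,
      IntegrableOn (fun s ↦ (coinFlips ℕ).real {s' | splice t s s' ∈ E j}) D (coinFlips ℕ) :=
    fun j hj ↦ (integrable_coinFlips_splice_mem t (hE j hj)).integrableOn
  calc ∑ j ∈ F, (coinFlips ℕ).real (D ∩ E j)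
      = ∫ s in D, ∑ j ∈ F, (coinFlips ℕ).real {s' | splice t s s' ∈ E j} ∂(coinFlips ℕ) := by
        rw [integral_finsetSum _ hintegrable]
        exact Finset.sum_congr rfl fun j hj ↦ coinFlips_real_inter_eq_setIntegral hD (hE j hj)
    _ ≤ ∫ _ in D, C ∂(coinFlips ℕ) :=
        setIntegral_mono_on (integrable_finsetSum _ hintegrable) (integrable_const _).integrableOn
          hDmeas h
    _ = C * (coinFlips ℕ).real D := by simp [mul_comm]

lemma le_coinFlips_real_inter (hD : DependsOn (· ∈ D) (Set.Iio t))
    {E : Set (ℕ → Bool)} (hE : MeasurableSet E) {c : ℝ}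
    (h : ∀ s ∈ D, c ≤ (coinFlips ℕ).real {s' | splice t s s' ∈ E}) :
    c * (coinFlips ℕ).real D ≤ (coinFlips ℕ).real (D ∩ E) := by
  have hDmeas : MeasurableSet D := measurableSet_of_dependsOn_finite (Set.finite_Iio t) hD
  calc c * (coinFlips ℕ).real D = ∫ _ in D, c ∂(coinFlips ℕ) := by simp [mul_comm]
    _ ≤ ∫ s in D, (coinFlips ℕ).real {s' | splice t s s' ∈ E} ∂(coinFlips ℕ) :=
        setIntegral_mono_on (integrable_const _).integrableOn
          (integrable_coinFlips_splice_mem t hE).integrableOn hDmeas h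
    _ = (coinFlips ℕ).real (D ∩ E) := (coinFlips_real_inter_eq_setIntegral hD hE).symm

end CoinFlips

section Walk

/-- The local times accumulated so far by a nearest-neighbour walk, together with its current
position. -/
@[ext]
structure WalkState where
  localTime : ℤ → ℕ
  pos : ℤ

/-- The increment prescribed by a coin flip. -/
def direction (b : Bool) : ℤ := if b then 1 else -1

@[simp] lemma direction_true : direction true = 1 := rfl

@[simp] lemma direction_false : direction false = -1 := rfl

/-- One move of the walk; the site moved to receives the visit. -/
def WalkState.step (u : WalkState) (b : Bool) : WalkState where
  localTime := Function.update u.localTime (u.pos + direction b)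
    (u.localTime (u.pos + direction b) + 1)
  pos := u.pos + direction b

/-- The state after `t` moves from `u` along the flips `s`. -/
def WalkState.run (u : WalkState) (s : ℕ → Bool) : ℕ → WalkState
  | 0 => u
  | t + 1 => (u.run s t).step (s t)

namespace WalkState

variable (u : WalkState)

lemma run_congr {s s' : ℕ → Bool} {t : ℕ} (h : ∀ i < t, s i = s' i) : u.run s t = u.run s' t := by
  induction t with
  | zero => rfl
  | succ t ih => rw [run, run, ih fun i hi ↦ h i (by omega), h t (by omega)]

lemma run_splice_add (s s' : ℕ → Bool) (t k : ℕ) :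
    u.run (splice t s s') (t + k) = (u.run s t).run s' k := by
  induction k with
  | zero => exact u.run_congr fun i hi ↦ splice_of_lt hi s s'
  | succ k ih => rw [← add_assoc, run, ih, run, splice_add]

lemma localTime_le_step (b : Bool) (y : ℤ) : u.localTime y ≤ (u.step b).localTime y := by
  by_cases h : y = u.pos + direction b
  · simp [step, h]
  · simp [step, h]

lemma monotone_localTime_run (s : ℕ → Bool) (y : ℤ) :
    Monotone fun t ↦ (u.run s t).localTime y :=
  monotone_nat_of_le_succ fun _ ↦ localTime_le_step _ _ _

lemma dependsOn_run (t : ℕ) (P : WalkState → Prop) :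
    DependsOn (· ∈ {s | P (u.run s t)}) (Set.Iio t) :=
  fun _ _ h ↦ congrArg P (u.run_congr h)

lemma measurableSet_run (t : ℕ) (P : WalkState → Prop) : MeasurableSet {s | P (u.run s t)} :=
  measurableSet_of_dependsOn_finite (Set.finite_Iio t) (u.dependsOn_run t P)

/-- The three favorite sites are `x`, `x + 1` and `x + 3`, all with local time `h`, and the walk
sits at the first of them. Only favorite triples of this shape are needed. -/
def IsFavTriple (x : ℤ) (h : ℕ) : Prop :=
  u.pos = x ∧ u.localTime x = h ∧ u.localTime (x + 1) = h ∧ u.localTime (x + 3) = h ∧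
    ∀ y, y ≠ x → y ≠ x + 1 → y ≠ x + 3 → u.localTime y < h

/-- The flips along which the walk from `u` meets the favorite triple `(x, h)`. -/
def hitsTriple (x : ℤ) (h : ℕ) : Set (ℕ → Bool) := {s | ∃ k, (u.run s k).IsFavTriple x h}

variable {u}

lemma IsFavTriple.localTime_le {x : ℤ} {h : ℕ} (hu : u.IsFavTriple x h) (y : ℤ) :
    u.localTime y ≤ h := by
  obtain ⟨-, h0, h1, h3, hlt⟩ := hu
  grind

lemma IsFavTriple.eq_of_le_localTime {x y : ℤ} {h : ℕ} (hu : u.IsFavTriple x h)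
    (hy : h ≤ u.localTime y) : y = x ∨ y = x + 1 ∨ y = x + 3 := by
  by_contra! hne
  exact (hu.2.2.2.2 y hne.1 hne.2.1 hne.2.2).not_ge hy

variable (u) in
lemma measurableSet_hitsTriple (x : ℤ) (h : ℕ) : MeasurableSet (u.hitsTriple x h) := by
  rw [hitsTriple, Set.ofPred_exists]
  exact .iUnion fun k ↦ u.measurableSet_run k (IsFavTriple · x h)

lemma IsFavTriple.le_of_run {x x' : ℤ} {h h' k : ℕ} {s : ℕ → Bool} (hu : u.IsFavTriple x h)
    (hrun : (u.run s k).IsFavTriple x' h') : h ≤ h' := by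
  have hmono : u.localTime x ≤ _ := u.monotone_localTime_run s x (Nat.zero_le k)
  have hx : u.localTime x = h := hu.2.1
  exact hx ▸ hmono.trans (hrun.localTime_le x)

lemma IsFavTriple.eq_of_run {x x' : ℤ} {h k : ℕ} {s : ℕ → Bool} (hu : u.IsFavTriple x h)
    (hrun : (u.run s k).IsFavTriple x' h) : x = x' := by
  have hsite : ∀ y, u.localTime y = h → y = x' ∨ y = x' + 1 ∨ y = x' + 3 := fun y hy ↦
    hrun.eq_of_le_localTime (hy ▸ u.monotone_localTime_run s y (Nat.zero_le k))
  obtain ⟨-, h0, h1, h3, -⟩ := hu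
  have := hsite x h0
  have := hsite (x + 1) h1
  have := hsite (x + 3) h3
  omega

end WalkState

end Walk

section Stacks

/-- Stacks of arrows (Diaconis–Fulton): `ω (y, n)` is the direction of the departure number `n`
from the site `y`, departures being counted from `0`. -/
abbrev ArrowStacks := ℤ × ℕ → Bool

/-- The position of a walk, together with the number of its departures from each site. -/
structure DepartureState where
  pos : ℤ
  dep : ℤ → ℕ

/-- One move of the walk, counted as a departure from the current position. -/
def DepartureState.move (v : DepartureState) (b : Bool) : DepartureState where
  pos := v.pos + direction b
  dep := Function.update v.dep v.pos (v.dep v.pos + 1)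

/-- The index of the arrow to be followed next. -/
def DepartureState.nextArrow (v : DepartureState) : ℤ × ℕ := (v.pos, v.dep v.pos)

/-- The walk started at `a` that follows the flips `s`, with its departures. -/
def flipWalk (a : ℤ) (s : ℕ → Bool) : ℕ → DepartureState
  | 0 => ⟨a, 0⟩
  | t + 1 => (flipWalk a s t).move (s t)

/-- The walk started at `a` that follows, from each site, the successive arrows of its stack. -/
def stackWalk (a : ℤ) (ω : ArrowStacks) : ℕ → DepartureState
  | 0 => ⟨a, 0⟩
  | t + 1 => (stackWalk a ω t).move (ω (stackWalk a ω t).nextArrow)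

/-- The sequence of the arrows followed by the stack walk from `a`. -/
def readArrows (a : ℤ) (ω : ArrowStacks) (t : ℕ) : Bool := ω (stackWalk a ω t).nextArrow

lemma stackWalk_succ (a : ℤ) (ω : ArrowStacks) (t : ℕ) :
    stackWalk a ω (t + 1) = (stackWalk a ω t).move (readArrows a ω t) := rfl

lemma stackWalk_eq_flipWalk (a : ℤ) (ω : ArrowStacks) (t : ℕ) :
    stackWalk a ω t = flipWalk a (readArrows a ω) t := by
  induction t with
  | zero => rfl
  | succ t ih => rw [stackWalk_succ, flipWalk, ih]

lemma flipWalk_congr (a : ℤ) {s s' : ℕ → Bool} {t : ℕ} (h : ∀ i < t, s i = s' i) :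
    flipWalk a s t = flipWalk a s' t := by
  induction t with
  | zero => rfl
  | succ t ih => rw [flipWalk, flipWalk, ih fun i hi ↦ h i (by omega), h t (by omega)]

lemma monotone_dep_flipWalk (a : ℤ) (s : ℕ → Bool) (y : ℤ) :
    Monotone fun t ↦ (flipWalk a s t).dep y := by
  refine monotone_nat_of_le_succ fun t ↦ ?_
  by_cases h : y = (flipWalk a s t).pos
  · simp [flipWalk, DepartureState.move, h]
  · simp [flipWalk, DepartureState.move, h]

lemma nextArrow_flipWalk_injective (a : ℤ) (s : ℕ → Bool) :
    Function.Injective fun t ↦ (flipWalk a s t).nextArrow := by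
  refine Function.Injective.of_lt_imp_ne fun i j hij heq ↦ ?_
  simp only [DepartureState.nextArrow, Prod.mk.injEq] at heq
  have hmono := monotone_dep_flipWalk a s (flipWalk a s i).pos (Nat.succ_le_of_lt hij)
  simp only [flipWalk, DepartureState.move, Function.update_self] at hmono
  rw [← heq.1] at heq
  omega

lemma readArrows_eq_prefix_iff (a : ℤ) (w : ℕ → Bool) (n : ℕ) (ω : ArrowStacks) :
    (∀ i < n, readArrows a ω i = w i) ↔ ∀ i < n, ω (flipWalk a w i).nextArrow = w i := by
  induction n with
  | zero => simp
  | succ n ih =>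
    simp only [Nat.forall_lt_succ_right, ih]
    refine and_congr_right fun h ↦ ?_
    rw [readArrows, stackWalk_eq_flipWalk, flipWalk_congr a (ih.mpr h)]

lemma setOf_readArrows_eq_prefix (a : ℤ) (w : ℕ → Bool) (n : ℕ) :
    {ω | ∀ i < n, readArrows a ω i = w i} =
      {ω : ArrowStacks | ∀ p ∈ (Finset.range n).image fun i ↦ (flipWalk a w i).nextArrow,
        ω p = w (Function.invFun (fun i ↦ (flipWalk a w i).nextArrow) p)} := by
  ext ω
  have hinv := Function.leftInverse_invFun (nextArrow_flipWalk_injective a w)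
  simp only [Set.mem_ofPred_eq, readArrows_eq_prefix_iff, Finset.forall_mem_image,
    Finset.mem_range, hinv _]

lemma measurableSet_readArrows_eq_prefix (a : ℤ) (w : ℕ → Bool) (n : ℕ) :
    MeasurableSet {ω | ∀ i < n, readArrows a ω i = w i} := by
  rw [setOf_readArrows_eq_prefix]
  exact measurableSet_of_dependsOn_finite (Finset.finite_toSet _) fun ω ω' h ↦
    propext <| forall₂_congr fun p hp ↦ by rw [h p hp]

lemma measurable_readArrows (a : ℤ) : Measurable (readArrows a) := by
  classical
  refine measurable_pi_lambda _ fun t ↦ measurable_to_bool ?_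
  have hunion : (fun ω ↦ readArrows a ω t) ⁻¹' {true} = ⋃ w : Fin t → Bool,
      {ω | ∀ i < t + 1, readArrows a ω i = if h : i < t then w ⟨i, h⟩ else true} := by
    ext ω
    simp only [Set.mem_preimage, Set.mem_singleton_iff, Set.mem_iUnion, Set.mem_ofPred_eq]
    refine ⟨fun h ↦ ⟨fun i ↦ readArrows a ω i, fun i hi ↦ ?_⟩, fun ⟨w, h⟩ ↦ by
      simpa using h t (Nat.lt_succ_self t)⟩
    obtain hlt | rfl := Nat.lt_succ_iff_lt_or_eq.mp hi
    · simp [hlt]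
    · simpa using h
  rw [hunion]
  exact .iUnion fun w ↦ measurableSet_readArrows_eq_prefix a _ (t + 1)

lemma map_readArrows_coinFlips (a : ℤ) :
    (coinFlips (ℤ × ℕ)).map (readArrows a) = coinFlips ℕ := by
  refine eq_coinFlips_of_prefixCylinder fun n w ↦ ?_
  have hcyl := coinFlips_cylinder ((Finset.range n).image fun i ↦ (flipWalk a w i).nextArrow)
    (w ∘ Function.invFun fun i ↦ (flipWalk a w i).nextArrow)
  rw [Finset.card_image_of_injective _ (nextArrow_flipWalk_injective a w),
    Finset.card_range] at hcyl
  rw [Measure.map_apply (measurable_readArrows a) (measurableSet_prefixCylinder n w), ← hcyl]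
  exact congrArg _ (setOf_readArrows_eq_prefix a w n)

lemma coinFlips_real_eq_stacks (a : ℤ) {E : Set (ℕ → Bool)} (hE : MeasurableSet E) :
    (coinFlips ℕ).real E = (coinFlips (ℤ × ℕ)).real {ω | readArrows a ω ∈ E} := by
  rw [Measure.real, ← map_readArrows_coinFlips a, Measure.map_apply (measurable_readArrows a) hE]
  rfl

lemma pos_run_readArrows (u : WalkState) (ω : ArrowStacks) (t : ℕ) :
    (u.run (readArrows u.pos ω) t).pos = (stackWalk u.pos ω t).pos := by
  induction t with
  | zero => rfl
  | succ t ih => rw [WalkState.run, WalkState.step, ih]; rfl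

/- Every visit but the last is followed by a departure and every departure but the first is
preceded by a visit; the indicators correct for the current and the initial position. -/
lemma localTime_run_readArrows (u : WalkState) (ω : ArrowStacks) (t : ℕ) (y : ℤ) :
    (u.run (readArrows u.pos ω) t).localTime y + (if y = u.pos then 1 else 0) =
      u.localTime y + (stackWalk u.pos ω t).dep y +
        (if y = (stackWalk u.pos ω t).pos then 1 else 0) := by
  induction t with
  | zero => rfl
  | succ t ih =>
    have hne : direction (readArrows u.pos ω t) ≠ 0 := by
      cases readArrows u.pos ω t <;> simp
    simp only [WalkState.run, WalkState.step, pos_run_readArrows, stackWalk_succ,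
      DepartureState.move, Function.update_apply]
    grind

/-- The number of arrows `b` among the first `n` arrows at `y`. -/
def arrowCount (b : Bool) (ω : ArrowStacks) (y : ℤ) (n : ℕ) : ℕ :=
  Nat.count (fun i ↦ ω (y, i) = b) n

/-- If any of the first `n` arrows at `y` is used, the last one of them is `b`. -/
def LastArrow (b : Bool) (ω : ArrowStacks) (y : ℤ) (n : ℕ) : Prop :=
  n = 0 ∨ ω (y, n - 1) = b

variable (b : Bool) (ω : ArrowStacks) (y : ℤ)

@[simp]
lemma arrowCount_zero : arrowCount b ω y 0 = 0 := Nat.count_zero _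

lemma arrowCount_succ (n : ℕ) :
    arrowCount b ω y (n + 1) = arrowCount b ω y n + if ω (y, n) = b then 1 else 0 :=
  Nat.count_succ _ _

lemma arrowCount_add_arrowCount_not (n : ℕ) :
    arrowCount b ω y n + arrowCount (!b) ω y n = n := by
  induction n with
  | zero => simp
  | succ n ih =>
    rw [arrowCount_succ, arrowCount_succ]
    cases b <;> cases h : ω (y, n) <;> grind

lemma monotone_arrowCount : Monotone (arrowCount b ω y) := Nat.count_monotone _

lemma arrowCount_le (n : ℕ) : arrowCount b ω y n ≤ n := Nat.count_le _

variable {b ω y}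

lemma arrowCount_lt_of_lastArrow {m n : ℕ} (hmn : m < n) (hn : LastArrow b ω y n) :
    arrowCount b ω y m < arrowCount b ω y n := by
  obtain ⟨n, rfl⟩ := Nat.exists_eq_add_one_of_ne_zero (Nat.ne_zero_of_lt hmn)
  have hb : ω (y, n) = b := hn.resolve_left n.succ_ne_zero
  rw [arrowCount_succ, if_pos hb]
  exact Nat.lt_succ_of_le (monotone_arrowCount b ω y (Nat.le_of_lt_succ hmn))

lemma arrowCount_move (v : DepartureState) (z : ℤ) (c : Bool) :
    arrowCount c ω z ((v.move (ω v.nextArrow)).dep z) =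
      arrowCount c ω z (v.dep z) + if z = v.pos ∧ ω v.nextArrow = c then 1 else 0 := by
  by_cases hz : z = v.pos
  · simp [DepartureState.move, DepartureState.nextArrow, hz, arrowCount_succ]
  · simp [DepartureState.move, hz]

variable (a y : ℤ) (ω : ArrowStacks) (t : ℕ)

/- The numbers of crossings of the edge `{y, y + 1}` upwards and downwards differ by at most one,
according to the sides on which the walk starts and ends. -/
lemma stackWalk_crossings_balance :
    arrowCount true ω y ((stackWalk a ω t).dep y) + (if y < a then 1 else 0) =
      arrowCount false ω (y + 1) ((stackWalk a ω t).dep (y + 1)) +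
        if y < (stackWalk a ω t).pos then 1 else 0 := by
  induction t with
  | zero => rfl
  | succ t ih =>
    rw [stackWalk, arrowCount_move, arrowCount_move]
    simp only [DepartureState.move]
    cases hb : ω (stackWalk a ω t).nextArrow
    · grind [direction_false]
    · grind [direction_true]

lemma stackWalk_lastArrow_true (h : y < (stackWalk a ω t).pos) :
    LastArrow true ω y ((stackWalk a ω t).dep y) := by
  induction t with
  | zero => exact .inl rfl
  | succ t ih =>
    rw [stackWalk] at h ⊢
    by_cases hy : y = (stackWalk a ω t).pos
    · cases hb : ω (stackWalk a ω t).nextArrow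
      · simp [DepartureState.move, hb, hy] at h
      · simpa [DepartureState.move, hy, LastArrow, DepartureState.nextArrow] using hb
    · simp only [DepartureState.move, Function.update_of_ne hy] at h ⊢
      exact ih (by cases hb : ω (stackWalk a ω t).nextArrow <;> simp [hb] at h <;> omega)

lemma stackWalk_lastArrow_false (h : (stackWalk a ω t).pos < y) :
    LastArrow false ω y ((stackWalk a ω t).dep y) := by
  induction t with
  | zero => exact .inl rfl
  | succ t ih =>
    rw [stackWalk] at h ⊢
    by_cases hy : y = (stackWalk a ω t).pos
    · cases hb : ω (stackWalk a ω t).nextArrow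
      · simpa [DepartureState.move, hy, LastArrow, DepartureState.nextArrow] using hb
      · simp [DepartureState.move, hb, hy] at h
    · simp only [DepartureState.move, Function.update_of_ne hy] at h ⊢
      exact ih (by cases hb : ω (stackWalk a ω t).nextArrow <;> simp [hb] at h <;> omega)

end Stacks

section Profiles

/-- The crossings of the edge next to `z` that are forced by a start at `a` beyond that edge: the
walk has moved in the direction `b` out of `z` once more than it has moved back, unless it started
on the far side already. -/
def immigration (b : Bool) (a z : ℤ) : ℕ :=
  if b then if a ≤ z then 1 else 0 else if z ≤ a then 1 else 0

/-- The departures `D z` from `z` end with an arrow `b`, and the number of the arrows `b` among them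
is the number of crossings back from the next site in the direction `b`, plus `I z`. -/
def ChainStep (b : Bool) (ω : ArrowStacks) (I : ℤ → ℕ) (D : ℤ → ℕ) (z : ℤ) : Prop :=
  LastArrow b ω z (D z) ∧ arrowCount b ω z (D z) =
    arrowCount (!b) ω (z + direction b) (D (z + direction b)) + I z

/-- The local consistency conditions on the departures `D` of a walk from `a` to `x`: on either side
of `x`, the walk last left each site towards `x`, and the crossings of each edge balance. -/
def IsDepartureProfile (a x : ℤ) (ω : ArrowStacks) (D : ℤ → ℕ) : Prop :=
  ∀ b z, 0 < (x - z) * direction b → ChainStep b ω (immigration b a) D z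

lemma isDepartureProfile_stackWalk (a : ℤ) (ω : ArrowStacks) (t : ℕ) :
    IsDepartureProfile a (stackWalk a ω t).pos ω (stackWalk a ω t).dep := by
  rintro (_ | _) z hz <;> simp only [direction_true, direction_false] at hz
  · refine ⟨stackWalk_lastArrow_false a z ω t (by omega), ?_⟩
    have := stackWalk_crossings_balance a (z - 1) ω t
    rw [sub_add_cancel] at this
    simp only [direction_false, immigration, Bool.not_false, ← sub_eq_add_neg]
    grind
  · refine ⟨stackWalk_lastArrow_true a z ω t (by omega), ?_⟩
    have := stackWalk_crossings_balance a z ω t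
    simp only [direction_true, immigration, Bool.not_true]
    grind

namespace IsDepartureProfile

variable {a x : ℤ} {ω : ArrowStacks} {D : ℤ → ℕ}

lemma crossings_balance (hD : IsDepartureProfile a x ω D) (y : ℤ) :
    arrowCount true ω y (D y) + (if y < a then 1 else 0) =
      arrowCount false ω (y + 1) (D (y + 1)) + if y < x then 1 else 0 := by
  by_cases hy : y < x
  · have := (hD true y (by simpa using hy)).2
    simp only [direction_true, immigration, Bool.not_true] at this
    grind
  · have := (hD false (y + 1) (by simp only [direction_false]; omega)).2
    simp only [direction_false, immigration, Bool.not_false, add_neg_cancel_right] at this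
    grind

/- If the walk has not exceeded the departures `D`, then it stands at `x` when it exhausts them at
its current position, and then it has exhausted them everywhere, by propagation away from `x`. -/
lemma stackWalk_pos_eq (hD : IsDepartureProfile a x ω D) {t : ℕ}
    (hle : ∀ y, (stackWalk a ω t).dep y ≤ D y)
    (hpos : (stackWalk a ω t).dep (stackWalk a ω t).pos = D (stackWalk a ω t).pos) :
    (stackWalk a ω t).pos = x := by
  set p := (stackWalk a ω t).pos with hp
  by_contra hne
  obtain hlt | hlt := lt_or_gt_of_ne hne
  · have hwalk := stackWalk_crossings_balance a p ω t
    have hprofile := hD.crossings_balance p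
    have hmono := monotone_arrowCount false ω (p + 1) (hle (p + 1))
    rw [hpos, ← hp] at hwalk
    grind
  · have hwalk := stackWalk_crossings_balance a (p - 1) ω t
    have hprofile := hD.crossings_balance (p - 1)
    have hmono := monotone_arrowCount true ω (p - 1) (hle (p - 1))
    rw [sub_add_cancel] at hwalk hprofile
    rw [hpos, ← hp] at hwalk
    grind

lemma stackWalk_dep_eq (hD : IsDepartureProfile a x ω D) {t : ℕ}
    (hle : ∀ y, (stackWalk a ω t).dep y ≤ D y)
    (hx : (stackWalk a ω t).pos = x) (hpos : (stackWalk a ω t).dep x = D x) :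
    (stackWalk a ω t).dep = D := by
  have hwalk := isDepartureProfile_stackWalk a ω t
  rw [hx] at hwalk
  have hside : ∀ b (n : ℕ), (stackWalk a ω t).dep (x - n * direction b) =
      D (x - n * direction b) := by
    intro b n
    induction n with
    | zero => simpa using hpos
    | succ n ih =>
      have hz : 0 < (x - (x - (n + 1 : ℕ) * direction b)) * direction b := by
        cases b <;> simp
      have hnext : x - (n + 1 : ℕ) * direction b + direction b = x - n * direction b := by
        push_cast; ring
      obtain ⟨hlast, hcount⟩ := hD b _ hz
      obtain ⟨-, hcount'⟩ := hwalk b _ hz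
      rw [hnext] at hcount hcount'
      refine (hle _).antisymm (not_lt.mp fun hlt ↦ ?_)
      have := arrowCount_lt_of_lastArrow hlt hlast
      rw [hcount, hcount', ih] at this
      exact this.false
  funext y
  obtain h | h := le_total x y
  · obtain ⟨n, rfl⟩ := Int.le.dest h
    simpa using hside false n
  · obtain ⟨n, hn⟩ := Int.le.dest h
    obtain rfl : y = x - n := by omega
    simpa using hside true n

end IsDepartureProfile

lemma sum_stackWalk_dep_eq {F : Finset ℤ} {D : ℤ → ℕ} (hF : ∀ y ∉ F, D y = 0) (a : ℤ)
    (ω : ArrowStacks) (t : ℕ) (hle : ∀ y, (stackWalk a ω t).dep y ≤ D y) :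
    ∑ y ∈ F, (stackWalk a ω t).dep y = t := by
  induction t with
  | zero => simp [stackWalk]
  | succ t ih =>
    have hmono : ∀ y, (stackWalk a ω t).dep y ≤ (stackWalk a ω (t + 1)).dep y := fun y ↦ by
      simp only [stackWalk_eq_flipWalk]
      exact monotone_dep_flipWalk a _ y t.le_succ
    have hpos := hle (stackWalk a ω t).pos
    simp only [stackWalk_succ, DepartureState.move, Function.update_self] at hpos ⊢
    have hmem : (stackWalk a ω t).pos ∈ F := by
      by_contra hc
      have := hF _ hc
      omega
    have := ih fun y ↦ (hmono y).trans (hle y)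
    rw [← Finset.add_sum_erase F _ hmem] at this
    rw [← Finset.add_sum_erase F _ hmem, Function.update_self,
      Finset.sum_congr rfl fun y hy ↦ Function.update_of_ne (Finset.ne_of_mem_erase hy) _ _]
    omega

/- Since every move is a departure, the walk exceeds the finitely many departures `D` eventually;
the time sought is the last one before it does. -/
lemma exists_dep_le_and_dep_pos_eq {F : Finset ℤ} {D : ℤ → ℕ} (hF : ∀ y ∉ F, D y = 0) (a : ℤ)
    (ω : ArrowStacks) : ∃ t, (∀ y, (stackWalk a ω t).dep y ≤ D y) ∧
      (stackWalk a ω t).dep (stackWalk a ω t).pos = D (stackWalk a ω t).pos := by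
  by_contra! hne
  have hle : ∀ t y, (stackWalk a ω t).dep y ≤ D y := by
    intro t
    induction t with
    | zero => exact fun y ↦ Nat.zero_le _
    | succ t ih =>
      intro y
      have hlt := lt_of_le_of_ne (ih _) (hne t ih)
      by_cases hy : y = (stackWalk a ω t).pos
      · simpa [stackWalk_succ, DepartureState.move, hy] using hlt
      · simpa [stackWalk_succ, DepartureState.move, hy] using ih y
  have hsum := sum_stackWalk_dep_eq hF a ω _ (hle (∑ y ∈ F, D y + 1))
  have := Finset.sum_le_sum fun y (_ : y ∈ F) ↦ hle (∑ y ∈ F, D y + 1) y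
  omega

lemma IsDepartureProfile.exists_stackWalk_eq {a x : ℤ} {ω : ArrowStacks} {D : ℤ → ℕ}
    (hD : IsDepartureProfile a x ω D) {F : Finset ℤ} (hF : ∀ y ∉ F, D y = 0) :
    ∃ t, stackWalk a ω t = ⟨x, D⟩ := by
  obtain ⟨t, hle, hpos⟩ := exists_dep_le_and_dep_pos_eq hF a ω
  have hx := hD.stackWalk_pos_eq hle hpos
  have hdep := hD.stackWalk_dep_eq hle hx (hx ▸ hpos)
  exact ⟨t, congrArg₂ DepartureState.mk hx hdep⟩

end Profiles

section Chains

/-- The Ray–Knight chain of the crossings of successive edges away from the walk. There are `k`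
crossings out of the site next to `y` in the direction opposite to `b`, and the departures from the
`N` sites beginning with `y` are prescribed to lie in `A` and to satisfy the chain relations with
immigration `I`. If `dead`, there are no crossings beyond the last of these sites. -/
def CrossingChain (b : Bool) (ω : ArrowStacks) (dead : Bool) (A : ℤ → Finset ℕ) (I : ℤ → ℕ) :
    ℕ → ℤ → ℕ → Prop
  | 0, _, k => dead = true → k = 0
  | N + 1, y, k => ∃ d ∈ A y, arrowCount b ω y d = k + I y ∧ LastArrow b ω y d ∧
      CrossingChain b ω dead A I N (y - direction b) (arrowCount (!b) ω y d)

variable {b : Bool} {ω : ArrowStacks} {A : ℤ → Finset ℕ} {I : ℤ → ℕ}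

lemma CrossingChain.of_chainStep {D : ℤ → ℕ} {x : ℤ} {N : ℕ}
    (h : ∀ z, 0 < (x - z) * direction b → (x - z) * direction b ≤ N →
      D z ∈ A z ∧ ChainStep b ω I D z) :
    CrossingChain b ω false A I N (x - direction b) (arrowCount (!b) ω x (D x)) := by
  induction N generalizing x with
  | zero => simp [CrossingChain]
  | succ N ih =>
    obtain ⟨hmem, hlast, hcount⟩ := h (x - direction b) (by cases b <;> simp)
      (by cases b <;> simp)
    rw [sub_add_cancel] at hcount
    refine ⟨_, hmem, hcount, hlast, ih fun z hz hzN ↦ h z ?_ ?_⟩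
    all_goals cases b <;> simp at * <;> omega

lemma crossingChain_stackWalk (b : Bool) (a : ℤ) (ω : ArrowStacks) (t : ℕ) {A : ℤ → Finset ℕ}
    {N : ℕ} (hA : ∀ z, 0 < ((stackWalk a ω t).pos - z) * direction b →
      ((stackWalk a ω t).pos - z) * direction b ≤ N → (stackWalk a ω t).dep z ∈ A z) :
    CrossingChain b ω false A (immigration b a) N ((stackWalk a ω t).pos - direction b)
      (arrowCount (!b) ω (stackWalk a ω t).pos ((stackWalk a ω t).dep (stackWalk a ω t).pos)) :=
  .of_chainStep fun z hz hzN ↦ ⟨hA z hz hzN, isDepartureProfile_stackWalk a ω t b z hz⟩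

lemma CrossingChain.exists_departures {dead : Bool} {x : ℤ} {p N : ℕ}
    (h : CrossingChain b ω dead A I N (x - direction b) (arrowCount (!b) ω x p)) :
    ∃ D : ℤ → ℕ, D x = p ∧ ∀ z, 0 < (x - z) * direction b →
      ((x - z) * direction b ≤ N → D z ∈ A z ∧ ChainStep b ω I D z) ∧
      (N < (x - z) * direction b → D z = 0 ∧ (dead = true → I z = 0 → ChainStep b ω I D z)) := by
  induction N generalizing x p with
  | zero =>
    refine ⟨Function.update 0 x p, Function.update_self .., fun z hz ↦ ?_⟩
    have hne : z ≠ x := by rintro rfl; simp at hz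
    refine ⟨fun hz' ↦ by omega, fun _ ↦ ⟨by simp [hne], fun hdead hI ↦
      ⟨.inl (by simp [hne]), ?_⟩⟩⟩
    rw [hI, Function.update_of_ne hne]
    by_cases hx : z + direction b = x
    · simp [hx, show arrowCount (!b) ω x p = 0 from h hdead]
    · simp [hx]
  | succ N ih =>
    obtain ⟨d, hmem, hcount, hlast, hchain⟩ := h
    obtain ⟨D, rfl, hD⟩ := ih hchain
    refine ⟨Function.update D x p, Function.update_self .., fun z hz ↦ ?_⟩
    have hne : z ≠ x := by rintro rfl; simp at hz
    rw [ChainStep, Function.update_of_ne hne]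
    obtain rfl | hfar := eq_or_ne z (x - direction b)
    · rw [sub_add_cancel, Function.update_self]
      refine ⟨fun _ ↦ ⟨hmem, hlast, hcount⟩, ?_⟩
      cases b <;> simp
    · rw [Function.update_of_ne fun hx ↦ hfar (eq_sub_of_add_eq hx)]
      have hz' : 0 < (x - direction b - z) * direction b := by
        cases b <;> simp only [direction_true, direction_false] at * <;> omega
      refine ⟨fun hle ↦ (hD z hz').1 ?_, fun hlt ↦ (hD z hz').2 ?_⟩
      all_goals cases b <;> simp at * <;> omega

lemma exists_stackWalk_of_crossingChain {a x : ℤ} {p : ℕ} {A : Bool → ℤ → Finset ℕ}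
    {N : Bool → ℕ}
    (h : ∀ b, CrossingChain b ω true (A b) (immigration b a) (N b) (x - direction b)
      (arrowCount (!b) ω x p))
    (ha : ∀ b, (x - a) * direction b ≤ N b) :
    ∃ t, (stackWalk a ω t).pos = x ∧ (stackWalk a ω t).dep x = p ∧
      ∀ b z, 0 < (x - z) * direction b →
        ((x - z) * direction b ≤ N b → (stackWalk a ω t).dep z ∈ A b z) ∧
        (N b < (x - z) * direction b → (stackWalk a ω t).dep z = 0) := by
  have himm : ∀ b z, N b < (x - z) * direction b → immigration b a z = 0 := fun b z hz ↦ by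
    have := ha b
    cases b <;> simp [immigration] at * <;> omega
  choose D hDx hD using fun b ↦ (h b).exists_departures
  let glued : ℤ → ℕ := fun z ↦ D (decide (z ≤ x)) z
  have hside : ∀ b z, 0 ≤ (x - z) * direction b → glued z = D b z := by
    intro b z hz
    obtain rfl | hne := eq_or_ne z x
    · simp only [glued, hDx]
    · have : decide (z ≤ x) = b := by cases b <;> simp at * <;> omega
      simp only [glued, this]
  have hprofile : IsDepartureProfile a x ω glued := fun b z hz ↦ by
    rw [ChainStep, hside b z hz.le,
      hside b (z + direction b) (by cases b <;> simp at * <;> omega)]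
    obtain hle | hlt := le_or_gt ((x - z) * direction b) (N b)
    · exact ((hD b z hz).1 hle).2
    · exact ((hD b z hz).2 hlt).2 rfl (himm b z hlt)
  obtain ⟨t, ht⟩ := hprofile.exists_stackWalk_eq (F := Finset.Icc (x - N true) (x + N false))
    fun z hz ↦ by
      rw [Finset.mem_Icc, not_and_or, not_le, not_le] at hz
      obtain hz | hz := hz
      · have : (N true : ℤ) < (x - z) * direction true := by simp only [direction_true]; omega
        rw [hside true z (by omega), ((hD true z (by omega)).2 this).1]
      · have : (N false : ℤ) < (x - z) * direction false := by simp only [direction_false]; omega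
        rw [hside false z (by omega), ((hD false z (by omega)).2 this).1]
  refine ⟨t, by rw [ht], by rw [ht, ← hDx true]; exact hside true x (by simp), fun b z hz ↦ ?_⟩
  rw [ht, show DepartureState.dep ⟨x, glued⟩ z = D b z from hside b z hz.le]
  exact ⟨fun hle ↦ ((hD b z hz).1 hle).1, fun hlt ↦ ((hD b z hz).2 hlt).1⟩

end Chains

section ChainProbabilities

/-- The probability that `n` fair coin flips show `k` heads. -/
noncomputable def binomialWeight (n k : ℕ) : ℝ := n.choose k / 2 ^ n

/-- The probability that the `K`-th head of a sequence of fair coin flips occurs at flip number `d`,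
flips being counted from `1`. For `K = 0` the value is `1` at `d = 0`. -/
noncomputable def negBinomialWeight : ℕ → ℕ → ℝ
  | K, 0 => if K = 0 then 1 else 0
  | 0, _ + 1 => 0
  | K + 1, d + 1 => binomialWeight d K / 2

/-- The probability that the crossing chain started from `k` crossings survives the sites listed,
each given by the departures allowed and by the immigration there. -/
noncomputable def chainWeight (dead : Bool) : List (Finset ℕ × ℕ) → ℕ → ℝ
  | [], k => if dead = true ∧ k ≠ 0 then 0 else 1
  | c :: l, k => ∑ d ∈ c.1, negBinomialWeight (k + c.2) d * chainWeight dead l (d - (k + c.2))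

/-- The list of the departures allowed and the immigration at `N` successive sites from `y`. -/
def chainSites (b : Bool) (A : ℤ → Finset ℕ) (I : ℤ → ℕ) : ℕ → ℤ → List (Finset ℕ × ℕ)
  | 0, _ => []
  | N + 1, y => (A y, I y) :: chainSites b A I N (y - direction b)

lemma binomialWeight_nonneg (n k : ℕ) : 0 ≤ binomialWeight n k := by
  unfold binomialWeight; positivity

lemma binomialWeight_succ_zero (n : ℕ) :
    binomialWeight (n + 1) 0 = binomialWeight n 0 / 2 := by
  simp only [binomialWeight, Nat.choose_zero_right]
  field_simp
  ring

lemma binomialWeight_succ_succ (n k : ℕ) :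
    binomialWeight (n + 1) (k + 1) = binomialWeight n k / 2 + binomialWeight n (k + 1) / 2 := by
  simp only [binomialWeight, Nat.choose_succ_succ]
  push_cast
  field_simp
  ring

lemma negBinomialWeight_nonneg (K d : ℕ) : 0 ≤ negBinomialWeight K d := by
  match K, d with
  | K, 0 => simp only [negBinomialWeight]; positivity
  | 0, _ + 1 => exact le_rfl
  | K + 1, d + 1 => exact div_nonneg (binomialWeight_nonneg d K) zero_le_two

lemma chainWeight_nonneg (dead : Bool) (l : List (Finset ℕ × ℕ)) (k : ℕ) :
    0 ≤ chainWeight dead l k := by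
  induction l generalizing k with
  | nil => simp only [chainWeight]; positivity
  | cons c l ih =>
    exact Finset.sum_nonneg fun _ _ ↦ mul_nonneg (negBinomialWeight_nonneg _ _) (ih _)

/-- The probability of an event for stacks of independent fair arrows. -/
noncomputable abbrev stackProb (E : Set ArrowStacks) : ℝ := (coinFlips (ℤ × ℕ)).real E

lemma stackProb_inter {S T : Set (ℤ × ℕ)} (hST : Disjoint S T) {A B : Set ArrowStacks}
    (hA : MeasurableSet A) (hB : MeasurableSet B) (hAS : DependsOn (· ∈ A) S)
    (hBT : DependsOn (· ∈ B) T) : stackProb (A ∩ B) = stackProb A * stackProb B :=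
  coinFlips_real_inter_of_dependsOn hST hA hB hAS hBT

lemma arrowCount_congr (b : Bool) {ω ω' : ArrowStacks} {y : ℤ} {n : ℕ}
    (h : ∀ i < n, ω (y, i) = ω' (y, i)) : arrowCount b ω y n = arrowCount b ω' y n := by
  induction n with
  | zero => simp
  | succ n ih =>
    rw [arrowCount_succ, arrowCount_succ, ih fun i hi ↦ h i (by omega), h n (by omega)]

lemma dependsOn_arrowCount_eq (b : Bool) (y : ℤ) (n k : ℕ) :
    DependsOn (· ∈ {ω | arrowCount b ω y n = k}) ({y} ×ˢ Set.Iio n) :=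
  fun _ _ h ↦ congrArg (· = k) (arrowCount_congr b fun i hi ↦ h (y, i) ⟨rfl, hi⟩)

lemma dependsOn_arrow_eq (b : Bool) (p : ℤ × ℕ) :
    DependsOn (· ∈ {ω : ArrowStacks | ω p = b}) {p} :=
  fun _ _ h ↦ congrArg (· = b) (h p rfl)

lemma measurableSet_arrow_eq (b : Bool) (p : ℤ × ℕ) :
    MeasurableSet {ω : ArrowStacks | ω p = b} :=
  measurableSet_of_dependsOn_finite (Set.finite_singleton p) (dependsOn_arrow_eq b p)

lemma finite_column (y : ℤ) (n : ℕ) : (({y} : Set ℤ) ×ˢ Set.Iio n).Finite :=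
  (Set.finite_singleton y).prod (Set.finite_Iio n)

lemma measurableSet_arrowCount_eq (b : Bool) (y : ℤ) (n k : ℕ) :
    MeasurableSet {ω | arrowCount b ω y n = k} :=
  measurableSet_of_dependsOn_finite (finite_column y n) (dependsOn_arrowCount_eq b y n k)

lemma stackProb_arrow_eq (b : Bool) (p : ℤ × ℕ) : stackProb {ω | ω p = b} = 1 / 2 := by
  simpa [stackProb, measureReal_def] using
    congrArg ENNReal.toReal (coinFlips_cylinder {p} fun _ ↦ b)

lemma stackProb_arrowCount_inter_arrow (b c : Bool) (y : ℤ) (n k : ℕ) :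
    stackProb ({ω | arrowCount b ω y n = k} ∩ {ω | ω (y, n) = c}) =
      stackProb {ω | arrowCount b ω y n = k} / 2 := by
  have hdisj : Disjoint (({y} : Set ℤ) ×ˢ Set.Iio n) {(y, n)} := by simp
  rw [stackProb_inter hdisj (measurableSet_arrowCount_eq b y n k)
    (measurableSet_arrow_eq c _) (dependsOn_arrowCount_eq b y n k) (dependsOn_arrow_eq c _),
    stackProb_arrow_eq, mul_one_div]

lemma setOf_arrowCount_succ_eq (b : Bool) (y : ℤ) (n k : ℕ) :
    {ω | arrowCount b ω y (n + 1) = k} =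
      ({ω | arrowCount b ω y n + 1 = k} ∩ {ω | ω (y, n) = b}) ∪
        ({ω | arrowCount b ω y n = k} ∩ {ω | ω (y, n) = !b}) := by
  ext ω
  simp only [Set.mem_ofPred_eq, arrowCount_succ, Set.mem_union, Set.mem_inter_iff]
  cases b <;> cases h : ω (y, n) <;> simp

lemma stackProb_arrowCount_eq (b : Bool) (y : ℤ) (n k : ℕ) :
    stackProb {ω | arrowCount b ω y n = k} = binomialWeight n k := by
  induction n generalizing k with
  | zero => cases k <;> simp [binomialWeight]
  | succ n ih =>
    have hdisj (E F : Set ArrowStacks) :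
        Disjoint (E ∩ {ω | ω (y, n) = b}) (F ∩ {ω | ω (y, n) = !b}) := by
      refine Disjoint.mono Set.inter_subset_right Set.inter_subset_right ?_
      exact Set.disjoint_left.mpr fun ω h h' ↦ by simp_all
    rw [setOf_arrowCount_succ_eq]
    refine (measureReal_union (hdisj _ _)
      ((measurableSet_arrowCount_eq b y n k).inter (measurableSet_arrow_eq _ _))).trans ?_
    change stackProb _ + stackProb _ = _
    rw [stackProb_arrowCount_inter_arrow, ih]
    cases k with
    | zero => simp [binomialWeight_succ_zero]
    | succ k =>
      simp only [Nat.add_right_cancel_iff]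
      rw [stackProb_arrowCount_inter_arrow, ih, binomialWeight_succ_succ]

/-- The event that the departure number `d` from `y`, counted from `1`, is the `K`-th one in the
direction `b`. -/
def departureEvent (b : Bool) (y : ℤ) (d K : ℕ) : Set ArrowStacks :=
  {ω | arrowCount b ω y d = K ∧ LastArrow b ω y d}

lemma dependsOn_departureEvent (b : Bool) (y : ℤ) (d K : ℕ) :
    DependsOn (· ∈ departureEvent b y d K) ({y} ×ˢ Set.Iio d) := by
  intro ω ω' h
  refine congrArg₂ And (congrArg (· = K) <| arrowCount_congr b fun i hi ↦ h (y, i) ⟨rfl, hi⟩) ?_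
  obtain rfl | hd := d.eq_zero_or_pos
  · simp [LastArrow]
  · rw [LastArrow, LastArrow, h (y, d - 1) ⟨rfl, Nat.sub_lt hd one_pos⟩]

lemma measurableSet_departureEvent (b : Bool) (y : ℤ) (d K : ℕ) :
    MeasurableSet (departureEvent b y d K) :=
  measurableSet_of_dependsOn_finite (finite_column y d) (dependsOn_departureEvent b y d K)

lemma pairwise_disjoint_departureEvent (b : Bool) (y : ℤ) (K : ℕ) :
    Pairwise fun d d' ↦ Disjoint (departureEvent b y d K) (departureEvent b y d' K) := by
  intro d d' hne
  refine Set.disjoint_left.mpr fun ω ⟨hcount, hlast⟩ ⟨hcount', hlast'⟩ ↦ ?_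
  obtain hlt | hlt := lt_or_gt_of_ne hne
  · exact (arrowCount_lt_of_lastArrow hlt hlast').ne (hcount.trans hcount'.symm)
  · exact (arrowCount_lt_of_lastArrow hlt hlast).ne (hcount'.trans hcount.symm)

lemma stackProb_departureEvent (b : Bool) (y : ℤ) (d K : ℕ) :
    stackProb (departureEvent b y d K) = negBinomialWeight K d := by
  match K, d with
  | K, 0 =>
    by_cases hK : K = 0
    · simp [departureEvent, LastArrow, negBinomialWeight, hK]
    · simp [departureEvent, negBinomialWeight, hK, Ne.symm hK]
  | 0, d + 1 =>
    have hempty : departureEvent b y (d + 1) 0 = ∅ := by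
      refine Set.eq_empty_of_forall_notMem fun ω ⟨hcount, hlast⟩ ↦ ?_
      have := arrowCount_lt_of_lastArrow d.succ_pos hlast
      rw [hcount] at this
      exact Nat.not_lt_zero _ this
    simp [hempty, negBinomialWeight]
  | K + 1, d + 1 =>
    have hinter : departureEvent b y (d + 1) (K + 1) =
        {ω | arrowCount b ω y d = K} ∩ {ω | ω (y, d) = b} := by
      ext ω
      simp only [departureEvent, LastArrow, Set.mem_ofPred_eq, Set.mem_inter_iff, arrowCount_succ]
      grind
    rw [hinter, stackProb_arrowCount_inter_arrow, stackProb_arrowCount_eq, negBinomialWeight]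

lemma stackProb_biUnion_inter {y : ℤ} (s : Finset ℕ) {E F : ℕ → Set ArrowStacks}
    (hE : ∀ n, MeasurableSet (E n)) (hEy : ∀ n, DependsOn (· ∈ E n) {p | p.1 = y})
    (hdisj : Pairwise fun m n ↦ Disjoint (E m) (E n))
    (hF : ∀ n, MeasurableSet (F n)) (hFy : ∀ n, DependsOn (· ∈ F n) {p | p.1 ≠ y}) :
    stackProb (⋃ n ∈ s, E n ∩ F n) = ∑ n ∈ s, stackProb (E n) * stackProb (F n) := by
  rw [stackProb, measureReal_biUnion_finset
    (fun m _ n _ hmn ↦ (hdisj hmn).mono Set.inter_subset_left Set.inter_subset_left)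
    fun n _ ↦ (hE n).inter (hF n)]
  exact Finset.sum_congr rfl fun n _ ↦ coinFlips_real_inter_of_dependsOn
    disjoint_compl_right (hE n) (hF n) (hEy n) (hFy n)

/-- The arrows at `y` and at the sites behind it, as seen when moving in the direction `b`. -/
def halfLine (b : Bool) (y : ℤ) : Set (ℤ × ℕ) := {p | 0 ≤ (y - p.1) * direction b}

lemma halfLine_sub_subset (b : Bool) (y : ℤ) : halfLine b (y - direction b) ⊆ halfLine b y :=
  fun p hp ↦ by cases b <;> simp [halfLine] at * <;> omega

lemma halfLine_sub_subset_ne (b : Bool) (y : ℤ) : halfLine b (y - direction b) ⊆ {p | p.1 ≠ y} :=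
  fun p hp ↦ by cases b <;> simp [halfLine] at * <;> omega

lemma column_subset_halfLine (b : Bool) (y : ℤ) (n : ℕ) :
    {y} ×ˢ Set.Iio n ⊆ halfLine b y := by
  rintro ⟨z, i⟩ ⟨rfl, -⟩
  simp [halfLine]

lemma column_subset_eq (y : ℤ) (n : ℕ) : {y} ×ˢ Set.Iio n ⊆ {p : ℤ × ℕ | p.1 = y} :=
  fun _ hp ↦ hp.1

variable (b dead : Bool) (A : ℤ → Finset ℕ) (I : ℤ → ℕ) (N : ℕ)

lemma setOf_crossingChain_succ (y : ℤ) (k : ℕ) :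
    {ω | CrossingChain b ω dead A I (N + 1) y k} = ⋃ d ∈ A y, departureEvent b y d (k + I y) ∩
      {ω | CrossingChain b ω dead A I N (y - direction b) (d - (k + I y))} := by
  ext ω
  simp only [Set.mem_ofPred_eq, CrossingChain, Set.mem_iUnion, Set.mem_inter_iff, departureEvent,
    exists_prop, and_assoc]
  refine exists_congr fun d ↦ and_congr_right fun _ ↦ and_congr_right fun hcount ↦ ?_
  have := arrowCount_add_arrowCount_not b ω y d
  rw [show d - (k + I y) = arrowCount (!b) ω y d by omega]

lemma measurableSet_crossingChain (y : ℤ) (k : ℕ) :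
    MeasurableSet {ω | CrossingChain b ω dead A I N y k} := by
  induction N generalizing y k with
  | zero => exact MeasurableSet.const _
  | succ N ih =>
    rw [setOf_crossingChain_succ]
    exact Finset.measurableSet_biUnion _ fun d _ ↦ (measurableSet_departureEvent ..).inter (ih _ _)

lemma dependsOn_crossingChain (y : ℤ) (k : ℕ) :
    DependsOn (· ∈ {ω | CrossingChain b ω dead A I N y k}) (halfLine b y) := by
  induction N generalizing y k with
  | zero => exact fun _ _ _ ↦ rfl
  | succ N ih =>
    rw [setOf_crossingChain_succ]
    intro ω ω' h
    simp only [Set.mem_iUnion]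
    congr! 4 with d _
    exact Eq.to_iff <| dependsOn_mem_inter
      ((dependsOn_departureEvent b y d _).mono (column_subset_halfLine b y d))
      ((ih _ _).mono (halfLine_sub_subset b y)) h

lemma stackProb_crossingChain (y : ℤ) (k : ℕ) :
    stackProb {ω | CrossingChain b ω dead A I N y k} =
      chainWeight dead (chainSites b A I N y) k := by
  induction N generalizing y k with
  | zero =>
    by_cases h : dead = true <;> by_cases h' : k = 0 <;>
      simp [CrossingChain, chainSites, chainWeight, h, h']
  | succ N ih =>
    rw [setOf_crossingChain_succ, chainSites, chainWeight, stackProb_biUnion_inter _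
      (fun d ↦ measurableSet_departureEvent b y d _)
      (fun d ↦ (dependsOn_departureEvent b y d _).mono (column_subset_eq y d))
      (pairwise_disjoint_departureEvent b y _)
      (fun d ↦ measurableSet_crossingChain b dead A I N _ _)
      fun d ↦ (dependsOn_crossingChain b dead A I N _ _).mono (halfLine_sub_subset_ne b y)]
    simp only [stackProb_departureEvent, ih]

/-- The event that the crossings initiated by the first `p` departures from `x` form a crossing
chain on the side of `x` that is behind it with respect to `b`. -/
def rootedChain (x : ℤ) (p : ℕ) : Set ArrowStacks :=
  {ω | CrossingChain b ω dead A I N (x - direction b) (arrowCount (!b) ω x p)}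

lemma rootedChain_eq_biUnion (x : ℤ) (p : ℕ) :
    rootedChain b dead A I N x p = ⋃ i ∈ Finset.range (p + 1), {ω | arrowCount (!b) ω x p = i} ∩
      {ω | CrossingChain b ω dead A I N (x - direction b) i} := by
  ext ω
  simpa [rootedChain] using fun _ ↦ arrowCount_le (!b) ω x p

lemma dependsOn_rootedChain (x : ℤ) (p : ℕ) :
    DependsOn (· ∈ rootedChain b dead A I N x p) (halfLine b x) := by
  intro ω ω' h
  rw [rootedChain_eq_biUnion]
  simp only [Set.mem_iUnion]
  congr! 4 with i _
  exact Eq.to_iff <| dependsOn_mem_inter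
    ((dependsOn_arrowCount_eq (!b) x p i).mono (column_subset_halfLine b x p))
    ((dependsOn_crossingChain b dead A I N _ i).mono (halfLine_sub_subset b x)) h

lemma measurableSet_rootedChain (x : ℤ) (p : ℕ) :
    MeasurableSet (rootedChain b dead A I N x p) := by
  rw [rootedChain_eq_biUnion]
  exact Finset.measurableSet_biUnion _ fun d _ ↦
    (measurableSet_arrowCount_eq ..).inter (measurableSet_crossingChain ..)

lemma rootedChain_true_inter_false (dead : Bool → Bool) (A : Bool → ℤ → Finset ℕ)
    (I : Bool → ℤ → ℕ) (N : Bool → ℕ) (x : ℤ) (p : ℕ) :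
    rootedChain true (dead true) (A true) (I true) (N true) x p ∩
        rootedChain false (dead false) (A false) (I false) (N false) x p =
      ⋃ i ∈ Finset.range (p + 1), {ω | arrowCount false ω x p = i} ∩
        ({ω | CrossingChain true ω (dead true) (A true) (I true) (N true) (x - 1) i} ∩
          {ω | CrossingChain false ω (dead false) (A false) (I false) (N false) (x + 1)
            (p - i)}) := by
  ext ω
  have hadd := arrowCount_add_arrowCount_not false ω x p
  have hsub : p - arrowCount false ω x p = arrowCount true ω x p := by
    rw [Bool.not_false] at hadd; omega
  simpa [rootedChain, hsub] using fun _ _ ↦ arrowCount_le false ω x p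

/- Given the numbers of arrows to either side among the first `p` arrows at `x`, the left and the
right chain use disjoint sets of arrows. -/
lemma stackProb_rootedChain_inter (dead : Bool → Bool) (A : Bool → ℤ → Finset ℕ)
    (I : Bool → ℤ → ℕ) (N : Bool → ℕ) (x : ℤ) (p : ℕ) :
    stackProb (rootedChain true (dead true) (A true) (I true) (N true) x p ∩
        rootedChain false (dead false) (A false) (I false) (N false) x p) =
      ∑ i ∈ Finset.range (p + 1), binomialWeight p i *
        (chainWeight (dead true) (chainSites true (A true) (I true) (N true) (x - 1)) i *
        chainWeight (dead false) (chainSites false (A false) (I false) (N false) (x + 1))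
          (p - i)) := by
  have hleft := halfLine_sub_subset_ne true x
  have hright := halfLine_sub_subset_ne false x
  simp only [direction_true, direction_false, sub_neg_eq_add] at hleft hright
  have hdisj : Disjoint (halfLine true (x - 1)) (halfLine false (x + 1)) :=
    Set.disjoint_left.mpr fun q hq hq' ↦ by simp [halfLine] at hq hq'; omega
  rw [rootedChain_true_inter_false, stackProb_biUnion_inter _
    (fun i ↦ measurableSet_arrowCount_eq false x p i)
    (fun i ↦ (dependsOn_arrowCount_eq false x p i).mono (column_subset_eq x p))
    (fun i j hij ↦ Set.disjoint_left.mpr fun ω hi hj ↦ hij (hi.symm.trans hj))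
    (fun i ↦ (measurableSet_crossingChain ..).inter (measurableSet_crossingChain ..))
    fun i ↦ dependsOn_mem_inter ((dependsOn_crossingChain ..).mono hleft)
      ((dependsOn_crossingChain ..).mono hright)]
  refine Finset.sum_congr rfl fun i _ ↦ ?_
  rw [stackProb_arrowCount_eq, stackProb_inter hdisj
    (measurableSet_crossingChain ..) (measurableSet_crossingChain ..)
    (dependsOn_crossingChain ..) (dependsOn_crossingChain ..), stackProb_crossingChain,
    stackProb_crossingChain]

lemma stackProb_rootedChain (x : ℤ) (p : ℕ) :
    stackProb (rootedChain b dead A I N x p) = ∑ i ∈ Finset.range (p + 1),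
      binomialWeight p i * chainWeight dead (chainSites b A I N (x - direction b)) i := by
  rw [rootedChain_eq_biUnion, stackProb_biUnion_inter _
    (fun i ↦ measurableSet_arrowCount_eq _ x p i)
    (fun i ↦ (dependsOn_arrowCount_eq _ x p i).mono (column_subset_eq x p))
    (fun i j hij ↦ Set.disjoint_left.mpr fun ω hi hj ↦ hij (hi.symm.trans hj))
    (fun i ↦ measurableSet_crossingChain b dead A I N _ i)
    fun i ↦ (dependsOn_crossingChain b dead A I N _ i).mono (halfLine_sub_subset_ne b x)]
  simp only [stackProb_arrowCount_eq, stackProb_crossingChain]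

end ChainProbabilities

section Disjointness

/-- The constraint on departures that allows at most `cap z` of them from each site `z`. -/
def departuresLE (cap : ℤ → ℕ) (z : ℤ) : Finset ℕ := Finset.range (cap z + 1)

/- If both chains existed, the departures counted from the left would dominate those counted from
the right at `e`, hence strictly at `x`, because the crossings prescribed differ by one on every
edge in between. -/
lemma disjoint_rootedChain (a : ℤ) {cap : ℤ → ℕ} {N : ℕ} {e x : ℤ} (hex : e < x) (hN : x - e ≤ N)
    {r p : ℕ} (hr : cap e ≤ r) (hp : cap x ≤ p) :
    Disjoint (rootedChain false false (departuresLE cap) (immigration false a) N e r)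
      (rootedChain true false (departuresLE cap) (immigration true a) N x p) := by
  rw [Set.disjoint_left]
  intro ω hright hleft
  obtain ⟨D, hDe, hD⟩ := CrossingChain.exists_departures hright
  obtain ⟨D', hDx, hD'⟩ := CrossingChain.exists_departures hleft
  have hDle : ∀ z, e < z → z ≤ x → D z ≤ cap z ∧ ChainStep false ω (immigration false a) D z := by
    intro z hez hzx
    simpa [departuresLE, Nat.lt_succ_iff] using
      (hD z (by simp; omega)).1 (by simp only [direction_false]; omega)
  have hDle' : ∀ z, e ≤ z → z < x → D' z ≤ cap z ∧ ChainStep true ω (immigration true a) D' z := by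
    intro z hez hzx
    simpa [departuresLE, Nat.lt_succ_iff] using
      (hD' z (by simp; omega)).1 (by simp only [direction_true]; omega)
  have hstep : ∀ z, e ≤ z → z < x → D' z ≤ D z → D' (z + 1) < D (z + 1) := by
    intro z hez hzx hle
    by_contra! hge
    have hflow := (hDle (z + 1) (by omega) (by omega)).2.2
    have hflow' := (hDle' z hez hzx).2.2
    have hmono := monotone_arrowCount true ω z hle
    have hmono' := monotone_arrowCount false ω (z + 1) hge
    simp only [direction_false, direction_true, add_neg_cancel_right, Bool.not_false, Bool.not_true,
      immigration] at hflow hflow'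
    grind
  have hlt : ∀ z, e ≤ z → z < x → D' (z + 1) < D (z + 1) := by
    intro z hez
    induction z, hez using Int.leInduction with
    | base =>
      intro hex
      exact hstep e le_rfl hex (hDe ▸ (hDle' e le_rfl hex).1.trans hr)
    | succ z hez ih => exact fun hzx ↦ hstep _ (by omega) hzx (ih (by omega)).le
  have := hlt (x - 1) (by omega) (by omega)
  rw [sub_add_cancel] at this
  have := (hDle x hex le_rfl).1
  omega

/- Indices in the same residue class modulo `j + 1` are more than `j` apart, and there are `j + 1`
classes. -/
lemma sum_measureReal_le_of_disjoint {Ω : Type*} [MeasurableSpace Ω] (μ : Measure Ω)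
    [IsProbabilityMeasure μ] {E : ℤ → Set Ω} (hE : ∀ x, MeasurableSet (E x)) (X : Finset ℤ)
    (j : ℕ) (hdisj : ∀ x ∈ X, ∀ x' ∈ X, x + j < x' → Disjoint (E x) (E x')) :
    ∑ x ∈ X, μ.real (E x) ≤ j + 1 := by
  have hfar : ∀ x ∈ X, ∀ x' ∈ X, (x : ZMod (j + 1)) = x' → x < x' → Disjoint (E x) (E x') := by
    intro x hx x' hx' heq hlt
    have hdvd := (ZMod.intCast_eq_intCast_iff_dvd_sub x x' (j + 1)).mp heq
    have := Int.le_of_dvd (by omega) hdvd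
    push_cast at this
    exact hdisj x hx x' hx' (by omega)
  rw [← Finset.sum_fiberwise X (fun x ↦ (x : ZMod (j + 1)))]
  calc _ ≤ ∑ _c : ZMod (j + 1), (1 : ℝ) := Finset.sum_le_sum fun c _ ↦ by
        rw [← measureReal_biUnion_finset (fun x hx x' hx' hne ↦ ?_) fun x _ ↦ hE x]
        · exact measureReal_le_one
        · simp only [Finset.coe_filter, Set.mem_ofPred_eq] at hx hx'
          have heq := hx.2.trans hx'.2.symm
          obtain h | h := lt_or_gt_of_ne hne
          · exact hfar x hx.1 x' hx'.1 heq h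
          · exact (hfar x' hx'.1 x hx.1 heq.symm h).symm
    _ = j + 1 := by simp [ZMod.card]

lemma sum_stackProb_rootedChain_mul_le (a : ℤ) {cap : ℤ → ℕ} {N j : ℕ} (hj : 1 ≤ j)
    {X : Finset ℤ} (hX : ∀ x ∈ X, ∀ x' ∈ X, x' - x ≤ N) {p r : ℤ → ℕ} (hp : ∀ x, cap x ≤ p x)
    (hr : ∀ x, cap x ≤ r x) :
    ∑ x ∈ X, stackProb (rootedChain true false (departuresLE cap) (immigration true a) N x (p x)) *
      stackProb (rootedChain false false (departuresLE cap) (immigration false a) N (x + j)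
        (r (x + j))) ≤ j + 1 := by
  have hhalf : ∀ x : ℤ, Disjoint (halfLine true x) (halfLine false (x + j)) := fun x ↦
    Set.disjoint_left.mpr fun p h h' ↦ by
      simp only [halfLine, direction_true, direction_false, Set.mem_ofPred_eq] at h h'
      omega
  simp only [← stackProb_inter (hhalf _) (measurableSet_rootedChain ..)
    (measurableSet_rootedChain ..) (dependsOn_rootedChain ..) (dependsOn_rootedChain ..)]
  refine sum_measureReal_le_of_disjoint _
    (fun x ↦ (measurableSet_rootedChain ..).inter (measurableSet_rootedChain ..)) X j
    fun x hx x' hx' hlt ↦ (disjoint_rootedChain a hlt ?_ (hr _) (hp _)).mono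
      Set.inter_subset_right Set.inter_subset_left
  have := hX x hx x' hx'
  omega

end Disjointness

section BinomialBounds

lemma centralBinom_sq_mul_le (n : ℕ) : n.centralBinom ^ 2 * (2 * n + 1) ≤ 16 ^ n := by
  induction n with
  | zero => simp
  | succ n ih =>
    have hrec := Nat.succ_mul_centralBinom_succ n
    have hodd : (2 * n + 1) * (2 * n + 3) ≤ 4 * (n + 1) ^ 2 := by nlinarith
    refine Nat.le_of_mul_le_mul_left (c := (n + 1) ^ 2) ?_ (by positivity)
    calc (n + 1) ^ 2 * ((n + 1).centralBinom ^ 2 * (2 * (n + 1) + 1))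
      _ = ((n + 1) * (n + 1).centralBinom) ^ 2 * (2 * n + 3) := by ring
      _ = 4 * ((2 * n + 1) * (2 * n + 3)) * (n.centralBinom ^ 2 * (2 * n + 1)) := by
        rw [hrec]; ring
      _ ≤ 4 * (4 * (n + 1) ^ 2) * 16 ^ n := by gcongr
      _ = (n + 1) ^ 2 * 16 ^ (n + 1) := by ring

lemma binomialWeight_two_mul_le (n k : ℕ) :
    binomialWeight (2 * n) k ≤ n.centralBinom / 4 ^ n := by
  rw [binomialWeight, pow_mul]
  norm_num only
  gcongr
  exact Nat.choose_le_centralBinom k n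

lemma binomialWeight_two_mul_add_one_le (n k : ℕ) :
    binomialWeight (2 * n + 1) k ≤ n.centralBinom / 4 ^ n := by
  have hzero := binomialWeight_two_mul_le n 0
  cases k with
  | zero =>
    rw [binomialWeight_succ_zero]
    linarith [binomialWeight_nonneg (2 * n) 0]
  | succ k =>
    rw [binomialWeight_succ_succ]
    linarith [binomialWeight_two_mul_le n k, binomialWeight_two_mul_le n (k + 1)]

lemma mul_binomialWeight_sq_le_one (d k : ℕ) : d * binomialWeight d k ^ 2 ≤ 1 := by
  obtain ⟨n, hn, hle⟩ : ∃ n : ℕ, d ≤ 2 * n + 1 ∧ binomialWeight d k ≤ n.centralBinom / 4 ^ n := by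
    obtain ⟨n, rfl | rfl⟩ := d.even_or_odd'
    exacts [⟨n, by omega, binomialWeight_two_mul_le n k⟩,
      ⟨n, le_rfl, binomialWeight_two_mul_add_one_le n k⟩]
  have hcentral : (n.centralBinom : ℝ) ^ 2 * (2 * n + 1) ≤ 16 ^ n := by
    exact_mod_cast centralBinom_sq_mul_le n
  calc d * binomialWeight d k ^ 2
    _ ≤ (2 * n + 1) * (n.centralBinom / 4 ^ n) ^ 2 := by
      have := binomialWeight_nonneg d k
      gcongr
      exact_mod_cast hn
    _ = n.centralBinom ^ 2 * (2 * n + 1) / 16 ^ n := by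
      rw [div_pow, ← pow_mul, mul_comm n 2, pow_mul]
      norm_num only
      ring
    _ ≤ 1 := div_le_one_of_le₀ hcentral (by positivity)

lemma sum_binomialWeight (n : ℕ) : ∑ k ∈ Finset.range (n + 1), binomialWeight n k = 1 := by
  simp only [binomialWeight, ← Finset.sum_div]
  rw [div_eq_one_iff_eq (by positivity)]
  exact_mod_cast Nat.sum_range_choose n

lemma binomialWeight_of_lt {n k : ℕ} (h : n < k) : binomialWeight n k = 0 := by
  simp [binomialWeight, Nat.choose_eq_zero_of_lt h]

lemma binomialWeight_le_one (n k : ℕ) : binomialWeight n k ≤ 1 := by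
  obtain h | h := le_or_gt k n
  · rw [← sum_binomialWeight n]
    exact Finset.single_le_sum (f := binomialWeight n) (fun _ _ ↦ binomialWeight_nonneg _ _)
      (Finset.mem_range_succ_iff.mpr h)
  · simp [binomialWeight_of_lt h]

lemma negBinomialWeight_le_one (K d : ℕ) : negBinomialWeight K d ≤ 1 := by
  match K, d with
  | K, 0 => simp only [negBinomialWeight]; split_ifs <;> norm_num
  | 0, _ + 1 => simp [negBinomialWeight]
  | K + 1, d + 1 =>
    simp only [negBinomialWeight]
    linarith [binomialWeight_le_one d K]

lemma mul_negBinomialWeight_sq_le {n : ℕ} (hn : 1 ≤ n) (K : ℕ) :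
    n * negBinomialWeight K n ^ 2 ≤ 1 / 2 := by
  obtain ⟨d, rfl⟩ := Nat.exists_eq_add_of_le' hn
  cases K with
  | zero => simp [negBinomialWeight]
  | succ K =>
    simp only [negBinomialWeight]
    have hsq := mul_binomialWeight_sq_le_one d K
    have hsq' := pow_le_one₀ (n := 2) (binomialWeight_nonneg d K) (binomialWeight_le_one d K)
    push_cast
    linarith

lemma negBinomialWeight_of_lt {K d : ℕ} (h : d < K) : negBinomialWeight K d = 0 := by
  match K, d with
  | K + 1, 0 => simp [negBinomialWeight]
  | K + 1, d + 1 => simp [negBinomialWeight, binomialWeight_of_lt (by omega : d < K)]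

lemma sub_mul_choose_le_two_pow (n u : ℕ) : (n / 2 + 1 - u) * n.choose u ≤ 2 ^ n := by
  have hmono : ∀ v, u ≤ v → v ≤ n / 2 → n.choose u ≤ n.choose v := by
    intro v huv
    induction v, huv using Nat.le_induction with
    | base => exact fun _ ↦ le_rfl
    | succ v _ ih =>
      exact fun h ↦ (ih (by omega)).trans (Nat.choose_le_succ_of_lt_half_left (by omega))
  calc (n / 2 + 1 - u) * n.choose u
    _ = ∑ _v ∈ Finset.Ico u (n / 2 + 1), n.choose u := by simp
    _ ≤ ∑ v ∈ Finset.Ico u (n / 2 + 1), n.choose v := Finset.sum_le_sum fun v hv ↦ by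
      rw [Finset.mem_Ico] at hv
      exact hmono v hv.1 (by omega)
    _ ≤ ∑ v ∈ Finset.range (n + 1), n.choose v := Finset.sum_le_sum_of_subset fun v hv ↦ by
      simp only [Finset.mem_Ico, Finset.mem_range] at hv ⊢
      omega
    _ = 2 ^ n := Nat.sum_range_choose n

lemma binomialWeight_le_div_of_four_mul_lt {n u : ℕ} (hu : 4 * u < n + 1) :
    binomialWeight n u ≤ 4 / (n + 1) := by
  have hle : (n + 1) * n.choose u ≤ 4 * 2 ^ n := by
    calc (n + 1) * n.choose u ≤ 4 * (n / 2 + 1 - u) * n.choose u := by gcongr; omega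
      _ ≤ 4 * 2 ^ n := by
        rw [mul_assoc]
        exact Nat.mul_le_mul_left 4 (sub_mul_choose_le_two_pow n u)
  have hle' : ((n : ℝ) + 1) * n.choose u ≤ 4 * 2 ^ n := by exact_mod_cast hle
  rw [binomialWeight, div_le_div_iff₀ (by positivity) (by positivity)]
  linarith

lemma negBinomialWeight_le_div_of_four_mul_lt {K d : ℕ} (hd : 4 * (d - K) < d) :
    negBinomialWeight K d ≤ 2 / d := by
  match K, d with
  | 0, d + 1 => simp only [negBinomialWeight]; positivity
  | K + 1, d + 1 =>
    rw [negBinomialWeight]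
    obtain hK | hK := le_or_gt K d
    · have hsymm : binomialWeight d K = binomialWeight d (d - K) := by
        rw [binomialWeight, binomialWeight, Nat.choose_symm hK]
      have := binomialWeight_le_div_of_four_mul_lt (n := d) (u := d - K) (by omega)
      rw [hsymm, div_le_iff₀ two_pos]
      push_cast
      linarith [show (4 : ℝ) / (d + 1) = 2 / (d + 1) * 2 by ring]
    · rw [binomialWeight_of_lt hK, zero_div]
      positivity

/- Either `s` is of order `m`, and both factors are `O(m ^ (-1/2))`, or `s` is smaller and a
negative binomial variable with parameter `K` is far off its mean at `q`. -/
lemma negBinomialWeight_mul_le {m q : ℕ} (hm : 1 ≤ m) (hq : m ≤ q) (K I s : ℕ) :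
    negBinomialWeight K q * negBinomialWeight (q - K + I) s ≤ 2 / m := by
  have hm0 : (0 : ℝ) < m := by exact_mod_cast hm
  have hqR : (m : ℝ) ≤ q := by exact_mod_cast hq
  have hnonneg := negBinomialWeight_nonneg (q - K + I) s
  obtain hs | hs := le_or_gt m (4 * s)
  · have hsR : (m : ℝ) ≤ 4 * s := by exact_mod_cast hs
    have hsq : m * negBinomialWeight K q ^ 2 ≤ 1 / 2 :=
      (mul_le_mul_of_nonneg_right hqR (sq_nonneg _)).trans
        (mul_negBinomialWeight_sq_le (by omega) K)
    have hsq' : m * negBinomialWeight (q - K + I) s ^ 2 ≤ 2 := by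
      have := mul_negBinomialWeight_sq_le (show 1 ≤ s by omega) (q - K + I)
      nlinarith [mul_le_mul_of_nonneg_right hsR (sq_nonneg (negBinomialWeight (q - K + I) s))]
    rw [le_div_iff₀ hm0]
    nlinarith [sq_nonneg (2 * negBinomialWeight K q - negBinomialWeight (q - K + I) s)]
  · obtain hK | hK := lt_or_ge s (q - K + I)
    · rw [negBinomialWeight_of_lt hK, mul_zero]
      positivity
    · calc negBinomialWeight K q * negBinomialWeight (q - K + I) s
        _ ≤ 2 / q * 1 := mul_le_mul (negBinomialWeight_le_div_of_four_mul_lt (by omega))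
            (negBinomialWeight_le_one _ _) hnonneg (by positivity)
        _ ≤ 2 / m := by rw [mul_one]; gcongr

end BinomialBounds

section Triples

variable (u : WalkState) (h : ℕ)

/-- The number of departures that bring the local time at `z` from its value in the state `u` up to
`h - 1`, for a walk that does not end at `z`. The truncated subtraction is exact as long as the
local time in `u` is less than `h`. -/
def departuresBelow (z : ℤ) : ℕ := h - 1 - u.localTime z + if z = u.pos then 1 else 0

/-- The departures from `z ≠ x` by the time at which `x`, `x + 1` and `x + 3` form a favorite
triple at level `h`. -/
def tripleDepartures (x z : ℤ) : Finset ℕ :=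
  if z = x + 1 ∨ z = x + 3 then {departuresBelow u h z + 1}
  else departuresLE (departuresBelow u h) z

variable {u h}

lemma isFavTriple_run_readArrows_iff (hu : ∀ y, u.localTime y < h) (ω : ArrowStacks) (t : ℕ)
    (x : ℤ) : (u.run (readArrows u.pos ω) t).IsFavTriple x h ↔
      (stackWalk u.pos ω t).pos = x ∧ (stackWalk u.pos ω t).dep x = departuresBelow u h x ∧
        ∀ z ≠ x, (stackWalk u.pos ω t).dep z ∈ tripleDepartures u h x z := by
  rw [WalkState.IsFavTriple, pos_run_readArrows]
  refine and_congr_right fun hx ↦ ?_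
  have hloc := localTime_run_readArrows u ω t
  rw [hx] at hloc
  have heq : (u.run (readArrows u.pos ω) t).localTime x = h ↔
      (stackWalk u.pos ω t).dep x = departuresBelow u h x := by
    have := hloc x
    have := hu x
    grind [departuresBelow]
  have heq' : ∀ z ≠ x, (u.run (readArrows u.pos ω) t).localTime z = h ↔
      (stackWalk u.pos ω t).dep z = departuresBelow u h z + 1 := fun z hz ↦ by
    have := hloc z
    have := hu z
    grind [departuresBelow]
  have hlt : ∀ z ≠ x, (u.run (readArrows u.pos ω) t).localTime z < h ↔
      (stackWalk u.pos ω t).dep z ≤ departuresBelow u h z := fun z hz ↦ by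
    have := hloc z
    have := hu z
    grind [departuresBelow]
  rw [heq, heq' _ (by omega), heq' _ (by omega)]
  refine and_congr_right fun _ ↦
    ⟨fun ⟨h1, h3, h0⟩ z hz ↦ ?_, fun hmem ↦ ⟨?_, ?_, fun z hz h1 h3 ↦ ?_⟩⟩
  · by_cases hsite : z = x + 1 ∨ z = x + 3
    · rw [tripleDepartures, if_pos hsite, Finset.mem_singleton]
      rcases hsite with rfl | rfl <;> assumption
    · rw [tripleDepartures, if_neg hsite, departuresLE, Finset.mem_range_succ_iff]
      rw [not_or] at hsite
      exact (hlt z hz).mp (h0 z hz hsite.1 hsite.2)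
  · simpa [tripleDepartures] using hmem (x + 1) (by omega)
  · simpa [tripleDepartures] using hmem (x + 3) (by omega)
  · rw [hlt z hz]
    simpa [tripleDepartures, h1, h3, departuresLE, Nat.lt_succ_iff] using hmem z hz

lemma readArrows_hitsTriple_subset (hu : ∀ y, u.localTime y < h) (x : ℤ) (N : Bool → ℕ) :
    {ω | readArrows u.pos ω ∈ u.hitsTriple x h} ⊆
      rootedChain true false (tripleDepartures u h x) (immigration true u.pos) (N true) x
          (departuresBelow u h x) ∩
        rootedChain false false (tripleDepartures u h x) (immigration false u.pos) (N false) x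
          (departuresBelow u h x) := by
  rintro ω ⟨t, ht⟩
  obtain ⟨hpos, hdep, hmem⟩ := (isFavTriple_run_readArrows_iff hu ω t x).mp ht
  have hchain : ∀ b, ω ∈ rootedChain b false (tripleDepartures u h x) (immigration b u.pos) (N b) x
      (departuresBelow u h x) := fun b ↦ by
    have := crossingChain_stackWalk b u.pos ω t (A := tripleDepartures u h x) (N := N b)
      fun z hz _ ↦ hmem z fun hzx ↦ by simp [hzx, hpos] at hz
    rwa [hpos, hdep] at this
  exact ⟨hchain true, hchain false⟩

lemma rootedChain_subset_readArrows_hitsTriple (hu : ∀ y, u.localTime y < h) {x : ℤ}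
    {N : Bool → ℕ} (hN : ∀ b, (x - u.pos) * direction b ≤ N b) (hN3 : 3 ≤ N false) :
    rootedChain true true (tripleDepartures u h x) (immigration true u.pos) (N true) x
          (departuresBelow u h x) ∩
        rootedChain false true (tripleDepartures u h x) (immigration false u.pos) (N false) x
          (departuresBelow u h x) ⊆
      {ω | readArrows u.pos ω ∈ u.hitsTriple x h} := by
  rintro ω ⟨hleft, hright⟩
  obtain ⟨t, hpos, hdep, hside⟩ := exists_stackWalk_of_crossingChain
    (A := fun _ ↦ tripleDepartures u h x) (N := N) (Bool.forall_bool.mpr ⟨hright, hleft⟩) hN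
  refine ⟨t, (isFavTriple_run_readArrows_iff hu ω t x).mpr ⟨hpos, hdep, fun z hz ↦ ?_⟩⟩
  obtain ⟨b, hb⟩ : ∃ b, 0 < (x - z) * direction b := by
    obtain hlt | hlt := lt_or_gt_of_ne hz
    exacts [⟨true, by simpa using hlt⟩, ⟨false, by simp only [direction_false]; omega⟩]
  obtain hle | hlt := le_or_gt ((x - z) * direction b) (N b)
  · exact (hside b z hb).1 hle
  · rw [(hside b z hb).2 hlt, tripleDepartures, if_neg, departuresLE, Finset.mem_range]
    · omega
    · cases b <;> simp only [direction_true, direction_false] at * <;> omega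

end Triples

section UpperBound

lemma chainSites_congr (b : Bool) {A A' : ℤ → Finset ℕ} (I : ℤ → ℕ) (N : ℕ) {y : ℤ}
    (hA : ∀ z, 0 ≤ (y - z) * direction b → A z = A' z) :
    chainSites b A I N y = chainSites b A' I N y := by
  induction N generalizing y with
  | zero => rfl
  | succ N ih =>
    rw [chainSites, chainSites, hA y (by simp), ih fun z hz ↦ hA z ?_]
    cases b <;> simp at * <;> omega

lemma negBinomialWeight_le_binomialWeight {K r : ℕ} (hK : K ≤ r) :
    negBinomialWeight K r ≤ binomialWeight r (r - K) := by
  rw [binomialWeight, Nat.choose_symm hK]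
  match K, r with
  | K, 0 =>
    obtain rfl : K = 0 := by omega
    simp [negBinomialWeight]
  | 0, r + 1 => simp only [negBinomialWeight]; positivity
  | K + 1, r + 1 =>
    rw [negBinomialWeight, binomialWeight, div_div, ← pow_succ, Nat.choose_succ_succ]
    gcongr
    omega

/- Over the three sites to the right of the root, prescribing the departures from the first costs
`2 / m`, whereas the departures from the last can serve as a new root. -/
lemma chainWeight_le_of_three_sites {m q : ℕ} (hm : 1 ≤ m) (hq : m ≤ q) (c r I₁ I₂ I₃ k : ℕ)
    (l : List (Finset ℕ × ℕ)) :
    chainWeight false (({q}, I₁) :: (Finset.range c, I₂) :: ({r}, I₃) :: l) k ≤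
      2 / m * ∑ j ∈ Finset.range (r + 1), binomialWeight r j * chainWeight false l j := by
  simp only [chainWeight, Finset.sum_singleton, Finset.mul_sum]
  set K := q - (k + I₁) + I₂
  let T := {s ∈ Finset.range c | K ≤ s ∧ s - K + I₃ ≤ r}
  let term : ℕ → ℝ := fun s ↦ negBinomialWeight (k + I₁) q * (negBinomialWeight K s *
    (negBinomialWeight (s - K + I₃) r * chainWeight false l (r - (s - K + I₃))))
  have hterm : ∀ s ∈ T, term s ≤
      2 / m * (binomialWeight r (r - (s - K + I₃)) * chainWeight false l (r - (s - K + I₃))) := by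
    intro s hs
    have hweight := chainWeight_nonneg false l (r - (s - K + I₃))
    simp only [term]
    rw [← mul_assoc]
    refine mul_le_mul (negBinomialWeight_mul_le hm hq _ _ s) ?_
      (mul_nonneg (negBinomialWeight_nonneg _ _) hweight) (by positivity)
    exact mul_le_mul_of_nonneg_right
      (negBinomialWeight_le_binomialWeight (Finset.mem_filter.mp hs).2.2) hweight
  calc ∑ s ∈ Finset.range c, term s
    _ = ∑ s ∈ T, term s := by
      refine (Finset.sum_filter_of_ne fun s _ hne ↦ ?_).symm
      by_contra hc
      obtain hc | hc := not_and_or.mp hc <;> exact hne <| by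
        simp [term, negBinomialWeight_of_lt (not_le.mp hc)]
    _ ≤ ∑ s ∈ T, _ := Finset.sum_le_sum hterm
    _ = ∑ j ∈ T.image fun s ↦ r - (s - K + I₃),
        2 / m * (binomialWeight r j * chainWeight false l j) := by
      rw [Finset.sum_image fun s hs s' hs' heq ↦ ?_]
      simp only [T, Finset.coe_filter, Set.mem_ofPred_eq] at hs hs' heq
      omega
    _ ≤ ∑ j ∈ Finset.range (r + 1), 2 / m * (binomialWeight r j * chainWeight false l j) := by
      refine Finset.sum_le_sum_of_subset_of_nonneg
        (Finset.image_subset_iff.mpr fun s _ ↦ Finset.mem_range_succ_iff.mpr (Nat.sub_le ..))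
        fun j _ _ ↦ ?_
      have := binomialWeight_nonneg r j
      have := chainWeight_nonneg false l j
      positivity

lemma chainSites_true_tripleDepartures (u : WalkState) (h : ℕ) (I : ℤ → ℕ) (N : ℕ) {x y : ℤ}
    (hy : y < x) : chainSites true (tripleDepartures u h x) I N y =
      chainSites true (departuresLE (departuresBelow u h)) I N y :=
  chainSites_congr true I N fun z hz ↦ if_neg <| by simp only [direction_true] at hz; omega

lemma chainSites_false_tripleDepartures (u : WalkState) (h : ℕ) (I : ℤ → ℕ) (N : ℕ) (x : ℤ) :
    chainSites false (tripleDepartures u h x) I (N + 3) (x + 1) =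
      ({departuresBelow u h (x + 1) + 1}, I (x + 1)) ::
      (departuresLE (departuresBelow u h) (x + 2), I (x + 2)) ::
      ({departuresBelow u h (x + 3) + 1}, I (x + 3)) ::
      chainSites false (departuresLE (departuresBelow u h)) I N (x + 4) := by
  simp only [chainSites, direction_false, sub_neg_eq_add, add_assoc, Int.reduceAdd]
  rw [chainSites_congr (A := tripleDepartures u h x) (A' := departuresLE (departuresBelow u h))
    false I N fun z hz ↦ if_neg <| by simp only [direction_false] at hz; omega]
  simp [tripleDepartures]

lemma coinFlips_hitsTriple_le {u : WalkState} {h m : ℕ} (hm : 1 ≤ m)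
    (hu : ∀ y, u.localTime y + m ≤ h) (N : ℕ) (x : ℤ) :
    (coinFlips ℕ).real (u.hitsTriple x h) ≤ 2 / m *
      (stackProb (rootedChain true false (departuresLE (departuresBelow u h))
          (immigration true u.pos) N x (departuresBelow u h x)) *
        stackProb (rootedChain false false (departuresLE (departuresBelow u h))
          (immigration false u.pos) N (x + 3) (departuresBelow u h (x + 3) + 1))) := by
  have hlt : ∀ y, u.localTime y < h := fun y ↦ by have := hu y; omega
  have hq : m ≤ departuresBelow u h (x + 1) + 1 := by
    have := hu (x + 1)
    simp only [departuresBelow]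
    omega
  obtain ⟨N', hleft, hright⟩ : ∃ N' : Bool → ℕ, N' true = N ∧ N' false = N + 3 :=
    ⟨fun b ↦ bif b then N else N + 3, rfl, rfl⟩
  rw [coinFlips_real_eq_stacks u.pos (u.measurableSet_hitsTriple x h)]
  refine (measureReal_mono (readArrows_hitsTriple_subset hlt x N')).trans ?_
  rw [← stackProb, stackProb_rootedChain_inter (fun _ ↦ false) (fun _ ↦ tripleDepartures u h x)
    (fun b ↦ immigration b u.pos), stackProb_rootedChain, stackProb_rootedChain, Finset.sum_mul,
    Finset.mul_sum]
  refine Finset.sum_le_sum fun i _ ↦ ?_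
  simp only [direction_true, direction_false, sub_neg_eq_add]
  rw [show x + 3 + 1 = x + 4 by ring, hleft, hright, chainSites_false_tripleDepartures,
    chainSites_true_tripleDepartures u h _ N (by omega : x - 1 < x)]
  have hthree := chainWeight_le_of_three_sites hm hq (departuresBelow u h (x + 2) + 1)
    (departuresBelow u h (x + 3) + 1) (immigration false u.pos (x + 1))
    (immigration false u.pos (x + 2)) (immigration false u.pos (x + 3))
    (departuresBelow u h x - i)
    (chainSites false (departuresLE (departuresBelow u h)) (immigration false u.pos) N (x + 4))
  refine (mul_le_mul_of_nonneg_left (mul_le_mul_of_nonneg_left hthree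
    (chainWeight_nonneg ..)) (binomialWeight_nonneg ..)).trans_eq ?_
  ring

lemma exists_sub_le (X : Finset ℤ) : ∃ N : ℕ, ∀ x ∈ X, ∀ x' ∈ X, x' - x ≤ N := by
  obtain ⟨M, hM⟩ := X.bddAbove
  obtain ⟨m, hm⟩ := X.bddBelow
  refine ⟨(M - m).toNat, fun x hx x' hx' ↦ ?_⟩
  have := hM hx'
  have := hm hx
  omega

/- Each probability factors into those of two chains rooted at distance three, and the pairs of
chains for different `x` are disjoint events up to multiplicity four. -/
lemma sum_coinFlips_hitsTriple_le {u : WalkState} {h m : ℕ} (hm : 1 ≤ m)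
    (hu : ∀ y, u.localTime y + m ≤ h) (X : Finset ℤ) :
    ∑ x ∈ X, (coinFlips ℕ).real (u.hitsTriple x h) ≤ 8 / m := by
  obtain ⟨N, hN⟩ := exists_sub_le X
  refine (Finset.sum_le_sum fun x _ ↦ coinFlips_hitsTriple_le hm hu N x).trans ?_
  have hle := sum_stackProb_rootedChain_mul_le u.pos (j := 3) (by norm_num) hN
    (p := departuresBelow u h) (r := fun z ↦ departuresBelow u h z + 1) (fun _ ↦ le_rfl)
    fun _ ↦ Nat.le_succ _
  rw [← Finset.mul_sum]
  calc _ ≤ 2 / (m : ℝ) * ((3 : ℕ) + 1) := by gcongr; exact_mod_cast hle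
    _ = 8 / m := by push_cast; ring

end UpperBound

section NegativeBinomialMoments

lemma negBinomialWeight_succ_add (k n : ℕ) :
    negBinomialWeight (k + 1) (k + 1 + n) = (n + k).choose k * (1 / 2) ^ (n + k + 1) := by
  rw [show k + 1 + n = n + k + 1 by ring]
  simp only [negBinomialWeight, binomialWeight]
  rw [pow_succ, one_div, inv_pow]
  ring

lemma hasSum_negBinomialWeight_mul_pow (K : ℕ) {s : ℝ} (hs0 : 0 ≤ s) (hs1 : s ≤ 1) :
    HasSum (fun n ↦ negBinomialWeight K (K + n) * s ^ n) ((2 - s)⁻¹ ^ K) := by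
  cases K with
  | zero =>
    have hpoint : (fun n ↦ negBinomialWeight 0 (0 + n) * s ^ n) =
        fun n ↦ if n = 0 then (1 : ℝ) else 0 := by
      funext n
      cases n <;> simp [negBinomialWeight]
    rw [hpoint]
    simpa using hasSum_ite_eq (0 : ℕ) (1 : ℝ)
  | succ k =>
    have hnorm : ‖s / 2‖ < 1 := by
      rw [Real.norm_eq_abs, abs_of_nonneg (by linarith)]
      linarith
    have hgeom := (hasSum_choose_mul_geometric_of_norm_lt_one k hnorm).mul_left
      ((1 / 2 : ℝ) ^ (k + 1))
    have hvalue : (2 - s)⁻¹ ^ (k + 1) = (1 / 2) ^ (k + 1) * (1 / (1 - s / 2) ^ (k + 1)) := by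
      have hs : (2 : ℝ) - s ≠ 0 := by linarith
      rw [← one_div_pow, ← mul_pow, inv_eq_one_div]
      congr 1
      field_simp
    rw [hvalue]
    refine hgeom.congr_fun fun n ↦ ?_
    rw [negBinomialWeight_succ_add]
    ring

lemma hasSum_negBinomialWeight (K : ℕ) : HasSum (fun n ↦ negBinomialWeight K (K + n)) 1 := by
  simpa [show (2 : ℝ) - 1 = 1 by norm_num] using
    hasSum_negBinomialWeight_mul_pow K zero_le_one le_rfl

lemma hasSum_negBinomialWeight_mul_natCast (K : ℕ) :
    HasSum (fun n ↦ negBinomialWeight K (K + n) * n) K := by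
  rw [← hasSum_nat_add_iff' 1]
  have hsum := (hasSum_negBinomialWeight (K + 1)).mul_left (K : ℝ)
  simp only [mul_one, Finset.range_one, Finset.sum_singleton, Nat.cast_zero, mul_zero,
    sub_zero] at hsum ⊢
  refine hsum.congr_fun fun n ↦ ?_
  cases K with
  | zero => simp [negBinomialWeight]
  | succ k =>
    have hchoose : ((n + (k + 1)).choose (k + 1) : ℝ) * (k + 1) =
        (n + (k + 1)).choose k * (n + 1) := by
      have h := Nat.choose_succ_right_eq (n + (k + 1)) k
      rw [show n + (k + 1) - k = n + 1 by omega] at h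
      exact_mod_cast h
    rw [negBinomialWeight_succ_add, show n + 1 + k = n + (k + 1) by ring,
      negBinomialWeight_succ_add]
    push_cast
    linear_combination (-(1 / 2 : ℝ) ^ (n + (k + 1) + 1)) * hchoose

lemma hasSum_negBinomialWeight_mul_pow_add_affine (K : ℕ) {s : ℝ} (hs0 : 0 ≤ s) (hs1 : s ≤ 1)
    (a b c : ℝ) :
    HasSum (fun n ↦ negBinomialWeight K (K + n) * (a * s ^ n + b * n + c))
      (a * (2 - s)⁻¹ ^ K + b * K + c) := by
  have hpow := (hasSum_negBinomialWeight_mul_pow K hs0 hs1).mul_left a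
  have hid := (hasSum_negBinomialWeight_mul_natCast K).mul_left b
  have hsum := (hpow.add hid).add ((hasSum_negBinomialWeight K).mul_left c)
  rw [mul_one] at hsum
  exact hsum.congr_fun fun n ↦ by ring

end NegativeBinomialMoments

section OptionalStopping

variable {F w : ℕ → ℝ} {S : ℝ} {dead : Bool} {l : List (Finset ℕ × ℕ)} {q K k I : ℕ}

lemma le_sum_negBinomialWeight_mul
    (hS : HasSum (fun n ↦ negBinomialWeight K (K + n) * F n) S) (hw : ∀ n, 0 ≤ w n)
    (hin : ∀ n, K + n ≤ q → F n ≤ w n) (hout : ∀ n, q < K + n → F n ≤ 0) :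
    S ≤ ∑ d ∈ Finset.range (q + 1), negBinomialWeight K d * w (d - K) := by
  have hterm (n : ℕ) (hn : n ∉ Finset.range (q + 1 - K)) :
      0 ≤ -(negBinomialWeight K (K + n) * F n) := by
    rw [Finset.mem_range] at hn
    exact neg_nonneg.mpr
      (mul_nonpos_of_nonneg_of_nonpos (negBinomialWeight_nonneg _ _) (hout n (by omega)))
  have hle := sum_le_hasSum _ hterm hS.neg
  rw [Finset.sum_neg_distrib, neg_le_neg_iff] at hle
  calc S ≤ ∑ n ∈ Finset.range (q + 1 - K), negBinomialWeight K (K + n) * F n := hle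
    _ ≤ ∑ n ∈ Finset.range (q + 1 - K), negBinomialWeight K (K + n) * w (K + n - K) := by
        refine Finset.sum_le_sum fun n hn ↦ ?_
        rw [Finset.mem_range] at hn
        rw [Nat.add_sub_cancel_left]
        exact mul_le_mul_of_nonneg_left (hin n (by omega)) (negBinomialWeight_nonneg _ _)
    _ = ∑ d ∈ (Finset.range (q + 1 - K)).image (K + ·), negBinomialWeight K d * w (d - K) :=
        by
        rw [Finset.sum_image fun _ _ _ _ h ↦ Nat.add_left_cancel h]
    _ ≤ ∑ d ∈ Finset.range (q + 1), negBinomialWeight K d * w (d - K) := by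
        refine Finset.sum_le_sum_of_subset_of_nonneg (fun d hd ↦ ?_)
          fun d _ _ ↦ mul_nonneg (negBinomialWeight_nonneg _ _) (hw _)
        simp only [Finset.mem_image, Finset.mem_range] at hd ⊢
        omega

lemma le_chainWeight_cons
    (hS : HasSum (fun n ↦ negBinomialWeight (k + I) (k + I + n) * F n) S)
    (hin : ∀ n, k + I + n ≤ q → F n ≤ chainWeight dead l n)
    (hout : ∀ n, q < k + I + n → F n ≤ 0) :
    S ≤ chainWeight dead ((Finset.range (q + 1), I) :: l) k :=
  le_sum_negBinomialWeight_mul hS (chainWeight_nonneg dead l) hin hout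

end OptionalStopping

section Extinction

/-- Each site of the list allows every number of departures up to some bound of at least `2 B + 1`
and has immigration at most `J`. The process of crossings is not stopped at such a site as long as
there are at most `B` crossings on both sides of it. -/
def RoomySites (B J : ℕ) (l : List (Finset ℕ × ℕ)) : Prop :=
  ∀ c ∈ l, c.2 ≤ J ∧ ∃ q, 2 * B + 1 ≤ q ∧ c.1 = Finset.range (q + 1)

lemma RoomySites.of_cons {B J : ℕ} {c : Finset ℕ × ℕ} {l : List (Finset ℕ × ℕ)}
    (hl : RoomySites B J (c :: l)) : RoomySites B J l :=
  fun c' hc' ↦ hl c' (List.mem_cons_of_mem c hc')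

lemma natCast_div_add_one_le_one (n : ℕ) : (n : ℝ) / (n + 1) ≤ 1 :=
  (div_le_one (by positivity)).mpr (by linarith)

lemma inv_two_sub_div_add_one (n : ℕ) :
    (2 - (n : ℝ) / (n + 1))⁻¹ = ((n + 1 : ℕ) : ℝ) / ((n + 1 : ℕ) + 1) := by
  have hsub : 2 - (n : ℝ) / (n + 1) = (n + 1 + 1) / (n + 1) := by
    field_simp
    ring
  rw [hsub, inv_div]
  push_cast
  rfl

/- Without immigration the process of crossings is critical branching with geometric offspring,
which is extinct after `n` sites with probability `(n / (n + 1)) ^ z`. The supermartingale `ψ`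
bounds the probability of more than `B` crossings anywhere. -/
lemma pow_sub_le_chainWeight {B : ℕ} {ψ : ℕ → ℝ} (hψ0 : ∀ z, 0 ≤ ψ z)
    (hψ1 : ∀ z, B < z → 1 ≤ ψ z)
    (hψ : ∀ z, ∃ S ≤ ψ z, HasSum (fun n ↦ negBinomialWeight z (z + n) * ψ n) S)
    {l : List (Finset ℕ × ℕ)} (hl : RoomySites B 0 l) (z : ℕ) :
    ((l.length : ℝ) / (l.length + 1)) ^ z - ψ z ≤ chainWeight true l z := by
  have hpow (n z : ℕ) : ((n : ℝ) / (n + 1)) ^ z ≤ 1 :=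
    pow_le_one₀ (by positivity) (natCast_div_add_one_le_one n)
  induction l generalizing z with
  | nil =>
    obtain rfl | hz := Nat.eq_zero_or_pos z
    · simpa [chainWeight] using hψ0 0
    · simpa [chainWeight, hz.ne'] using hψ0 z
  | cons c l ih =>
    obtain ⟨D, I⟩ := c
    obtain ⟨hI, q, hq, rfl : D = _⟩ := hl _ List.mem_cons_self
    obtain rfl : I = 0 := Nat.le_zero.mp hI
    obtain hz | hz := lt_or_ge B z
    · exact (sub_nonpos.mpr ((hpow _ z).trans (hψ1 z hz))).trans (chainWeight_nonneg _ _ _)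
    obtain ⟨S, hSψ, hS⟩ := hψ z
    have hext := hasSum_negBinomialWeight_mul_pow z (by positivity)
      (natCast_div_add_one_le_one l.length)
    rw [inv_two_sub_div_add_one] at hext
    refine (sub_le_sub_left hSψ _).trans (le_chainWeight_cons (I := 0)
      ((hext.sub hS).congr_fun fun n ↦ mul_sub _ _ _)
      (fun n _ ↦ ih hl.of_cons n) fun n hn ↦ ?_)
    exact sub_nonpos.mpr ((hpow _ n).trans (hψ1 n (by omega)))

lemma one_sub_div_le_pow (M z : ℕ) : 1 - (z : ℝ) / (M + 1) ≤ ((M : ℝ) / (M + 1)) ^ z := by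
  have hM : (0 : ℝ) < M + 1 := by positivity
  have hbernoulli := one_add_mul_le_pow (a := -1 / (M + 1 : ℝ))
    (by rw [le_div_iff₀ hM]; linarith [M.cast_nonneg (α := ℝ)]) z
  have hbase : (M : ℝ) / (M + 1) = 1 + -1 / (M + 1) := by
    field_simp
    ring
  rw [hbase]
  linear_combination hbernoulli

lemma one_sub_le_chainWeight {B : ℕ} {l : List (Finset ℕ × ℕ)} (hl : RoomySites B 0 l) (z : ℕ) :
    1 - z * (1 / (l.length + 1) + 1 / (B + 1) : ℝ) ≤ chainWeight true l z := by
  have hψ1 (z : ℕ) (hz : B < z) : (1 : ℝ) ≤ z / (B + 1) := by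
    rw [one_le_div (by positivity)]
    exact_mod_cast hz
  have hmean (z : ℕ) :
      HasSum (fun n ↦ negBinomialWeight z (z + n) * (n / (B + 1) : ℝ)) (z / (B + 1)) :=
    ((hasSum_negBinomialWeight_mul_natCast z).div_const _).congr_fun
      fun n ↦ (mul_div_assoc _ _ _).symm
  have hext := pow_sub_le_chainWeight (fun z ↦ by positivity) hψ1 (fun z ↦ ⟨_, le_rfl, hmean z⟩)
    hl z
  have hpow := one_sub_div_le_pow l.length z
  linear_combination hext + hpow

lemma le_inv_two_sub {s : ℝ} (hs1 : s ≤ 1) : s ≤ (2 - s)⁻¹ := by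
  rw [← one_div, le_div_iff₀ (by linarith)]
  nlinarith [sq_nonneg (1 - s)]

lemma pow_sub_pow_sub_le_chainWeight {B : ℕ} {l : List (Finset ℕ × ℕ)} (hl : RoomySites B 0 l)
    {s K : ℝ} (hs0 : 0 ≤ s) (hs1 : s ≤ 1) (hK0 : 0 ≤ K) (hK1 : K ≤ 1) (z : ℕ) :
    K * (s ^ z - s ^ (B + 1)) - z * (1 / (l.length + 1)) ≤ chainWeight true l z := by
  have hψ0 (z : ℕ) : 0 ≤ 1 - K * (s ^ z - s ^ (B + 1)) := by
    have hdiff : s ^ z - s ^ (B + 1) ≤ 1 := by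
      linarith [pow_le_one₀ hs0 hs1 (n := z), pow_nonneg hs0 (B + 1)]
    nlinarith
  have hψ1 (z : ℕ) (hz : B < z) : 1 ≤ 1 - K * (s ^ z - s ^ (B + 1)) := by
    have hdiff := pow_le_pow_of_le_one hs0 hs1 (show B + 1 ≤ z from hz)
    nlinarith
  have hψ (z : ℕ) : ∃ S ≤ 1 - K * (s ^ z - s ^ (B + 1)),
      HasSum (fun n ↦ negBinomialWeight z (z + n) * (1 - K * (s ^ n - s ^ (B + 1)))) S := by
    refine ⟨_, ?_, (hasSum_negBinomialWeight_mul_pow_add_affine z hs0 hs1 (-K) 0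
      (1 + K * s ^ (B + 1))).congr_fun fun n ↦ by ring⟩
    have hinv := mul_le_mul_of_nonneg_left (pow_le_pow_left₀ hs0 (le_inv_two_sub hs1) z) hK0
    linear_combination hinv
  have hext := pow_sub_le_chainWeight hψ0 hψ1 hψ hl z
  have hpow := one_sub_div_le_pow l.length z
  linear_combination hext + hpow

end Extinction

section Immigration

/-- The total immigration at the sites of a list. -/
def totalImmigration (l : List (Finset ℕ × ℕ)) : ℕ := (l.map Prod.snd).sum

@[simp]
lemma totalImmigration_nil : totalImmigration [] = 0 := rfl

@[simp]
lemma totalImmigration_cons (c : Finset ℕ × ℕ) (l : List (Finset ℕ × ℕ)) :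
    totalImmigration (c :: l) = c.2 + totalImmigration l := by
  simp [totalImmigration]

lemma RoomySites.totalImmigration_le {B J : ℕ} {l : List (Finset ℕ × ℕ)} (hl : RoomySites B J l) :
    totalImmigration l ≤ l.length * J := by
  induction l with
  | nil => simp
  | cons c l ih =>
    rw [totalImmigration_cons, List.length_cons, add_mul, one_mul, add_comm]
    exact add_le_add (ih hl.of_cons) (hl c List.mem_cons_self).1

lemma RoomySites.mono {B B' J J' : ℕ} {l : List (Finset ℕ × ℕ)} (hl : RoomySites B' J l)
    (hB : B ≤ B') (hJ : J ≤ J') : RoomySites B J' l := fun c hc ↦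
  have ⟨hI, q, hq, hc⟩ := hl c hc
  ⟨hI.trans hJ, q, by omega, hc⟩

variable {B B' : ℕ} {l l₁ : List (Finset ℕ × ℕ)} {δ e m s K : ℝ} {Z : ℕ}

lemma one_sub_le_chainWeight_append (hl₁ : RoomySites B 1 l₁) (hδ : 1 / (B + 1) ≤ δ) (hm : 0 ≤ m)
    (hl : ∀ z : ℕ, 1 - (z + m) * δ ≤ chainWeight true l z) (z : ℕ) :
    1 - (z + m + totalImmigration l₁) * δ ≤ chainWeight true (l₁ ++ l) z := by
  have hδ0 : 0 < δ := lt_of_lt_of_le (by positivity) hδ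
  have hneg (n : ℕ) (y : ℝ) (hy : 0 ≤ y) (hn : B < n) : 1 - (n + y) * δ ≤ 0 := by
    have hn' : (B : ℝ) + 1 ≤ n := by exact_mod_cast hn
    have hδ' : 1 ≤ (B + 1) * δ := by rwa [div_le_iff₀' (by positivity)] at hδ
    nlinarith
  induction l₁ generalizing z with
  | nil => simpa using hl z
  | cons c l₁ ih =>
    obtain ⟨D, I⟩ := c
    obtain ⟨hI, q, hq, rfl : D = _⟩ := hl₁ _ List.mem_cons_self
    replace hI : I ≤ 1 := hI
    have ih := ih hl₁.of_cons
    rw [totalImmigration_cons, List.cons_append, add_assoc]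
    obtain hz | hz := lt_or_ge B z
    · exact (hneg z _ (by positivity) hz).trans (chainWeight_nonneg _ _ _)
    have hsum := hasSum_negBinomialWeight_mul_pow_add_affine (z + I) zero_le_one le_rfl 0 (-δ)
      (1 - (m + totalImmigration l₁) * δ)
    refine le_of_eq_of_le (by push_cast; ring) (le_chainWeight_cons hsum (fun n _ ↦ ?_)
      fun n hn ↦ ?_)
    · exact le_of_eq_of_le (by ring) (ih n)
    · exact le_of_eq_of_le (by ring) (hneg n (m + totalImmigration l₁) (by positivity) (by omega))

lemma exists_hasSum_pow_sub_pow_sub {I z : ℕ} (hI : I ≤ 1) (hs0 : 0 ≤ s) (hs1 : s ≤ 1)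
    (hK : 0 ≤ K) (hs : s ^ z ≤ (2 - s)⁻¹ ^ (z + 1)) (t y : ℝ) :
    ∃ S, K * (s ^ z - t) - (z + I + y) * e ≤ S ∧
      HasSum (fun n ↦ negBinomialWeight (z + I) (z + I + n) * (K * (s ^ n - t) - (n + y) * e))
        S := by
  refine ⟨_, ?_, (hasSum_negBinomialWeight_mul_pow_add_affine (z + I) hs0 hs1 K (-e)
    (-K * t - y * e)).congr_fun fun n ↦ by ring⟩
  have hpow := mul_le_mul_of_nonneg_left (hs.trans (pow_le_pow_of_le_one
    (inv_nonneg.mpr (by linarith)) (inv_le_one_of_one_le₀ (by linarith))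
    (by omega : z + I ≤ z + 1))) hK
  push_cast
  linear_combination hpow

lemma mul_pow_sub_sub_le {z : ℕ} {t y : ℝ} (hs0 : 0 ≤ s) (hs1 : s ≤ 1) (hK : 0 ≤ K) (he : 0 ≤ e)
    (ht : 0 ≤ t) (hy : 0 ≤ y) (hyδ : y * δ ≤ 1 - K) : K * (s ^ z - t) - y * e ≤ 1 - y * δ := by
  have hdiff : s ^ z - t ≤ 1 := by linarith [pow_le_one₀ hs0 hs1 (n := z)]
  linarith [mul_le_mul_of_nonneg_left hdiff hK, mul_nonneg hy he]

/- The weight `K * (s ^ z - s ^ (B' + 1))` is a submartingale while there are more than `Z`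
crossings, and `one_sub_le_chainWeight_append` bounds the survival probability when there are at
most `Z` of them. -/
lemma pow_sub_pow_sub_le_chainWeight_append (hl₁ : RoomySites B' 1 l₁) (hB : B ≤ B')
    (hδ : 1 / (B + 1) ≤ δ) (hm : 0 ≤ m) (hl : ∀ z : ℕ, 1 - (z + m) * δ ≤ chainWeight true l z)
    (hs0 : 0 ≤ s) (hs1 : s ≤ 1) (hK : 0 ≤ K) (he : 0 ≤ e)
    (hl' : ∀ z : ℕ, K * (s ^ z - s ^ (B + 1)) - (z + m) * e ≤ chainWeight true l z)
    (hZ : (Z + m + totalImmigration l₁) * δ ≤ 1 - K)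
    (hs : ∀ z : ℕ, Z < z → s ^ z ≤ (2 - s)⁻¹ ^ (z + 1)) (z : ℕ) :
    K * (s ^ z - s ^ (B' + 1)) - (z + m + totalImmigration l₁) * e ≤
      chainWeight true (l₁ ++ l) z + K * (s ^ (B + 1) - s ^ (B' + 1)) * chainWeight false l₁ z := by
  have hgap : 0 ≤ K * (s ^ (B + 1) - s ^ (B' + 1)) :=
    mul_nonneg hK (sub_nonneg.mpr (pow_le_pow_of_le_one hs0 hs1 (by omega)))
  have hδ0 : 0 < δ := lt_of_lt_of_le (by positivity) hδ
  have hneg (n : ℕ) (y : ℝ) (hy : 0 ≤ y) (hn : B' < n) :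
      K * (s ^ n - s ^ (B' + 1)) - y * e ≤ 0 := by
    have hpow := pow_le_pow_of_le_one hs0 hs1 (show B' + 1 ≤ n from hn)
    nlinarith [mul_nonneg hy he]
  have hsurv (l₁ : List (Finset ℕ × ℕ)) (z : ℕ) : 0 ≤ chainWeight true (l₁ ++ l) z +
      K * (s ^ (B + 1) - s ^ (B' + 1)) * chainWeight false l₁ z :=
    add_nonneg (chainWeight_nonneg _ _ _) (mul_nonneg hgap (chainWeight_nonneg _ _ _))
  induction l₁ generalizing z with
  | nil =>
    simp only [totalImmigration_nil, Nat.cast_zero, add_zero, List.nil_append, chainWeight,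
      Bool.false_eq_true, false_and, if_false]
    linear_combination hl' z
  | cons c l₁ ih =>
    have hfew := one_sub_le_chainWeight_append (hl₁.mono hB le_rfl) hδ hm hl z
    obtain ⟨D, I⟩ := c
    obtain ⟨hI, q, hq, rfl : D = _⟩ := hl₁ _ List.mem_cons_self
    replace hI : I ≤ 1 := hI
    have ih := ih hl₁.of_cons (le_trans (by gcongr; simp) hZ)
    obtain hz | hz := lt_or_ge B' z
    · exact (hneg z _ (by positivity) hz).trans (hsurv _ z)
    obtain hzZ | hzZ := le_or_gt z Z
    · refine le_trans ?_ (hfew.trans (le_add_of_nonneg_right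
        (mul_nonneg hgap (chainWeight_nonneg _ _ _))))
      exact mul_pow_sub_sub_le hs0 hs1 hK he (pow_nonneg hs0 _) (by positivity)
        (le_trans (by gcongr) hZ)
    · obtain ⟨S, hS, hsum⟩ := exists_hasSum_pow_sub_pow_sub (e := e) hI hs0 hs1 hK (hs z hzZ)
        (s ^ (B' + 1)) (m + totalImmigration l₁)
      have hle := le_sum_negBinomialWeight_mul (q := q) hsum (hsurv l₁)
        (fun n _ ↦ le_of_eq_of_le (by ring) (ih n))
        fun n hn ↦ hneg n (n + (m + totalImmigration l₁)) (by positivity) (by omega)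
      rw [totalImmigration_cons, List.cons_append]
      simp only [mul_add, Finset.sum_add_distrib, mul_left_comm _ (K * _), ← Finset.mul_sum] at hle
      refine le_trans ?_ hle
      push_cast
      linear_combination hS

end Immigration

section BinomialLowerBounds

lemma sixteen_pow_le_centralBinom_sq_mul {n : ℕ} (hn : 1 ≤ n) :
    16 ^ n ≤ n.centralBinom ^ 2 * (4 * n) := by
  induction n, hn using Nat.le_induction with
  | base => simp [Nat.centralBinom, Nat.choose]
  | succ n hn ih =>
    refine Nat.le_of_mul_le_mul_left (?_ : (n + 1) ^ 2 * 16 ^ (n + 1) ≤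
      (n + 1) ^ 2 * ((n + 1).centralBinom ^ 2 * (4 * (n + 1)))) (by positivity)
    calc (n + 1) ^ 2 * 16 ^ (n + 1) = 16 * (n + 1) ^ 2 * 16 ^ n := by ring
      _ ≤ 16 * (n + 1) ^ 2 * (n.centralBinom ^ 2 * (4 * n)) := Nat.mul_le_mul_left _ ih
      _ = 16 * (4 * (n * (n + 1))) * (n + 1) * n.centralBinom ^ 2 := by ring
      _ ≤ 16 * (2 * n + 1) ^ 2 * (n + 1) * n.centralBinom ^ 2 := by gcongr; nlinarith
      _ = ((n + 1) * (n + 1).centralBinom) ^ 2 * (4 * (n + 1)) := by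
          rw [Nat.succ_mul_centralBinom_succ n]
          ring
      _ = (n + 1) ^ 2 * ((n + 1).centralBinom ^ 2 * (4 * (n + 1))) := by ring

lemma centralBinom_mul_one_sub_le_choose {m j : ℕ} (hj : j ≤ m) :
    (m.centralBinom : ℝ) * (1 - (j : ℝ) ^ 2 / m) ≤ (2 * m).choose (m + j) := by
  induction j with
  | zero => simp [Nat.centralBinom]
  | succ j ih =>
    have hm : (0 : ℝ) < m := by exact_mod_cast (Nat.succ_pos j).trans_le hj
    have hjm : (j : ℝ) + 1 ≤ m := by exact_mod_cast hj
    have hchoose : ((2 * m).choose (m + (j + 1)) : ℝ) * (m + j + 1) =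
        (2 * m).choose (m + j) * (m - j) := by
      have h := congrArg (Nat.cast (R := ℝ)) (Nat.choose_succ_right_eq (2 * m) (m + j))
      rw [show 2 * m - (m + j) = m - j by omega] at h
      push_cast [Nat.cast_sub (show j ≤ m by omega)] at h
      rw [← add_assoc]
      exact h
    have hquad : (1 - ((j + 1 : ℕ) : ℝ) ^ 2 / m) * (m + j + 1) ≤
        (1 - (j : ℝ) ^ 2 / m) * (m - j) := by
      have hdiff : (1 - (j : ℝ) ^ 2 / m) * (m - j) -
          (1 - ((j + 1 : ℕ) : ℝ) ^ 2 / m) * (m + j + 1) = (j ^ 3 + (j + 1) ^ 3) / m := by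
        push_cast
        field_simp
        ring
      have : (0 : ℝ) ≤ (j ^ 3 + (j + 1) ^ 3) / m := by positivity
      linarith
    refine le_of_mul_le_mul_right ?_ (show (0 : ℝ) < m + j + 1 by positivity)
    calc (m.centralBinom : ℝ) * (1 - ((j + 1 : ℕ) : ℝ) ^ 2 / m) * (m + j + 1)
        = m.centralBinom * ((1 - ((j + 1 : ℕ) : ℝ) ^ 2 / m) * (m + j + 1)) := by ring
      _ ≤ m.centralBinom * ((1 - (j : ℝ) ^ 2 / m) * (m - j)) := by gcongr
      _ = m.centralBinom * (1 - (j : ℝ) ^ 2 / m) * (m - j) := by ring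
      _ ≤ (2 * m).choose (m + j) * (m - j) :=
          mul_le_mul_of_nonneg_right (ih (by omega)) (by linarith)
      _ = (2 * m).choose (m + (j + 1)) * (m + j + 1) := hchoose.symm

lemma one_div_le_binomialWeight_two_mul_add {m j : ℕ} (hm : 1 ≤ m) (hj : 2 * j ^ 2 ≤ m) :
    1 / (4 * √(2 * m)) ≤ binomialWeight (2 * m) (m + j) := by
  have hm0 : (0 : ℝ) < m := by exact_mod_cast hm
  have hhalf : (1 / 2 : ℝ) ≤ 1 - (j : ℝ) ^ 2 / m := by
    have : (j : ℝ) ^ 2 / m ≤ 1 / 2 := by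
      rw [div_le_iff₀ hm0]
      linarith [show (2 * (j : ℝ) ^ 2) ≤ m by exact_mod_cast hj]
    linarith
  have hcentral : (4 : ℝ) ^ m ≤ m.centralBinom * (2 * √m) := by
    refine le_of_sq_le_sq ?_ (by positivity)
    rw [mul_pow, mul_pow, Real.sq_sqrt hm0.le, ← pow_mul, mul_comm m 2, pow_mul]
    norm_num
    exact_mod_cast sixteen_pow_le_centralBinom_sq_mul hm
  rw [binomialWeight, div_le_div_iff₀ (by positivity) (by positivity), pow_mul, one_mul]
  calc ((2 : ℝ) ^ 2) ^ m = 4 ^ m := by norm_num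
    _ ≤ m.centralBinom * (2 * √m) := hcentral
    _ ≤ m.centralBinom * (2 * √(2 * m)) := by gcongr; linarith
    _ = m.centralBinom * (1 / 2) * (4 * √(2 * m)) := by ring
    _ ≤ m.centralBinom * (1 - (j : ℝ) ^ 2 / m) * (4 * √(2 * m)) := by gcongr
    _ ≤ (2 * m).choose (m + j) * (4 * √(2 * m)) := by
        gcongr
        exact centralBinom_mul_one_sub_le_choose (by nlinarith)

lemma binomialWeight_symm {n k : ℕ} (hk : k ≤ n) :
    binomialWeight n (n - k) = binomialWeight n k := by
  rw [binomialWeight, binomialWeight, Nat.choose_symm hk]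

lemma one_div_le_binomialWeight_two_mul {m k : ℕ} (hm : 1 ≤ m) (hk : 2 * ((k : ℤ) - m) ^ 2 ≤ m) :
    1 / (4 * √(2 * m)) ≤ binomialWeight (2 * m) k := by
  obtain h | h := le_total m k <;> obtain ⟨j, rfl⟩ := Nat.exists_eq_add_of_le h
  · refine one_div_le_binomialWeight_two_mul_add hm ?_
    rw [Nat.cast_add, add_sub_cancel_left] at hk
    exact_mod_cast hk
  · rw [← binomialWeight_symm (show k ≤ 2 * (k + j) by omega),
      show 2 * (k + j) - k = k + j + j by ring_nf; omega]
    refine one_div_le_binomialWeight_two_mul_add hm ?_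
    rw [Nat.cast_add, sub_add_cancel_left, neg_sq] at hk
    exact_mod_cast hk

lemma one_div_le_binomialWeight {n k : ℕ} (hn : 2 ≤ n) (hk : (2 * (k : ℤ) - n) ^ 2 ≤ n) :
    1 / (8 * √n) ≤ binomialWeight n k := by
  obtain ⟨m, rfl | rfl⟩ := Nat.even_or_odd' n
  · have hk' : 2 * ((k : ℤ) - m) ^ 2 ≤ m := by
      push_cast at hk
      nlinarith
    refine le_trans ?_ (one_div_le_binomialWeight_two_mul (by omega) hk')
    push_cast
    have : (0 : ℝ) < m := by exact_mod_cast (by omega : 0 < m)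
    gcongr
    norm_num
  have hm : 1 ≤ m := by omega
  obtain ⟨k, rfl⟩ : ∃ i, k = i + 1 := Nat.exists_eq_add_one_of_ne_zero <| by
    rintro rfl
    have : (1 : ℤ) ≤ m := by exact_mod_cast hm
    push_cast at hk
    nlinarith
  have hbound : 1 / (8 * √(2 * m + 1 : ℕ)) ≤ 1 / (4 * √(2 * m)) / 2 := by
    rw [div_div, mul_right_comm]
    gcongr
    · norm_num
    · push_cast
      linarith
  rw [binomialWeight_succ_succ]
  have hpos := binomialWeight_nonneg (2 * m) k
  have hpos' := binomialWeight_nonneg (2 * m) (k + 1)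
  push_cast at hk
  obtain h | h := le_or_gt m k
  · have := one_div_le_binomialWeight_two_mul hm (k := k) (by
      have : (m : ℤ) ≤ k := by exact_mod_cast h
      nlinarith)
    linarith
  · have := one_div_le_binomialWeight_two_mul hm (k := k + 1) (by
      have : (k : ℤ) + 1 ≤ m := by exact_mod_cast h
      push_cast
      nlinarith)
    linarith

lemma one_div_le_negBinomialWeight {K d : ℕ} (hK : 1 ≤ K) (hd : 3 ≤ d)
    (hKd : (2 * (K : ℤ) - d - 1) ^ 2 ≤ d - 1) : 1 / (16 * √d) ≤ negBinomialWeight K d := by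
  obtain ⟨k, rfl⟩ := Nat.exists_eq_add_of_le' hK
  obtain ⟨n, rfl⟩ := Nat.exists_eq_add_of_le' ((by omega : 1 ≤ 3).trans hd)
  have hn : (0 : ℝ) < n := by exact_mod_cast (by omega : 0 < n)
  have hbin := one_div_le_binomialWeight (n := n) (k := k) (by omega) (by
    push_cast at hKd
    ring_nf at hKd ⊢
    linarith)
  rw [negBinomialWeight]
  calc 1 / (16 * √(n + 1 : ℕ)) ≤ 1 / (8 * √n) / 2 := by
        rw [div_div, mul_right_comm]
        gcongr
        · norm_num
        · exact n.le_succ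
    _ ≤ binomialWeight n k / 2 := by linarith

end BinomialLowerBounds

section Persistence

lemma exists_lastArrow_of_le_arrowCount {b : Bool} {ω : ArrowStacks} {y : ℤ} {k d : ℕ}
    (hk : k ≤ arrowCount b ω y d) : ∃ e ≤ d, LastArrow b ω y e ∧ arrowCount b ω y e = k := by
  induction d with
  | zero => exact ⟨0, le_rfl, Or.inl rfl, by simpa using hk.antisymm' (Nat.zero_le _)⟩
  | succ d ih =>
    obtain h | h := le_or_gt k (arrowCount b ω y d)
    · obtain ⟨e, he, hlast⟩ := ih h
      exact ⟨e, he.trans d.le_succ, hlast⟩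
    · rw [arrowCount_succ] at hk
      have hb : ω (y, d) = b := by grind
      refine ⟨d + 1, le_rfl, Or.inr hb, ?_⟩
      rw [arrowCount_succ]
      grind

lemma CrossingChain.anti {b : Bool} {ω : ArrowStacks} {c I I' : ℕ} (hI : I ≤ I') {N : ℕ} {y : ℤ}
    {k k' : ℕ} (hk : k ≤ k')
    (h : CrossingChain b ω false (fun _ ↦ Finset.range (c + 1)) (fun _ ↦ I') N y k') :
    CrossingChain b ω false (fun _ ↦ Finset.range (c + 1)) (fun _ ↦ I) N y k := by
  induction N generalizing y k k' with
  | zero => simp [CrossingChain]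
  | succ N ih =>
    obtain ⟨d, hd, hcount, -, hchain⟩ := h
    simp only at hcount
    obtain ⟨e, hed, hlast, hcount'⟩ := exists_lastArrow_of_le_arrowCount
      (show k + I ≤ arrowCount b ω y d by omega)
    exact ⟨e, by simp only [Finset.mem_range] at hd ⊢; omega, hcount', hlast,
      ih (monotone_arrowCount (!b) ω y hed) hchain⟩

lemma chainSites_eq_replicate {b : Bool} {A : ℤ → Finset ℕ} {I : ℤ → ℕ} {N : ℕ} {y : ℤ}
    {A₀ : Finset ℕ} {I₀ : ℕ}
    (h : ∀ z, 0 ≤ (y - z) * direction b → (y - z) * direction b < N → A z = A₀ ∧ I z = I₀) :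
    chainSites b A I N y = List.replicate N (A₀, I₀) := by
  induction N generalizing y with
  | zero => rfl
  | succ N ih =>
    obtain ⟨hA, hI⟩ := h y (by simp) (by simp)
    rw [chainSites, hA, hI, List.replicate_succ, ih fun z hz hz' ↦ h z ?_ ?_] <;>
      cases b <;> simp at * <;> omega

lemma chainWeight_false_replicate_anti {c I I' : ℕ} (hI : I ≤ I') (N : ℕ) {k k' : ℕ}
    (hk : k ≤ k') : chainWeight false (List.replicate N (Finset.range (c + 1), I')) k' ≤
      chainWeight false (List.replicate N (Finset.range (c + 1), I)) k := by
  have hsites : ∀ I : ℕ, List.replicate N (Finset.range (c + 1), I) =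
      chainSites true (fun _ ↦ Finset.range (c + 1)) (fun _ ↦ I) N 0 := fun I ↦
    (chainSites_eq_replicate fun _ _ _ ↦ ⟨rfl, rfl⟩).symm
  rw [hsites, hsites, ← stackProb_crossingChain, ← stackProb_crossingChain]
  exact measureReal_mono fun ω h ↦ h.anti hI hk

lemma natCast_mul_sum_binomialWeight_sq_le_two (c W : ℕ) :
    W * (∑ i ∈ Finset.range (c + 1), binomialWeight c i *
      chainWeight false (List.replicate W (Finset.range (c + 1), 1)) i) ^ 2 ≤ 2 := by
  set S := ∑ i ∈ Finset.range (c + 1), binomialWeight c i *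
    chainWeight false (List.replicate W (Finset.range (c + 1), 1)) i with hS
  have hS0 : 0 ≤ S :=
    Finset.sum_nonneg fun i _ ↦ mul_nonneg (binomialWeight_nonneg _ _) (chainWeight_nonneg _ _ _)
  set a : ℤ := -W - 1
  have hsum := sum_stackProb_rootedChain_mul_le a (cap := fun _ ↦ c) (N := W) (le_refl 1)
    (X := Finset.Ico (0 : ℤ) W) (fun x hx x' hx' ↦ by rw [Finset.mem_Ico] at hx hx'; omega)
    (p := fun _ ↦ c) (r := fun _ ↦ c) (fun _ ↦ le_rfl) (fun _ ↦ le_rfl)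
  have hterm : ∀ x ∈ Finset.Ico (0 : ℤ) W, S ^ 2 ≤
      stackProb (rootedChain true false (departuresLE fun _ ↦ c) (immigration true a) W x c) *
      stackProb (rootedChain false false (departuresLE fun _ ↦ c) (immigration false a) W
        (x + (1 : ℕ)) c) := by
    intro x hx
    rw [Finset.mem_Ico] at hx
    rw [stackProb_rootedChain, stackProb_rootedChain,
      chainSites_eq_replicate (A := departuresLE fun _ ↦ c) (A₀ := Finset.range (c + 1))
        (I₀ := 1) fun z hz hz' ↦ ⟨rfl, ?_⟩,
      chainSites_eq_replicate (A := departuresLE fun _ ↦ c) (A₀ := Finset.range (c + 1))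
        (I₀ := 0) fun z hz hz' ↦ ⟨rfl, ?_⟩,
      ← hS, sq]
    · refine mul_le_mul_of_nonneg_left (Finset.sum_le_sum fun i _ ↦ ?_) hS0
      exact mul_le_mul_of_nonneg_left (chainWeight_false_replicate_anti zero_le_one W le_rfl)
        (binomialWeight_nonneg _ _)
    all_goals
      simp only [direction_true, direction_false] at hz hz'
      simp only [immigration]
      grind
  calc W * S ^ 2 = ∑ _ ∈ Finset.Ico (0 : ℤ) W, S ^ 2 := by simp
    _ ≤ _ := Finset.sum_le_sum hterm
    _ ≤ 2 := by norm_num at hsum ⊢; exact hsum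

lemma one_div_le_binomialWeight_of_mem_window {G r i : ℕ} (hr : 1 ≤ r)
    (hrG : 256 * r ^ 2 ≤ 2 * G) (hGr : 2 * G ≤ 1024 * r ^ 2) (hi : G - 6 * r ≤ i)
    (hi' : i < G - 4 * r) : 1 / (256 * (r : ℝ)) ≤ binomialWeight (2 * G - 1) i := by
  have hr_le : 128 * r ≤ G := by nlinarith
  have : (0 : ℝ) < r := by exact_mod_cast hr
  refine le_trans ?_ (one_div_le_binomialWeight (by omega) ?_)
  · have : √((2 * G - 1 : ℕ) : ℝ) ≤ 32 * r := by
      rw [Real.sqrt_le_left (by positivity)]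
      exact_mod_cast (by rw [mul_pow]; omega : 2 * G - 1 ≤ (32 * r) ^ 2)
    refine one_div_le_one_div_of_le ?_ (by linarith)
    exact mul_pos (by norm_num) (Real.sqrt_pos.mpr (by exact_mod_cast (by omega)))
  · rw [show ((2 * G - 1 : ℕ) : ℤ) = 2 * G - 1 by omega]
    zify at hrG
    nlinarith [sq_le_sq' (by omega : -(13 * (r : ℤ)) ≤ 2 * i - (2 * G - 1)) (by omega)]

lemma natCast_mul_chainWeight_sq_le {G r i₀ : ℕ} (W : ℕ) (hr : 1 ≤ r) (hrG : 256 * r ^ 2 ≤ 2 * G)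
    (hGr : 2 * G ≤ 1024 * r ^ 2) (hi₀ : G - 4 * r ≤ i₀) :
    W * chainWeight false (List.replicate W (Finset.range (2 * G - 1 + 1), 1)) i₀ ^ 2 ≤
      2 ^ 15 := by
  set Q := chainWeight false (List.replicate W (Finset.range (2 * G - 1 + 1), 1))
  have hsum := natCast_mul_sum_binomialWeight_sq_le_two (2 * G - 1) W
  set S := ∑ i ∈ Finset.range (2 * G - 1 + 1), binomialWeight (2 * G - 1) i * Q i
  have hQ0 : ∀ i, 0 ≤ Q i := chainWeight_nonneg _ _
  have hr_le : 128 * r ≤ G := by nlinarith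
  have : (0 : ℝ) < r := by exact_mod_cast hr
  have hbin : ∀ i ∈ Finset.Ico (G - 6 * r) (G - 4 * r),
      1 / (256 * (r : ℝ)) ≤ binomialWeight (2 * G - 1) i := fun i hi ↦ by
    rw [Finset.mem_Ico] at hi
    exact one_div_le_binomialWeight_of_mem_window hr hrG hGr hi.1 hi.2
  have hQS : Q i₀ / 128 ≤ S := calc
    Q i₀ / 128 = ∑ i ∈ Finset.Ico (G - 6 * r) (G - 4 * r), 1 / (256 * (r : ℝ)) * Q i₀ := by
        rw [Finset.sum_const, Nat.card_Ico, show G - 4 * r - (G - 6 * r) = 2 * r by omega,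
          nsmul_eq_mul]
        push_cast
        field_simp
        ring
    _ ≤ ∑ i ∈ Finset.Ico (G - 6 * r) (G - 4 * r), binomialWeight (2 * G - 1) i * Q i := by
        refine Finset.sum_le_sum fun i hi ↦ mul_le_mul (hbin i hi)
          (chainWeight_false_replicate_anti le_rfl W ?_) (hQ0 _) (binomialWeight_nonneg _ _)
        rw [Finset.mem_Ico] at hi
        omega
    _ ≤ S := by
        refine Finset.sum_le_sum_of_subset_of_nonneg (fun i hi ↦ ?_)
          fun i _ _ ↦ mul_nonneg (binomialWeight_nonneg _ _) (hQ0 _)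
        simp only [Finset.mem_Ico, Finset.mem_range] at hi ⊢
        omega
  calc W * Q i₀ ^ 2 = 2 ^ 14 * (W * (Q i₀ / 128) ^ 2) := by ring
    _ ≤ 2 ^ 14 * (W * S ^ 2) := by gcongr; exact div_nonneg (hQ0 _) (by norm_num)
    _ ≤ 2 ^ 15 := by linarith

end Persistence

section ChainSites

variable {b : Bool} {A : ℤ → Finset ℕ} {I : ℤ → ℕ}

lemma chainSites_add (N N' : ℕ) (y : ℤ) : chainSites b A I (N + N') y =
    chainSites b A I N y ++ chainSites b A I N' (y - N * direction b) := by
  induction N generalizing y with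
  | zero => simp [chainSites]
  | succ N ih =>
    rw [Nat.add_right_comm, chainSites, chainSites, ih, List.cons_append]
    congr 3
    push_cast
    ring

lemma length_chainSites (N : ℕ) (y : ℤ) : (chainSites b A I N y).length = N := by
  induction N generalizing y with
  | zero => rfl
  | succ N ih => rw [chainSites, List.length_cons, ih]

lemma roomySites_chainSites {B J N : ℕ} {y : ℤ}
    (h : ∀ z, 0 ≤ (y - z) * direction b → (y - z) * direction b < N →
      I z ≤ J ∧ ∃ q, 2 * B + 1 ≤ q ∧ A z = Finset.range (q + 1)) :
    RoomySites B J (chainSites b A I N y) := by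
  induction N generalizing y with
  | zero => simp [RoomySites, chainSites]
  | succ N ih =>
    refine List.forall_mem_cons.mpr ⟨h y (by simp) (by simp), ih fun z hz hz' ↦ h z ?_ ?_⟩ <;>
      cases b <;> simp at * <;> omega

end ChainSites

section Powers

lemma mul_pow_le_pow_sub_pow {s : ℝ} (h0 : 0 ≤ s) (h1 : s ≤ 1) (i n : ℕ) :
    n * (1 - s) * s ^ (i + n) ≤ s ^ i - s ^ (i + n) := by
  have hsum : n * s ^ n ≤ ∑ j ∈ Finset.range n, s ^ j := by
    rw [← nsmul_eq_mul, ← Finset.card_range n, ← Finset.sum_const, Finset.card_range]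
    exact Finset.sum_le_sum fun j hj ↦ pow_le_pow_of_le_one h0 h1 (Finset.mem_range.mp hj).le
  calc n * (1 - s) * s ^ (i + n) = s ^ i * (1 - s) * (n * s ^ n) := by ring
    _ ≤ s ^ i * (1 - s) * ∑ j ∈ Finset.range n, s ^ j :=
        mul_le_mul_of_nonneg_left hsum (mul_nonneg (pow_nonneg h0 i) (by linarith))
    _ = s ^ i - s ^ (i + n) := by rw [mul_assoc, mul_neg_geom_sum]; ring

lemma pow_sub_pow_le_mul {s : ℝ} (h0 : 0 ≤ s) (h1 : s ≤ 1) (i n : ℕ) :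
    s ^ i - s ^ (i + n) ≤ n * (1 - s) := by
  have hpow : s ^ n ≤ 1 := pow_le_one₀ h0 h1
  calc s ^ i - s ^ (i + n) = s ^ i * (1 - s ^ n) := by ring
    _ ≤ 1 - s ^ n := mul_le_of_le_one_left (by linarith) (pow_le_one₀ h0 h1)
    _ ≤ n * (1 - s) := by linarith [one_add_mul_sub_le_pow (a := s) (by linarith) n]

lemma one_div_le_one_sub_two_div_pow {g : ℕ} (hg : 8 ≤ g) :
    (1 / 256 : ℝ) ≤ (1 - 2 / (g : ℝ)) ^ g := by
  have hg' : (8 : ℝ) ≤ g := by exact_mod_cast hg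
  have hle : (2 : ℝ) / g ≤ 1 / 4 := by rw [div_le_div_iff₀] <;> linarith
  have h0 : (0 : ℝ) ≤ 2 / g := by positivity
  have hquarter : (1 / 4 : ℝ) ≤ (1 - 2 / (g : ℝ)) ^ (g / 4 + 1) := calc
    (1 / 4 : ℝ) ≤ 1 - ((g : ℝ) / 4 + 1) * (2 / g) := by
        rw [show ((g : ℝ) / 4 + 1) * (2 / g) = 1 / 2 + 2 / g by field_simp; ring]
        linarith
    _ ≤ 1 - ((g / 4 : ℕ) + 1) * (2 / g) := by
        gcongr
        exact_mod_cast Nat.cast_div_le (α := ℝ) (m := g) (n := 4)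
    _ = 1 + (g / 4 + 1 : ℕ) * -(2 / (g : ℝ)) := by push_cast; ring
    _ ≤ (1 - 2 / (g : ℝ)) ^ (g / 4 + 1) := by
        rw [sub_eq_add_neg]
        exact one_add_mul_le_pow (by linarith) _
  calc (1 / 256 : ℝ) = (1 / 4) ^ 4 := by norm_num
    _ ≤ ((1 - 2 / (g : ℝ)) ^ (g / 4 + 1)) ^ 4 := by gcongr
    _ = (1 - 2 / (g : ℝ)) ^ ((g / 4 + 1) * 4) := by rw [pow_mul]
    _ ≤ (1 - 2 / (g : ℝ)) ^ g := pow_le_pow_of_le_one (by linarith) (by linarith) (by omega)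

lemma one_sub_pow_le_inv_pow {ε : ℝ} {z : ℕ} (h0 : 0 ≤ ε) (h1 : ε ≤ 1) (hz : 1 ≤ z * ε) :
    (1 - ε) ^ z ≤ (2 - (1 - ε))⁻¹ ^ (z + 1) := by
  rw [show 2 - (1 - ε) = 1 + ε by ring, inv_pow, ← one_div, le_div_iff₀ (by positivity)]
  have hbernoulli := one_add_mul_le_pow (a := ε ^ 2) (by nlinarith) z
  have hsq : 0 ≤ 1 - ε ^ 2 := by nlinarith
  calc (1 - ε) ^ z * (1 + ε) ^ (z + 1) = (1 - ε ^ 2) ^ z * (1 + ε) := by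
        rw [pow_succ, ← mul_assoc, ← mul_pow]
        ring
    _ ≤ (1 - ε ^ 2) ^ z * (1 + ε ^ 2) ^ z :=
        mul_le_mul_of_nonneg_left (by nlinarith) (pow_nonneg hsq _)
    _ = (1 - ε ^ 4) ^ z := by rw [← mul_pow]; ring
    _ ≤ 1 := pow_le_one₀ (by nlinarith [pow_le_one₀ h0 h1 (n := 4)]) (by linarith [pow_nonneg h0 4])

end Powers

section LeftChain

/-- The scales of the lower bound: all local times are at most `H`, the walk has visited only
`[-ρ, ρ]`, the triple is to be produced at the level `2 G`, and `r` is of the order of `√G`, the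
fluctuation of the numbers of crossings at that level. -/
structure AdmissibleScales (H ρ G r : ℕ) : Prop where
  one_le : 1 ≤ H
  le_radius : H ≤ ρ
  radius_le : 100 * ρ ≤ G
  large : 2 ^ 20 ≤ G
  sq_le : 256 * r ^ 2 ≤ 2 * G
  le_sq : 2 * G ≤ 1024 * r ^ 2
  gap : 2 ^ 44 * H ^ 2 ≤ ρ * G

variable {H ρ G r N : ℕ}

lemma AdmissibleScales.one_le_fluctuation (hS : AdmissibleScales H ρ G r) : 1 ≤ r := by
  have := hS.large
  have := hS.le_sq
  by_contra! hr
  obtain rfl : r = 0 := by omega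
  omega

lemma AdmissibleScales.mul_fluctuation_le (hS : AdmissibleScales H ρ G r) : 128 * r ≤ G := by
  nlinarith [hS.sq_le, hS.one_le_fluctuation]

lemma pow_sub_pow_sub_le_chainWeight_append_append {B B' : ℕ} {l l₁ l₂ : List (Finset ℕ × ℕ)}
    {s K : ℝ} {Z : ℕ} (hl₁ : RoomySites B' 1 l₁) (hl₂ : RoomySites B 1 l₂)
    (hl : RoomySites B 0 l) (hB : B ≤ B') (hs0 : 0 ≤ s) (hs1 : s ≤ 1) (hK0 : 0 ≤ K) (hK1 : K ≤ 1)
    (hZ : (Z + totalImmigration l₂ + totalImmigration l₁) *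
      (1 / (l.length + 1) + 1 / (B + 1) : ℝ) ≤ 1 - K)
    (hs : ∀ z : ℕ, Z < z → s ^ z ≤ (2 - s)⁻¹ ^ (z + 1)) (z : ℕ) :
    K * (s ^ z - s ^ (B' + 1)) -
        (z + totalImmigration l₂ + totalImmigration l₁) * (1 / (l.length + 1)) ≤
      chainWeight true (l₁ ++ (l₂ ++ l)) z +
        K * (s ^ (B + 1) - s ^ (B' + 1)) * chainWeight false l₁ z := by
  have he : (0 : ℝ) ≤ 1 / (l.length + 1) := by positivity
  have hδ : 1 / (B + 1 : ℝ) ≤ 1 / (l.length + 1) + 1 / (B + 1) := le_add_of_nonneg_left he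
  have hlin : ∀ z : ℕ, 1 - (z + 0) * (1 / (l.length + 1) + 1 / (B + 1) : ℝ) ≤
      chainWeight true l z := fun z ↦ by simpa using one_sub_le_chainWeight hl z
  refine pow_sub_pow_sub_le_chainWeight_append hl₁ hB hδ (Nat.cast_nonneg _)
    (fun z ↦ ?_) hs0 hs1 hK0 he (fun z ↦ ?_) hZ hs z
  · simpa using one_sub_le_chainWeight_append hl₂ hδ le_rfl hlin z
  · have hZ₂ : (Z + 0 + totalImmigration l₂) * (1 / (l.length + 1) + 1 / (B + 1) : ℝ) ≤ 1 - K := by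
      refine le_trans (mul_le_mul_of_nonneg_right ?_ (by positivity)) hZ
      simp
    simpa using pow_sub_pow_sub_le_chainWeight_append hl₂ le_rfl hδ le_rfl hlin hs0 hs1 hK0 he
      (fun z ↦ by simpa using pow_sub_pow_sub_le_chainWeight hl hs0 hs1 hK0 hK1 z) hZ₂ hs z

lemma AdmissibleScales.add_mul_le (hS : AdmissibleScales H ρ G r) {m M : ℕ} (hm : m ≤ 4 * ρ + 1)
    (hM : G ^ 3 ≤ M) :
    (((G / 2 : ℕ) : ℝ) + m) * (1 / (M + 1) + 1 / ((G - 1 - H : ℕ) + 1)) ≤ 1 - 1 / 4 := by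
  obtain ⟨-, hHρ, hρG, hG, -, -, -⟩ := hS
  have hsub : ((G - 1 - H : ℕ) : ℝ) + 1 = G - H := by
    rw [eq_sub_iff_add_eq]
    exact_mod_cast (by omega : G - 1 - H + 1 + H = G)
  have hG' : (2 : ℝ) ^ 20 ≤ G := by exact_mod_cast hG
  have hρ' : 100 * (ρ : ℝ) ≤ G := by exact_mod_cast hρG
  have hH' : (H : ℝ) ≤ ρ := by exact_mod_cast hHρ
  have hm' : (m : ℝ) ≤ 4 * ρ + 1 := by exact_mod_cast hm
  have hhalf : ((G / 2 : ℕ) : ℝ) ≤ G / 2 := Nat.cast_div_le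
  have hM' : (1 : ℝ) / (M + 1) ≤ 0.05 / G := by
    have : G * 20 ≤ M + 1 := by nlinarith [Nat.pow_le_pow_left hG 2]
    rw [div_le_div_iff₀ (by positivity) (by linarith)]
    linarith [show (G * 20 : ℝ) ≤ M + 1 by exact_mod_cast this]
  have hB' : 1 / ((G : ℝ) - H) ≤ 1.05 / G := by
    rw [div_le_div_iff₀ (by linarith) (by linarith)]
    linarith
  calc (((G / 2 : ℕ) : ℝ) + m) * (1 / (M + 1) + 1 / ((G - 1 - H : ℕ) + 1))
      ≤ (0.56 * G) * (0.05 / G + 1.05 / G) := by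
        rw [hsub]
        have : 0 ≤ 1 / ((G : ℝ) - H) := by
          apply one_div_nonneg.mpr
          linarith
        gcongr
        linarith
    _ = 0.616 := by
        have : (G : ℝ) ≠ 0 := by linarith
        field_simp
        norm_num
    _ ≤ 1 - 1 / 4 := by norm_num

lemma div_le_pow_sub_pow {i : ℕ} (hG : 8 ≤ G) (hi : i + 3 * r ≤ G) :
    6 * (r : ℝ) / (256 * G) ≤ (1 - 2 / (G : ℝ)) ^ i - (1 - 2 / (G : ℝ)) ^ G := by
  have hG' : (8 : ℝ) ≤ G := by exact_mod_cast hG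
  have hle : (2 : ℝ) / G ≤ 1 := by rw [div_le_one] <;> linarith
  have hdiff := mul_pow_le_pow_sub_pow (s := 1 - 2 / (G : ℝ)) (by linarith)
    (by linarith [show (0 : ℝ) ≤ 2 / G by positivity]) i (G - i)
  rw [show i + (G - i) = G by omega, sub_sub_cancel] at hdiff
  calc 6 * (r : ℝ) / (256 * G) = (3 * r : ℕ) * (2 / G) * (1 / 256) := by
        push_cast
        field_simp
        ring
    _ ≤ (G - i : ℕ) * (2 / G) * (1 - 2 / (G : ℝ)) ^ G := by
        gcongr
        · omega
        · exact one_div_le_one_sub_two_div_pow hG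
    _ ≤ _ := hdiff

lemma AdmissibleScales.mul_le_div (hS : AdmissibleScales H ρ G r) (hN : ρ ≤ N) {Q : ℝ}
    (hQ : N * Q ^ 2 ≤ 2 ^ 15) : H * Q ≤ r / 2 ^ 10 := by
  refine le_of_sq_le_sq ?_ (by positivity)
  have hgap : (2 : ℝ) ^ 44 * H ^ 2 ≤ ρ * G := by exact_mod_cast hS.gap
  have hGr : (2 * G : ℝ) ≤ 1024 * r ^ 2 := by exact_mod_cast hS.le_sq
  have hρQ : (ρ : ℝ) * Q ^ 2 ≤ 2 ^ 15 := le_trans (by gcongr) hQ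
  have hsq : (2 : ℝ) ^ 44 * (H * Q) ^ 2 ≤ 2 ^ 24 * r ^ 2 := calc
    (2 : ℝ) ^ 44 * (H * Q) ^ 2 = 2 ^ 44 * H ^ 2 * Q ^ 2 := by ring
    _ ≤ ρ * G * Q ^ 2 := by gcongr
    _ = ρ * Q ^ 2 * G := by ring
    _ ≤ 2 ^ 15 * (512 * r ^ 2) := by gcongr; linarith
    _ = 2 ^ 24 * r ^ 2 := by ring
  rw [div_pow, le_div_iff₀ (by positivity)]
  linarith

lemma AdmissibleScales.pow_sub_pow_mul_le (hS : AdmissibleScales H ρ G r) (hN : ρ ≤ N) {Q : ℝ}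
    (hQ0 : 0 ≤ Q) (hQ : N * Q ^ 2 ≤ 2 ^ 15) :
    ((1 - 2 / (G : ℝ)) ^ (G - 1 - H + 1) - (1 - 2 / (G : ℝ)) ^ G) * Q ≤
      2 * (r / (1024 * G)) := by
  obtain ⟨-, hHρ, hρG, hG, -, -, -⟩ := id hS
  have hG' : (8 : ℝ) ≤ G := by exact_mod_cast (by omega : 8 ≤ G)
  have hle : (2 : ℝ) / G ≤ 1 := by rw [div_le_one] <;> linarith
  have hdiff := pow_sub_pow_le_mul (s := 1 - 2 / (G : ℝ)) (by linarith)
    (by linarith [show (0 : ℝ) ≤ 2 / G by positivity]) (G - 1 - H + 1) H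
  rw [show G - 1 - H + 1 + H = G by omega, sub_sub_cancel] at hdiff
  calc _ ≤ H * (2 / (G : ℝ)) * Q := mul_le_mul_of_nonneg_right hdiff hQ0
    _ = H * Q * (2 / G) := by ring
    _ ≤ r / 2 ^ 10 * (2 / G) := by gcongr; exact hS.mul_le_div hN hQ
    _ = 2 * (r / (1024 * G)) := by
        field_simp
        norm_num

lemma AdmissibleScales.add_div_le (hS : AdmissibleScales H ρ G r) {m i M : ℕ}
    (hm : m ≤ 4 * ρ + 1) (hi : i ≤ G) (hM : G ^ 3 ≤ M) :
    ((i : ℝ) + m) * (1 / (M + 1)) ≤ r / (1024 * G) := by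
  obtain ⟨-, -, hρG, hG, -, -, -⟩ := id hS
  have : (0 : ℝ) < G := by exact_mod_cast (by omega : 0 < G)
  have hmul : (i + m) * (1024 * G) ≤ M + 1 := by
    have : i + m ≤ 2 * G := by omega
    calc (i + m) * (1024 * G) ≤ 2 * G * (1024 * G) := by gcongr
      _ = 2048 * G ^ 2 := by ring
      _ ≤ G * G ^ 2 := by gcongr; omega
      _ ≤ M + 1 := by linarith
  rw [mul_one_div, div_le_div_iff₀ (by positivity) (by positivity)]
  calc ((i : ℝ) + m) * (1024 * G) ≤ M + 1 := by exact_mod_cast hmul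
    _ ≤ r * (M + 1) := le_mul_of_one_le_left (by positivity)
      (by exact_mod_cast hS.one_le_fluctuation)

lemma AdmissibleScales.div_le_chainWeight_left (hS : AdmissibleScales H ρ G r) (hN : ρ ≤ N)
    (hN' : N ≤ 2 * ρ) {l l₂ : List (Finset ℕ × ℕ)} (hl : RoomySites (G - 1 - H) 0 l)
    (hlen : G ^ 3 ≤ l.length) (hl₂ : RoomySites (G - 1 - H) 1 l₂)
    (hlen₂ : l₂.length ≤ 2 * ρ + 1) {i : ℕ} (hi : G - 4 * r ≤ i) (hi' : i < G - 3 * r) :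
    (r : ℝ) / (1024 * G) ≤
      chainWeight true (List.replicate N (Finset.range (2 * G - 1 + 1), 1) ++ (l₂ ++ l)) i := by
  set l₁ := List.replicate N (Finset.range (2 * G - 1 + 1), 1)
  have hG : 8 ≤ G := le_trans (by norm_num) hS.large
  have hl₁ : RoomySites (G - 1) 1 l₁ := fun c hc ↦ by
    rw [List.eq_of_mem_replicate hc]
    exact ⟨le_rfl, 2 * G - 1, by omega, rfl⟩
  have himm : totalImmigration l₂ + totalImmigration l₁ ≤ 4 * ρ + 1 := by
    have h₁ := hl₁.totalImmigration_le
    have h₂ := hl₂.totalImmigration_le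
    rw [List.length_replicate] at h₁
    omega
  have hle : (2 : ℝ) / G ≤ 1 := by
    rw [div_le_one (by positivity)]
    exact_mod_cast (by omega : 2 ≤ G)
  have h0 : (0 : ℝ) ≤ 2 / G := by positivity
  have hchain := pow_sub_pow_sub_le_chainWeight_append_append hl₁ hl₂ hl (by omega)
    (s := 1 - 2 / (G : ℝ)) (K := 1 / 4) (Z := G / 2) (by linarith) (by linarith) (by norm_num)
    (by norm_num) (by simpa [add_assoc] using hS.add_mul_le himm hlen)
    (fun z hz ↦ one_sub_pow_le_inv_pow h0 hle ?_) i
  · have hmain := div_le_pow_sub_pow hG (show i + 3 * r ≤ G by omega)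
    have hcorrection := hS.pow_sub_pow_mul_le hN (chainWeight_nonneg false l₁ i)
      (natCast_mul_chainWeight_sq_le N hS.one_le_fluctuation hS.sq_le hS.le_sq hi)
    have herror := hS.add_div_le himm (show i ≤ G by omega) hlen
    rw [show 6 * (r : ℝ) / (256 * G) = 24 * (r / (1024 * G)) by field_simp; ring] at hmain
    rw [Nat.cast_add, ← add_assoc] at herror
    rw [show G - 1 + 1 = G by omega] at hchain
    linarith [show 0 ≤ (r : ℝ) / (1024 * G) by positivity]
  · rw [mul_div_assoc', le_div_iff₀ (by positivity)]
    exact_mod_cast (by omega : 1 * G ≤ z * 2)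

end LeftChain

section RightChain

variable {H ρ G r : ℕ}

lemma AdmissibleScales.one_div_le_negBinomialWeight (hS : AdmissibleScales H ρ G r) {K d : ℕ}
    (hGd : G ≤ d) (hdG : d ≤ 2 * G) (hKd : 2 * K ≤ d + 1 + 8 * r) (hdK : d + 1 ≤ 2 * K + 8 * r) :
    1 / (16 * √(2 * G)) ≤ negBinomialWeight K d := by
  have hG := hS.large
  have hrG := hS.mul_fluctuation_le
  have hr : (256 * r ^ 2 : ℤ) ≤ 2 * G := by exact_mod_cast hS.sq_le
  have hd0 : 0 < √(d : ℝ) := Real.sqrt_pos.mpr (by exact_mod_cast (by omega : 0 < d))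
  calc (1 : ℝ) / (16 * √(2 * G)) ≤ 1 / (16 * √d) := by
        gcongr
        exact_mod_cast hdG
    _ ≤ negBinomialWeight K d :=
        FavoriteSites.one_div_le_negBinomialWeight (by omega) (by omega) <|
          (sq_le_sq' (b := 8 * (r : ℤ)) (by omega) (by omega)).trans (by linarith)

lemma AdmissibleScales.one_div_le_binomialWeight (hS : AdmissibleScales H ρ G r) {n k : ℕ}
    (hGn : G ≤ n) (hnG : n ≤ 2 * G) (hkn : 2 * k ≤ n + 8 * r) (hnk : n ≤ 2 * k + 8 * r) :
    1 / (8 * √(2 * G)) ≤ binomialWeight n k := by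
  have hG := hS.large
  have hr : (256 * r ^ 2 : ℤ) ≤ 2 * G := by exact_mod_cast hS.sq_le
  have hn0 : 0 < √(n : ℝ) := Real.sqrt_pos.mpr (by exact_mod_cast (by omega : 0 < n))
  calc (1 : ℝ) / (8 * √(2 * G)) ≤ 1 / (8 * √n) := by
        gcongr
        exact_mod_cast hnG
    _ ≤ binomialWeight n k := FavoriteSites.one_div_le_binomialWeight (by omega) <|
        (sq_le_sq' (b := 8 * (r : ℤ)) (by omega) (by omega)).trans (by linarith)

lemma AdmissibleScales.div_le_chainWeight (hS : AdmissibleScales H ρ G r)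
    {l : List (Finset ℕ × ℕ)} (hl : RoomySites (G - 1) 0 l) (hlen : G ^ 3 ≤ l.length) {z : ℕ}
    (hz : z + r ≤ G) : (r : ℝ) / (2 * G) ≤ chainWeight true l z := by
  have hG0 : (0 : ℝ) < G := by
    have := hS.large
    exact_mod_cast (by omega : 0 < G)
  have hr : (1 : ℝ) ≤ r := by exact_mod_cast hS.one_le_fluctuation
  have hz' : (z + r : ℝ) ≤ G := by exact_mod_cast hz
  have hlen' : (G : ℝ) ^ 3 ≤ l.length := by exact_mod_cast hlen
  have hlength : (z : ℝ) * (1 / (l.length + 1)) ≤ r / (2 * G) := calc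
    (z : ℝ) * (1 / (l.length + 1)) ≤ G * (1 / (G : ℝ) ^ 3) := by gcongr <;> linarith
    _ = 1 / (G * G) := by field_simp
    _ ≤ r / (2 * G) := by
        have : (2 : ℝ) ≤ G := by exact_mod_cast (by norm_num : 2 ≤ 2 ^ 20).trans hS.large
        gcongr
  have hroom : (z : ℝ) * (1 / ((G - 1 : ℕ) + 1)) ≤ 1 - 2 * (r / (2 * G)) := by
    rw [show ((G - 1 : ℕ) : ℝ) + 1 = G by
      exact_mod_cast Nat.sub_add_cancel (by exact_mod_cast hG0), mul_one_div, div_le_iff₀ hG0]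
    field_simp
    linarith
  refine le_trans ?_ (one_sub_le_chainWeight hl z)
  rw [mul_add]
  linarith

lemma card_mul_le_sum {ι : Type*} {S T : Finset ι} {f : ι → ℝ} {c : ℝ} (hTS : T ⊆ S)
    (h0 : ∀ i ∈ S, 0 ≤ f i) (h : ∀ i ∈ T, c ≤ f i) : T.card * c ≤ ∑ i ∈ S, f i := by
  rw [← nsmul_eq_mul]
  exact (Finset.card_nsmul_le_sum _ _ _ h).trans
    (Finset.sum_le_sum_of_subset_of_nonneg hTS fun i hi _ ↦ h0 i hi)

lemma AdmissibleScales.le_chainWeight_right (hS : AdmissibleScales H ρ G r)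
    {l : List (Finset ℕ × ℕ)} (hl : RoomySites (G - 1) 0 l) (hlen : G ^ 3 ≤ l.length) {k : ℕ}
    (hk : G + 3 * r ≤ k) (hk' : k < G + 4 * r) :
    r * ((1 / (16 * √(2 * G))) ^ 3 * (r / (2 * G))) ≤
      chainWeight true (({2 * G}, 0) :: (Finset.range (2 * G - 1 + 1), 0) :: ({2 * G}, 0) :: l)
        k := by
  have hrG := hS.mul_fluctuation_le
  have hr := hS.one_le_fluctuation
  set c : ℝ := 1 / (16 * √(2 * G))
  have hc0 : 0 ≤ c := by positivity
  have hfirst : c ≤ negBinomialWeight k (2 * G) :=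
    hS.one_div_le_negBinomialWeight (by omega) le_rfl (by omega) (by omega)
  have hterm : ∀ d ∈ Finset.Ioc (2 * G - k + G + r) (2 * G - k + G + 2 * r),
      c * (c * (r / (2 * G))) ≤ negBinomialWeight (2 * G - k) d *
        (negBinomialWeight (d - (2 * G - k)) (2 * G) *
          chainWeight true l (2 * G - (d - (2 * G - k)))) := fun d hd ↦ by
    rw [Finset.mem_Ioc] at hd
    gcongr
    · exact negBinomialWeight_nonneg _ _
    · exact hS.one_div_le_negBinomialWeight (by omega) (by omega) (by omega) (by omega)
    · exact negBinomialWeight_nonneg _ _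
    · exact hS.one_div_le_negBinomialWeight (by omega) le_rfl (by omega) (by omega)
    · exact hS.div_le_chainWeight hl hlen (by omega)
  have hsum := card_mul_le_sum (S := Finset.range (2 * G - 1 + 1))
    (fun d hd ↦ by simp only [Finset.mem_Ioc, Finset.mem_range] at hd ⊢; omega)
    (fun d _ ↦ mul_nonneg (negBinomialWeight_nonneg _ _)
      (mul_nonneg (negBinomialWeight_nonneg _ _) (chainWeight_nonneg true l _))) hterm
  rw [Nat.card_Ioc, show 2 * G - k + G + 2 * r - (2 * G - k + G + r) = r by omega] at hsum
  simp only [chainWeight, Finset.sum_singleton, add_zero]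
  calc r * (c ^ 3 * (r / (2 * G))) = c * (r * (c * (c * (r / (2 * G))))) := by ring
    _ ≤ _ := mul_le_mul hfirst hsum (by positivity) (hc0.trans hfirst)

end RightChain

section LowerBound

variable {u : WalkState} {H ρ G r N : ℕ}

/-- A state of moderate height `H`, in which only sites of `[-ρ, ρ]` have been visited. -/
structure WalkState.Confined (u : WalkState) (H ρ : ℕ) : Prop where
  localTime_le : ∀ y, u.localTime y ≤ H
  localTime_eq_zero : ∀ y : ℤ, y < -ρ ∨ ρ < y → u.localTime y = 0
  neg_le_pos : -(ρ : ℤ) ≤ u.pos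
  pos_le : u.pos ≤ ρ

lemma WalkState.Confined.departuresBelow_eq (hu : u.Confined H ρ) (h : ℕ) {y : ℤ}
    (hy : y < -ρ ∨ ρ < y) : departuresBelow u h y = h - 1 := by
  have := hu.neg_le_pos
  have := hu.pos_le
  rw [departuresBelow, hu.localTime_eq_zero y hy, if_neg (by omega)]
  rfl

lemma WalkState.Confined.roomySites (hu : u.Confined H ρ) (hHG : H < G) (b : Bool) (M : ℕ)
    (y : ℤ) : RoomySites (G - 1 - H) 1
      (chainSites b (departuresLE (departuresBelow u (2 * G))) (immigration b u.pos) M y) :=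
  roomySites_chainSites fun z _ _ ↦ by
    refine ⟨by unfold immigration; grind, _, ?_, rfl⟩
    have := hu.localTime_le z
    unfold departuresBelow
    omega

lemma WalkState.Confined.roomySites_of_lt (hu : u.Confined H ρ) (hG : 1 ≤ G) {b : Bool}
    (M : ℕ) {y : ℤ} (hy : ρ < -(y * direction b)) : RoomySites (G - 1) 0
      (chainSites b (departuresLE (departuresBelow u (2 * G))) (immigration b u.pos) M y) :=
  roomySites_chainSites fun z hz _ ↦ by
    have := hu.neg_le_pos
    have := hu.pos_le
    refine ⟨?_, 2 * G - 1, by omega, ?_⟩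
    · cases b <;> simp [immigration] at * <;> omega
    · rw [departuresLE, hu.departuresBelow_eq]
      cases b <;> simp at * <;> omega

lemma WalkState.Confined.div_le_chainWeight_left (hu : u.Confined H ρ)
    (hS : AdmissibleScales H ρ G r) (hN : ρ ≤ N) (hN' : N ≤ 2 * ρ) {x : ℤ} (hx : x = N + ρ + 1)
    {i : ℕ} (hi : G - 4 * r ≤ i) (hi' : i < G - 3 * r) :
    (r : ℝ) / (1024 * G) ≤ chainWeight true (chainSites true (tripleDepartures u (2 * G) x)
      (immigration true u.pos) (N + (2 * ρ + 1 + G ^ 3)) (x - 1)) i := by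
  obtain ⟨-, hHρ, hρG, hG, -, -, -⟩ := id hS
  have hpos := hu.pos_le
  rw [chainSites_true_tripleDepartures u _ _ _ (by omega), chainSites_add, chainSites_add,
    chainSites_eq_replicate (N := N) (A₀ := Finset.range (2 * G - 1 + 1)) (I₀ := 1)]
  · refine hS.div_le_chainWeight_left hN hN' ?_ (length_chainSites _ _).ge
      (hu.roomySites (by omega) true _ _) (length_chainSites _ _).le hi hi'
    refine (hu.roomySites_of_lt (by omega) _ ?_).mono (Nat.sub_le _ _) le_rfl
    simp only [direction_true]
    push_cast
    omega
  · intro z hz hz'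
    simp only [direction_true, mul_one] at hz hz'
    rw [departuresLE, hu.departuresBelow_eq _ (by omega), immigration, if_pos rfl,
      if_pos (by omega)]
    exact ⟨rfl, rfl⟩

lemma WalkState.Confined.le_chainWeight_right (hu : u.Confined H ρ)
    (hS : AdmissibleScales H ρ G r) {x : ℤ} (hx : ρ < x) {k : ℕ} (hk : G + 3 * r ≤ k)
    (hk' : k < G + 4 * r) : r * ((1 / (16 * √(2 * G))) ^ 3 * (r / (2 * G))) ≤
      chainWeight true (chainSites false (tripleDepartures u (2 * G) x) (immigration false u.pos)
        (G ^ 3 + 3) (x + 1)) k := by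
  have hG := hS.large
  have hpos := hu.pos_le
  have himm (z : ℤ) (hz : x < z) : immigration false u.pos z = 0 := by
    simp [immigration]
    omega
  rw [chainSites_false_tripleDepartures, departuresLE, hu.departuresBelow_eq _ (by omega),
    hu.departuresBelow_eq _ (by omega), hu.departuresBelow_eq _ (by omega), himm _ (by omega),
    himm _ (by omega), himm _ (by omega)]
  have hright := hS.le_chainWeight_right
    (hu.roomySites_of_lt (by omega) (b := false) (G ^ 3) (y := x + 4)
      (by simp only [direction_false]; omega)) (length_chainSites _ _).ge hk hk'
  rwa [Nat.sub_add_cancel (by omega)] at hright ⊢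

lemma AdmissibleScales.one_div_le_mul (hS : AdmissibleScales H ρ G r) :
    1 / (2 ^ 46 * (G : ℝ) ^ 2) ≤ r * (1 / (8 * √(2 * G)) * (r / (1024 * G) *
      (r * ((1 / (16 * √(2 * G))) ^ 3 * (r / (2 * G)))))) := by
  have hG : (0 : ℝ) < G := by exact_mod_cast (by norm_num : 0 < 2 ^ 20).trans_le hS.large
  have hsqrt : √(2 * G : ℝ) ^ 4 = (2 * G) ^ 2 := by
    rw [show 4 = 2 * 2 by norm_num, pow_mul, Real.sq_sqrt (by positivity)]
  have hr : (2 * G : ℝ) ^ 2 ≤ (1024 * r ^ 2) ^ 2 :=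
    pow_le_pow_left₀ (by positivity) (by exact_mod_cast hS.le_sq) 2
  calc 1 / (2 ^ 46 * (G : ℝ) ^ 2) ≤ r ^ 4 / (2 ^ 26 * G ^ 2 * (2 * G) ^ 2) := by
        rw [div_le_div_iff₀ (by positivity) (by positivity)]
        nlinarith [mul_le_mul_of_nonneg_left hr (sq_nonneg (G : ℝ))]
    _ = _ := by
        rw [← hsqrt]
        field_simp
        ring

lemma WalkState.Confined.one_div_le_coinFlips_hitsTriple (hu : u.Confined H ρ)
    (hS : AdmissibleScales H ρ G r) (hN : ρ ≤ N) (hN' : N ≤ 2 * ρ) :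
    1 / (2 ^ 46 * (G : ℝ) ^ 2) ≤ (coinFlips ℕ).real (u.hitsTriple (N + ρ + 1) (2 * G)) := by
  obtain ⟨-, hHρ, hρG, hG, -, -, -⟩ := id hS
  have hrG := hS.mul_fluctuation_le
  have hneg := hu.neg_le_pos
  have hpos := hu.pos_le
  set x : ℤ := N + ρ + 1
  have : (0 : ℤ) ≤ G ^ 3 := by positivity
  let M (b : Bool) : ℕ := if b then N + (2 * ρ + 1 + G ^ 3) else G ^ 3 + 3
  have hsub := rootedChain_subset_readArrows_hitsTriple (N := M)
    (fun y ↦ (hu.localTime_le y).trans_lt (by omega : H < 2 * G)) (x := x)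
    (Bool.forall_bool.mpr ⟨by simp [M]; omega, by simp [M]; omega⟩) (by simp [M])
  have hprob := stackProb_rootedChain_inter (fun _ ↦ true) (fun _ ↦ tripleDepartures u (2 * G) x)
    (fun b ↦ immigration b u.pos) M x (departuresBelow u (2 * G) x)
  rw [coinFlips_real_eq_stacks u.pos (WalkState.measurableSet_hitsTriple u x _)]
  refine le_trans (hprob.ge.trans' ?_) (measureReal_mono hsub)
  rw [hu.departuresBelow_eq _ (Or.inr (by omega))]
  refine hS.one_div_le_mul.trans ?_
  have hcard : (Finset.Ico (G - 4 * r) (G - 3 * r)).card = r := by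
    rw [Nat.card_Ico]
    omega
  nth_rw 1 [← hcard]
  refine card_mul_le_sum (fun i hi ↦ ?_) (fun i _ ↦ mul_nonneg (binomialWeight_nonneg _ _)
    (mul_nonneg (chainWeight_nonneg _ _ _) (chainWeight_nonneg _ _ _))) fun i hi ↦ ?_
  · rw [Finset.mem_Ico] at hi
    rw [Finset.mem_range]
    omega
  · rw [Finset.mem_Ico] at hi
    gcongr
    · exact binomialWeight_nonneg _ _
    · exact hS.one_div_le_binomialWeight (by omega) (by omega) (by omega) (by omega)
    · exact chainWeight_nonneg _ _ _
    · exact hu.div_le_chainWeight_left hS hN hN' rfl hi.1 hi.2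
    · exact hu.le_chainWeight_right hS (by omega) (by omega) (by omega)

end LowerBound

lemma hasSum_measureReal_inter {Ω : Type*} [MeasurableSpace Ω] (ν : Measure Ω)
    [IsFiniteMeasure ν] {U : ℕ → Set Ω} (hU : ∀ t, MeasurableSet (U t))
    (hd : Pairwise (Function.onFun Disjoint U)) {E : Set Ω} (hE : MeasurableSet E) :
    HasSum (fun t ↦ ν.real (U t ∩ E)) (ν.real ((⋃ t, U t) ∩ E)) := by
  have hunion := measure_iUnion (μ := ν)
    (fun i j hij ↦ (hd hij).mono Set.inter_subset_left Set.inter_subset_left)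
    fun t ↦ (hU t).inter hE
  rw [Set.iUnion_inter, Measure.real, hunion, ENNReal.tsum_toReal_eq fun _ ↦ measure_ne_top _ _]
  exact ENNReal.hasSum_toReal (hunion ▸ measure_ne_top ν _)

section FirstTime

namespace WalkState

variable (u : WalkState) (P : WalkState → Prop)

/-- The flips along which the walk from `u` has the property `P` for the first time at `t`. -/
def firstTime (t : ℕ) : Set (ℕ → Bool) := {s | P (u.run s t) ∧ ∀ k < t, ¬ P (u.run s k)}

lemma dependsOn_firstTime (t : ℕ) : DependsOn (· ∈ u.firstTime P t) (Set.Iio t) := by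
  intro s s' h
  have hrun (k : ℕ) (hk : k ≤ t) : u.run s k = u.run s' k :=
    u.run_congr fun i hi ↦ h i (hi.trans_le hk)
  simp only [firstTime, Set.mem_ofPred_eq, hrun t le_rfl]
  exact congrArg _ (propext <| forall₂_congr fun k hk ↦ by rw [hrun k hk.le])

lemma measurableSet_firstTime (t : ℕ) : MeasurableSet (u.firstTime P t) :=
  measurableSet_of_dependsOn_finite (Set.finite_Iio t) (u.dependsOn_firstTime P t)

lemma pairwise_disjoint_firstTime : Pairwise (Function.onFun Disjoint (u.firstTime P)) :=
  fun t t' hne ↦ Set.disjoint_left.mpr fun _ hs hs' ↦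
    hne.lt_or_gt.elim (fun hlt ↦ hs'.2 t hlt hs.1) fun hlt ↦ hs.2 t' hlt hs'.1

lemma iUnion_firstTime : ⋃ t, u.firstTime P t = {s | ∃ k, P (u.run s k)} := by
  classical
  ext s
  simp only [firstTime, Set.mem_iUnion, Set.mem_ofPred_eq]
  exact ⟨fun ⟨t, ht, _⟩ ↦ ⟨t, ht⟩,
    fun h ↦ ⟨Nat.find h, Nat.find_spec h, fun _ hk ↦ Nat.find_min h hk⟩⟩

/- Decompose according to the first time at which `P` holds and restart the walk there. -/
lemma sum_coinFlips_real_le_mul {J : Type*} (F : Finset J) {E : J → Set (ℕ → Bool)}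
    (hE : ∀ j ∈ F, MeasurableSet (E j)) (hEP : ∀ j ∈ F, E j ⊆ {s | ∃ k, P (u.run s k)}) {C : ℝ}
    (h : ∀ t, ∀ s ∈ u.firstTime P t,
      ∑ j ∈ F, (coinFlips ℕ).real {s' | splice t s s' ∈ E j} ≤ C) :
    ∑ j ∈ F, (coinFlips ℕ).real (E j) ≤ C * (coinFlips ℕ).real {s | ∃ k, P (u.run s k)} := by
  have hsum {A : Set (ℕ → Bool)} (hA : MeasurableSet A) (hAP : A ⊆ {s | ∃ k, P (u.run s k)}) :
      HasSum (fun t ↦ (coinFlips ℕ).real (u.firstTime P t ∩ A)) ((coinFlips ℕ).real A) := by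
    have := hasSum_measureReal_inter (coinFlips ℕ) (u.measurableSet_firstTime P)
      (u.pairwise_disjoint_firstTime P) hA
    rwa [iUnion_firstTime, Set.inter_eq_right.mpr hAP] at this
  have htotal := hasSum_measureReal_inter (coinFlips ℕ) (u.measurableSet_firstTime P)
    (u.pairwise_disjoint_firstTime P) MeasurableSet.univ
  simp only [Set.inter_univ, iUnion_firstTime] at htotal
  exact hasSum_le (fun t ↦ sum_coinFlips_real_inter_le F (u.dependsOn_firstTime P t) hE (h t))
    (hasSum_sum fun j hj ↦ hsum (hE j hj) (hEP j hj)) (htotal.mul_left C)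

end WalkState

end FirstTime

section SecondMoment

lemma sum_Ico_inv_sub_le {m a : ℕ} (h : m ≤ a) :
    ∑ g ∈ Finset.Ico m (2 * m), ((g - a : ℕ) : ℝ)⁻¹ ≤ 1 + Real.log m := by
  calc ∑ g ∈ Finset.Ico m (2 * m), ((g - a : ℕ) : ℝ)⁻¹
      = ∑ g ∈ Finset.Ico (a + 1) (2 * m), ((g - a : ℕ) : ℝ)⁻¹ := by
        refine (Finset.sum_subset (Finset.Ico_subset_Ico_left (by omega)) fun g _ hg ↦ ?_).symm
        rw [Nat.sub_eq_zero_of_le (by simp_all), Nat.cast_zero, inv_zero]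
    _ = ∑ j ∈ Finset.range (2 * m - (a + 1)), ((j + 1 : ℕ) : ℝ)⁻¹ := by
        rw [Finset.sum_Ico_eq_sum_range]
        exact Finset.sum_congr rfl fun j _ ↦ by rw [show a + 1 + j - a = j + 1 by omega]
    _ ≤ ∑ j ∈ Finset.range m, ((j + 1 : ℕ) : ℝ)⁻¹ :=
        Finset.sum_le_sum_of_subset_of_nonneg (Finset.range_subset_range.mpr (by omega))
          fun j _ _ ↦ by positivity
    _ = (harmonic m : ℝ) := by simp [harmonic]
    _ ≤ 1 + Real.log m := harmonic_le_one_add_log m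

lemma WalkState.IsFavTriple.sum_coinFlips_hitsTriple_le {u : WalkState} {x₀ : ℤ} {h₀ : ℕ}
    (hu : u.IsFavTriple x₀ h₀) (h : ℕ) (X : Finset ℤ) :
    ∑ x ∈ X, (coinFlips ℕ).real (u.hitsTriple x h) ≤
      (if h = h₀ then 1 else 0) + 8 / ((h - h₀ : ℕ) : ℝ) := by
  obtain hlt | rfl | hgt := lt_trichotomy h h₀
  · have hempty (x : ℤ) : u.hitsTriple x h = ∅ :=
      Set.eq_empty_of_forall_notMem fun s ⟨_, hs⟩ ↦ hlt.not_ge (hu.le_of_run hs)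
    simp only [hempty, measureReal_empty, Finset.sum_const_zero]
    positivity
  · have hempty (x : ℤ) (hx : x ≠ x₀) : u.hitsTriple x h = ∅ :=
      Set.eq_empty_of_forall_notMem fun s ⟨_, hs⟩ ↦ hx (hu.eq_of_run hs).symm
    rw [if_pos rfl, Nat.sub_self, Nat.cast_zero, div_zero, add_zero]
    refine le_trans (Finset.sum_le_sum (g := fun x ↦ if x = x₀ then (1 : ℝ) else 0)
      fun x _ ↦ ?_) ?_
    · split_ifs with hx
      · exact measureReal_le_one
      · rw [hempty x hx, measureReal_empty]
    · rw [Finset.sum_ite_eq']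
      split_ifs <;> norm_num
  · rw [if_neg hgt.ne', zero_add]
    exact FavoriteSites.sum_coinFlips_hitsTriple_le (by omega)
      (fun y ↦ by have := hu.localTime_le y; omega) X

/-- The state has a favorite triple `{x, x + 1, x + 3}` of height `2 g` with
`x ∈ [2 ρ + 1, 3 ρ]` and `g ∈ [m, 2 m)`. -/
def WalkState.HasFavTripleIn (u : WalkState) (ρ m : ℕ) : Prop :=
  ∃ N ∈ Finset.Ico ρ (2 * ρ), ∃ g ∈ Finset.Ico m (2 * m), u.IsFavTriple (N + ρ + 1) (2 * g)

variable {u : WalkState} {H ρ m : ℕ}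

lemma splice_mem_hitsTriple {t : ℕ} {s s' : ℕ → Bool}
    (hs : s ∈ u.firstTime (fun v ↦ v.HasFavTripleIn ρ m) t) {N g : ℕ}
    (hN : N ∈ Finset.Ico ρ (2 * ρ)) (hg : g ∈ Finset.Ico m (2 * m))
    (hs' : splice t s s' ∈ u.hitsTriple (N + ρ + 1) (2 * g)) :
    s' ∈ (u.run s t).hitsTriple (N + ρ + 1) (2 * g) := by
  obtain ⟨k, hk⟩ := hs'
  obtain hkt | hkt := lt_or_ge k t
  · refine absurd ⟨N, hN, g, hg, ?_⟩ (hs.2 k hkt)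
    rwa [u.run_congr fun i hi ↦ (splice_of_lt (hi.trans hkt) s s').symm]
  · obtain ⟨j, rfl⟩ := Nat.exists_eq_add_of_le hkt
    exact ⟨j, by rwa [← u.run_splice_add]⟩

lemma sum_coinFlips_splice_hitsTriple_le {t : ℕ} {s : ℕ → Bool}
    (hs : s ∈ u.firstTime (fun v ↦ v.HasFavTripleIn ρ m) t) :
    ∑ j ∈ Finset.Ico m (2 * m) ×ˢ Finset.Ico ρ (2 * ρ), (coinFlips ℕ).real
      {s' | splice t s s' ∈ u.hitsTriple (j.2 + ρ + 1) (2 * j.1)} ≤ 5 + 4 * Real.log m := by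
  obtain ⟨N₀, -, g₀, hg₀, htriple⟩ := hs.1
  let X := (Finset.Ico ρ (2 * ρ)).image fun N : ℕ ↦ (N : ℤ) + ρ + 1
  rw [Finset.sum_product]
  calc _ ≤ ∑ g ∈ Finset.Ico m (2 * m),
        ∑ x ∈ X, (coinFlips ℕ).real ((u.run s t).hitsTriple x (2 * g)) := by
        refine Finset.sum_le_sum fun g hg ↦ ?_
        rw [Finset.sum_image fun _ _ _ _ h ↦ by simpa using h]
        exact Finset.sum_le_sum fun N hN ↦
          measureReal_mono fun s' hs' ↦ splice_mem_hitsTriple hs hN hg hs'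
    _ ≤ ∑ g ∈ Finset.Ico m (2 * m), ((if g = g₀ then 1 else 0) + 4 * ((g - g₀ : ℕ) : ℝ)⁻¹) := by
        refine Finset.sum_le_sum fun g _ ↦
          (htriple.sum_coinFlips_hitsTriple_le (2 * g) X).trans_eq ?_
        rw [← Nat.mul_sub, Nat.cast_mul, ← div_div, ← div_eq_mul_inv]
        simp only [mul_right_inj' two_ne_zero]
        norm_num
    _ ≤ 5 + 4 * Real.log m := by
        rw [Finset.sum_add_distrib, Finset.sum_ite_eq', if_pos hg₀, ← Finset.mul_sum]
        linarith [sum_Ico_inv_sub_le (Finset.mem_Ico.mp hg₀).1]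

lemma exists_admissibleScales {g : ℕ} (hH : 1 ≤ H) (hHρ : H ≤ ρ) (hρ : 100 * ρ ≤ g)
    (hg : 2 ^ 20 ≤ g) (hgap : 2 ^ 44 * H ^ 2 ≤ ρ * g) : ∃ r, AdmissibleScales H ρ g r := by
  have hle := Nat.sqrt_le' (g / 128)
  have hlt : g / 128 < (Nat.sqrt (g / 128) + 1) ^ 2 := Nat.lt_succ_sqrt' _
  have hr : 1 ≤ Nat.sqrt (g / 128) := by
    rw [Nat.le_sqrt']
    omega
  have hsq : (Nat.sqrt (g / 128) + 1) ^ 2 ≤ 4 * Nat.sqrt (g / 128) ^ 2 := by nlinarith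
  exact ⟨Nat.sqrt (g / 128), hH, hHρ, hρ, hg, by omega, by omega, hgap⟩

lemma WalkState.Confined.le_sum_coinFlips_hitsTriple (hu : u.Confined H ρ) (hH : 1 ≤ H)
    (hHρ : H ≤ ρ) (hρ : 100 * ρ ≤ m) (hm : 2 ^ 20 ≤ m) (hgap : 2 ^ 44 * H ^ 2 ≤ ρ * m) :
    (ρ : ℝ) / (2 ^ 48 * m) ≤ ∑ j ∈ Finset.Ico m (2 * m) ×ˢ Finset.Ico ρ (2 * ρ),
      (coinFlips ℕ).real (u.hitsTriple (j.2 + ρ + 1) (2 * j.1)) := by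
  have hm0 : (0 : ℝ) < m := by exact_mod_cast (by omega : 0 < m)
  have hterm : ∀ j ∈ Finset.Ico m (2 * m) ×ˢ Finset.Ico ρ (2 * ρ), 1 / (2 ^ 48 * (m : ℝ) ^ 2) ≤
      (coinFlips ℕ).real (u.hitsTriple (j.2 + ρ + 1) (2 * j.1)) := by
    rintro ⟨g, N⟩ hj
    simp only [Finset.mem_product, Finset.mem_Ico] at hj ⊢
    obtain ⟨r, hS⟩ := exists_admissibleScales hH hHρ (hρ.trans hj.1.1) (hm.trans hj.1.1)
      (hgap.trans (Nat.mul_le_mul_left _ hj.1.1))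
    refine le_trans ?_ (hu.one_div_le_coinFlips_hitsTriple hS hj.2.1 hj.2.2.le)
    have hg0 : (0 : ℝ) < g := hm0.trans_le (by exact_mod_cast hj.1.1)
    have hgm : (g : ℝ) ≤ 2 * m := by exact_mod_cast hj.1.2.le
    refine one_div_le_one_div_of_le (by positivity) ?_
    nlinarith
  refine le_trans (le_of_eq ?_) (Finset.card_nsmul_le_sum _ _ _ hterm)
  rw [Finset.card_product, Nat.card_Ico, Nat.card_Ico, nsmul_eq_mul, two_mul, two_mul,
    Nat.add_sub_cancel, Nat.add_sub_cancel]
  push_cast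
  field_simp

lemma WalkState.Confined.div_le_mul_coinFlips (hu : u.Confined H ρ) (hH : 1 ≤ H)
    (hHρ : H ≤ ρ) (hρ : 100 * ρ ≤ m) (hm : 2 ^ 20 ≤ m) (hgap : 2 ^ 44 * H ^ 2 ≤ ρ * m) :
    (ρ : ℝ) / (2 ^ 48 * m) ≤ (5 + 4 * Real.log m) *
      (coinFlips ℕ).real {s | ∃ k, (u.run s k).HasFavTripleIn ρ m} := by
  refine (hu.le_sum_coinFlips_hitsTriple hH hHρ hρ hm hgap).trans ?_
  refine u.sum_coinFlips_real_le_mul _ _ (fun j _ ↦ u.measurableSet_hitsTriple _ _)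
    (fun j hj s ⟨k, hk⟩ ↦ ?_) fun t s hs ↦ sum_coinFlips_splice_hitsTriple_le hs
  rw [Finset.mem_product] at hj
  exact ⟨k, j.2, hj.2, j.1, hj.1, hk⟩

end SecondMoment

section Confinement

/-- The state of a walk about to start at the origin. The starting position is not a visit. -/
def WalkState.initial : WalkState := ⟨fun _ ↦ 0, 0⟩

lemma WalkState.localTime_step_le (u : WalkState) (b : Bool) (y : ℤ) :
    (u.step b).localTime y ≤ u.localTime y + 1 := by
  by_cases h : y = u.pos + direction b
  · simp [step, h]
  · simp [step, h]

lemma WalkState.one_le_localTime_step_pos (u : WalkState) (b : Bool) :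
    1 ≤ (u.step b).localTime (u.step b).pos := by
  simp [step]

/-- The flips along which the maximal local time of the walk from the origin reaches `H` at time
`t`, while the walk is still confined to `[-ρ, ρ]`. -/
def confinedAtHeight (H ρ t : ℕ) : Set (ℕ → Bool) :=
  WalkState.initial.firstTime (fun u ↦ ∃ y, H ≤ u.localTime y) t ∩
    {s | (WalkState.initial.run s t).Confined H ρ}

lemma dependsOn_confinedAtHeight (H ρ t : ℕ) :
    DependsOn (· ∈ confinedAtHeight H ρ t) (Set.Iio t) :=
  dependsOn_mem_inter (WalkState.dependsOn_firstTime _ _ _)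
    (WalkState.dependsOn_run _ t fun u ↦ u.Confined H ρ)

lemma measurableSet_confinedAtHeight (H ρ t : ℕ) : MeasurableSet (confinedAtHeight H ρ t) :=
  measurableSet_of_dependsOn_finite (Set.finite_Iio t) (dependsOn_confinedAtHeight H ρ t)

lemma pairwise_disjoint_confinedAtHeight (H ρ : ℕ) :
    Pairwise (Function.onFun Disjoint (confinedAtHeight H ρ)) :=
  fun _ _ hne ↦ (WalkState.pairwise_disjoint_firstTime _ _ hne).mono
    Set.inter_subset_left Set.inter_subset_left

variable {H ρ T : ℕ}

lemma mem_iUnion_confinedAtHeight (hH : 1 ≤ H) {s : ℕ → Bool}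
    (hT : H ≤ (WalkState.initial.run s T).localTime 0)
    (hzero : ∀ y : ℤ, (y < -ρ ∨ ρ < y) → (WalkState.initial.run s T).localTime y = 0) :
    s ∈ ⋃ t, confinedAtHeight H ρ t := by
  classical
  have hex : ∃ k y, H ≤ (WalkState.initial.run s k).localTime y := ⟨T, 0, hT⟩
  obtain ⟨t, ht⟩ : ∃ t, Nat.find hex = t + 1 := Nat.exists_eq_succ_of_ne_zero fun h ↦ by
    obtain ⟨y, hy⟩ := h ▸ Nat.find_spec hex
    exact absurd hy (not_le.mpr hH)
  have hmin (y : ℤ) : (WalkState.initial.run s t).localTime y < H :=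
    not_le.mp fun hy ↦ Nat.find_min hex (ht ▸ t.lt_succ_self) ⟨y, hy⟩
  have hout (y : ℤ) (hy : y < -ρ ∨ ρ < y) : (WalkState.initial.run s (t + 1)).localTime y = 0 :=
    Nat.eq_zero_of_le_zero <| (hzero y hy) ▸
      WalkState.initial.monotone_localTime_run s y (ht ▸ Nat.find_min' hex ⟨0, hT⟩)
  have hpos : ¬ ((WalkState.initial.run s (t + 1)).pos < -ρ ∨
      ρ < (WalkState.initial.run s (t + 1)).pos) := fun h ↦
    absurd (hout _ h) (Nat.one_le_iff_ne_zero.mp (WalkState.one_le_localTime_step_pos _ (s t)))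
  refine Set.mem_iUnion.mpr ⟨t + 1,
    ⟨ht ▸ Nat.find_spec hex, fun k hk ↦ Nat.find_min hex (ht ▸ hk)⟩,
    ⟨fun y ↦ ?_, hout, by omega, by omega⟩⟩
  exact (WalkState.localTime_step_le _ (s t) y).trans (hmin y)

/-- At most `2 ρ + 1` departures from every site. -/
def uniformDepartures (ρ : ℕ) (_ : ℤ) : Finset ℕ := Finset.range (2 * ρ + 1 + 1)

/-- The crossings of edges on the side of the origin behind it with respect to `b`, when the walk
from the origin has left it `H` times, do not extend beyond distance `ρ`. -/
def confinedChain (H ρ : ℕ) (b : Bool) : Set ArrowStacks :=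
  rootedChain b true (uniformDepartures ρ) (immigration b 0) ρ 0 H

lemma confinedChain_inter_subset (hH : 1 ≤ H) :
    confinedChain H ρ true ∩ confinedChain H ρ false ⊆
      {ω | readArrows 0 ω ∈ ⋃ t, confinedAtHeight H ρ t} := by
  rintro ω ⟨hleft, hright⟩
  obtain ⟨T, hpos, hdep, hside⟩ := exists_stackWalk_of_crossingChain (a := 0) (x := 0) (p := H)
    (A := fun _ ↦ uniformDepartures ρ) (N := fun _ ↦ ρ)
    (Bool.forall_bool.mpr ⟨hright, hleft⟩) (by simp)
  have hloc (y : ℤ) :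
      (WalkState.initial.run (readArrows 0 ω) T).localTime y = (stackWalk 0 ω T).dep y := by
    have := localTime_run_readArrows .initial ω T y
    simp only [show WalkState.initial.pos = 0 from rfl, hpos,
      show WalkState.initial.localTime y = 0 from rfl, zero_add] at this
    exact Nat.add_right_cancel this
  refine mem_iUnion_confinedAtHeight (T := T) hH (by rw [hloc, hdep]) fun y hy ↦ ?_
  rw [hloc]
  obtain hy | hy := hy
  · exact (hside true y (by simp; omega)).2 (by simp; omega)
  · exact (hside false y (by simp; omega)).2 (by simp; omega)

lemma one_sub_le_chainWeight_uniformDepartures {l : ℕ} (hl : 1 ≤ l) (hH : 1 ≤ H) (b : Bool)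
    {i : ℕ} (hi : i ≤ H) :
    1 - 2 / (l : ℝ) ≤ chainWeight true
      (chainSites b (uniformDepartures (l * H)) (immigration b 0) (l * H) (0 - direction b)) i := by
  have hroomy : RoomySites (l * H) 0
      (chainSites b (uniformDepartures (l * H)) (immigration b 0) (l * H) (0 - direction b)) :=
    roomySites_chainSites fun z hz _ ↦
      ⟨by cases b <;> simp [immigration] at * <;> omega, _, le_rfl, rfl⟩
  refine le_trans ?_ (one_sub_le_chainWeight hroomy i)
  have : (1 : ℝ) ≤ l := by exact_mod_cast hl
  have : (1 : ℝ) ≤ H := by exact_mod_cast hH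
  have : (i : ℝ) ≤ H := by exact_mod_cast hi
  rw [length_chainSites, sub_le_sub_iff_left]
  push_cast
  rw [← add_div, one_add_one_eq_two, mul_div_assoc',
    div_le_div_iff₀ (by positivity) (by positivity)]
  nlinarith

lemma one_sub_le_coinFlips_confinedAtHeight {l : ℕ} (hH : 1 ≤ H) (hl : 2 ≤ l) :
    1 - 4 / (l : ℝ) ≤ (coinFlips ℕ).real (⋃ t, confinedAtHeight H (l * H) t) := by
  rw [coinFlips_real_eq_stacks 0 (.iUnion fun t ↦ measurableSet_confinedAtHeight H (l * H) t)]
  refine le_trans ?_ (measureReal_mono (confinedChain_inter_subset hH))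
  have hsplit := stackProb_rootedChain_inter (fun _ ↦ true) (fun _ ↦ uniformDepartures (l * H))
    (fun b ↦ immigration b 0) (fun _ ↦ l * H) 0 H
  have hmass : 1 - 4 / (l : ℝ) =
      ∑ i ∈ Finset.range (H + 1), binomialWeight H i * (1 - 4 / (l : ℝ)) := by
    rw [← Finset.sum_mul, sum_binomialWeight, one_mul]
  refine (hmass.le.trans (Finset.sum_le_sum fun i hi ↦ ?_)).trans hsplit.ge
  refine mul_le_mul_of_nonneg_left ?_ (binomialWeight_nonneg _ _)
  have hnonneg : 0 ≤ 1 - 2 / (l : ℝ) := by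
    rw [sub_nonneg, div_le_one (by positivity)]
    exact_mod_cast hl
  have hleft := one_sub_le_chainWeight_uniformDepartures (l := l) (by omega) hH true
    (Finset.mem_range_succ_iff.mp hi)
  have hright := one_sub_le_chainWeight_uniformDepartures (l := l) (by omega) hH false
    (Nat.sub_le H i)
  calc 1 - 4 / (l : ℝ) ≤ (1 - 2 / l) * (1 - 2 / l) := by
        linear_combination sq_nonneg (2 / (l : ℝ))
    _ ≤ _ := mul_le_mul hleft hright hnonneg (chainWeight_nonneg _ _ _)

end Confinement

section Iteration

/-- The flips along which the walk from the origin meets no favorite triple of height in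
`[a, b)`. -/
def avoidsTriples (a b : ℕ) : Set (ℕ → Bool) :=
  {s | ∀ k x h, a ≤ h → h < b → ¬ (WalkState.initial.run s k).IsFavTriple x h}

lemma measurableSet_avoidsTriples (a b : ℕ) : MeasurableSet (avoidsTriples a b) := by
  rw [avoidsTriples, Set.ofPred_forall]
  exact .iInter fun k ↦ WalkState.initial.measurableSet_run k
    fun u ↦ ∀ x h, a ≤ h → h < b → ¬ u.IsFavTriple x h

lemma avoidsTriples_anti {a b b' : ℕ} (h : b ≤ b') : avoidsTriples a b' ⊆ avoidsTriples a b :=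
  fun _ hs k x j hja hjb ↦ hs k x j hja (hjb.trans_le h)

variable {a H ρ l m t : ℕ}

/- Once the local time has reached `H` somewhere, the heights below `H` are out of reach. -/
lemma dependsOn_confinedAtHeight_inter_avoidsTriples :
    DependsOn (· ∈ confinedAtHeight H ρ t ∩ avoidsTriples a H) (Set.Iio t) := by
  have hforward (s s' : ℕ → Bool) (hss' : ∀ i ∈ Set.Iio t, s i = s' i)
      (hs : s ∈ confinedAtHeight H ρ t ∩ avoidsTriples a H) :
      s' ∈ confinedAtHeight H ρ t ∩ avoidsTriples a H := by
    have hs' : s' ∈ confinedAtHeight H ρ t :=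
      (Eq.to_iff (dependsOn_confinedAtHeight H ρ t hss')).mp hs.1
    refine ⟨hs', fun k x h ha hH htriple ↦ ?_⟩
    obtain hkt | htk := lt_or_ge k t
    · refine hs.2 k x h ha hH ?_
      rwa [WalkState.run_congr _ fun i hi ↦ hss' i (hi.trans hkt)]
    · obtain ⟨y, hy⟩ := hs'.1.1
      have hmono := WalkState.initial.monotone_localTime_run s' y htk
      exact absurd hH (not_lt.mpr (hy.trans (hmono.trans (htriple.localTime_le y))))
  exact fun s s' hss' ↦
    propext ⟨hforward s s' hss', hforward s' s fun i hi ↦ (hss' i hi).symm⟩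

lemma le_coinFlips_splice_mem_compl_avoidsTriples (ha : a ≤ H) (hH : 1 ≤ H) (hl : 1 ≤ l)
    (hm : m = 2 ^ 44 * (l * H)) {c : ℝ} (hc : c * (5 + 4 * Real.log m) ≤ 1 / 2 ^ 92)
    {s : ℕ → Bool} (hs : (WalkState.initial.run s t).Confined H (l * H)) :
    c ≤ (coinFlips ℕ).real {s' | splice t s s' ∈ (avoidsTriples a (4 * m))ᶜ} := by
  have hHl : H ≤ l * H := Nat.le_mul_of_pos_left H hl
  have hl0 : (l : ℝ) ≠ 0 := by exact_mod_cast (by omega : l ≠ 0)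
  have hH0 : (H : ℝ) ≠ 0 := by exact_mod_cast (by omega : H ≠ 0)
  have hprob := hs.div_le_mul_coinFlips hH hHl (m := m) (by omega) (by omega)
    (by rw [hm]; nlinarith)
  have hratio : ((l * H : ℕ) : ℝ) / (2 ^ 48 * m) = 1 / 2 ^ 92 := by
    rw [hm]
    push_cast
    field_simp
    norm_num
  rw [hratio, mul_comm] at hprob
  have hpos : 0 < 5 + 4 * Real.log m := by linarith [Real.log_natCast_nonneg m]
  refine (le_of_mul_le_mul_right (hc.trans hprob) hpos).trans (measureReal_mono ?_)
  rintro s' ⟨k, N, -, g, hg, htriple⟩ havoid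
  rw [Finset.mem_Ico] at hg
  rw [← WalkState.run_splice_add] at htriple
  exact havoid (t + k) _ _ (by omega) (by omega) htriple

lemma mul_coinFlips_le_coinFlips_sdiff (ha : a ≤ H) (hH : 1 ≤ H) (hl : 1 ≤ l)
    (hm : m = 2 ^ 44 * (l * H)) {c : ℝ} (hc : c * (5 + 4 * Real.log m) ≤ 1 / 2 ^ 92) :
    c * (coinFlips ℕ).real ((⋃ t, confinedAtHeight H (l * H) t) ∩ avoidsTriples a H) ≤
      (coinFlips ℕ).real (avoidsTriples a H \ avoidsTriples a (4 * m)) := by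
  have hsum {E : Set (ℕ → Bool)} (hE : MeasurableSet E) :=
    hasSum_measureReal_inter (coinFlips ℕ) (measurableSet_confinedAtHeight H (l * H))
      (pairwise_disjoint_confinedAtHeight H (l * H)) hE
  have hmeas := measurableSet_avoidsTriples a
  refine (hasSum_le (fun t ↦ ?_) ((hsum (hmeas H)).mul_left c)
    (hsum ((hmeas H).diff (hmeas (4 * m))))).trans (measureReal_mono Set.inter_subset_right)
  rw [Set.sdiff_eq, ← Set.inter_assoc]
  exact le_coinFlips_real_inter dependsOn_confinedAtHeight_inter_avoidsTriples
    (hmeas (4 * m)).compl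
    fun s hs ↦ le_coinFlips_splice_mem_compl_avoidsTriples ha hH hl hm hc hs.1.2

lemma coinFlips_avoidsTriples_le (ha : a ≤ H) (hH : 1 ≤ H) (hl : 2 ≤ l)
    (hm : m = 2 ^ 44 * (l * H)) {c : ℝ} (hc0 : 0 ≤ c)
    (hc : c * (5 + 4 * Real.log m) ≤ 1 / 2 ^ 92) :
    (coinFlips ℕ).real (avoidsTriples a (4 * m)) ≤ (coinFlips ℕ).real (avoidsTriples a H) -
      c * ((coinFlips ℕ).real (avoidsTriples a H) - 4 / l) := by
  set G := ⋃ t, confinedAtHeight H (l * H) t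
  have hG : MeasurableSet G := .iUnion fun t ↦ measurableSet_confinedAtHeight H (l * H) t
  have hHm : H ≤ 4 * m := by nlinarith
  have hdiff := mul_coinFlips_le_coinFlips_sdiff ha hH (by omega) hm hc
  rw [measureReal_sdiff (avoidsTriples_anti hHm) (measurableSet_avoidsTriples a _)] at hdiff
  have hconfined : (coinFlips ℕ).real (avoidsTriples a H) - 4 / l ≤
      (coinFlips ℕ).real (G ∩ avoidsTriples a H) := by
    have hcompl := probReal_compl_eq_one_sub (μ := coinFlips ℕ) hG
    have hsplit := measureReal_inter_add_sdiff (μ := coinFlips ℕ) (s := avoidsTriples a H) hG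
    have hle := measureReal_mono (μ := coinFlips ℕ)
      (Set.sdiff_subset_compl (avoidsTriples a H) G)
    rw [Set.inter_comm]
    linarith [one_sub_le_coinFlips_confinedAtHeight hH hl]
  linarith [mul_le_mul_of_nonneg_left hconfined hc0]

/- The decrements would otherwise dominate a divergent harmonic series. -/
lemma le_of_forall_succ_le_sub_div_mul {d : ℕ → ℝ} {D ε κ : ℝ} (hκ : 0 < κ)
    (hd : ∀ n, d (n + 1) ≤ d n - κ / (n + 1) * (d n - ε)) (h0 : 0 ≤ D) (hD : ∀ n, D ≤ d n) :
    D ≤ ε := by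
  by_contra! hlt
  have hpos : 0 < κ * (D - ε) := mul_pos hκ (sub_pos.mpr hlt)
  have hdecrease (n : ℕ) :
      d n ≤ d 0 - κ * (D - ε) * ∑ i ∈ Finset.range n, (1 / (i + 1) : ℝ) := by
    induction n with
    | zero => simp
    | succ n ih =>
      have : κ / (n + 1) * (D - ε) ≤ κ / (n + 1) * (d n - ε) := by
        gcongr
        exact hD n
      rw [Finset.sum_range_succ]
      linear_combination hd n + ih + this
  obtain ⟨n, hn⟩ := (Real.tendsto_sum_range_one_div_nat_succ_atTop.eventually_gt_atTop
    (d 0 / (κ * (D - ε)))).exists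
  rw [div_lt_iff₀ hpos] at hn
  linarith [hdecrease n, hD n]

lemma exists_mul_log_pow_le {q r : ℕ} (hq : 1 ≤ q) (hr : 1 ≤ r) {δ : ℝ} (hδ : 0 < δ) :
    ∃ κ > 0, ∀ n : ℕ, κ / (n + 1) * (5 + 4 * Real.log (q * r ^ n : ℕ)) ≤ δ := by
  have hlogq : 0 ≤ Real.log q := Real.log_natCast_nonneg q
  have hlogr : 0 ≤ Real.log r := Real.log_natCast_nonneg r
  set C := 5 + 4 * Real.log q + 4 * Real.log r
  have hC : 0 < C := by positivity
  refine ⟨δ / C, by positivity, fun n ↦ ?_⟩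
  have hlog : Real.log (q * r ^ n : ℕ) = Real.log q + n * Real.log r := by
    push_cast
    rw [Real.log_mul (by positivity) (by positivity), Real.log_pow]
  have hle : 5 + 4 * Real.log (q * r ^ n : ℕ) ≤ C * (n + 1) := by
    rw [hlog]
    linear_combination 4 * (n : ℝ) * hlogq + 5 * (n.cast_nonneg : (0 : ℝ) ≤ n) + 4 * hlogr
  calc δ / C / (n + 1 : ℝ) * (5 + 4 * Real.log (q * r ^ n : ℕ))
      ≤ δ / C / (n + 1 : ℝ) * (C * (n + 1)) := by gcongr
    _ = δ := by field_simp

lemma coinFlips_iInter_avoidsTriples_le (ha : 1 ≤ a) (hl : 2 ≤ l) :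
    (coinFlips ℕ).real (⋂ b, avoidsTriples a b) ≤ 4 / l := by
  set r := 4 * (2 ^ 44 * l)
  obtain ⟨κ, hκ, hlog⟩ := exists_mul_log_pow_le (q := 2 ^ 44 * (l * a)) (r := r)
    (Nat.mul_pos (by norm_num) (Nat.mul_pos (by omega) ha)) (by omega)
    (δ := 1 / 2 ^ 92) (by norm_num)
  refine le_of_forall_succ_le_sub_div_mul
    (d := fun n ↦ (coinFlips ℕ).real (avoidsTriples a (a * r ^ n))) hκ (fun n ↦ ?_)
    measureReal_nonneg fun n ↦ measureReal_mono (Set.iInter_subset _ _)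
  have hrn : 1 ≤ r ^ n := Nat.one_le_pow _ _ (by omega)
  have hstep := coinFlips_avoidsTriples_le (Nat.le_mul_of_pos_right a hrn)
    (Nat.mul_pos ha hrn) hl rfl (c := κ / (n + 1)) (by positivity)
    (by simpa only [mul_assoc] using hlog n)
  rwa [show 4 * (2 ^ 44 * (l * (a * r ^ n))) = a * r ^ (n + 1) by rw [pow_succ]; ring] at hstep

lemma ae_forall_exists_isFavTriple : ∀ᵐ s ∂coinFlips ℕ, ∀ a : ℕ, ∃ k x h, a ≤ h ∧
    (WalkState.initial.run s k).IsFavTriple x h := by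
  refine ae_all_iff.mpr fun a ↦ ?_
  have hle : (coinFlips ℕ).real (⋂ b, avoidsTriples (a + 1) b) ≤ 0 :=
    ge_of_tendsto (tendsto_const_div_atTop_nhds_zero_nat 4) <|
      Filter.eventually_atTop.mpr ⟨2, fun l hl ↦ coinFlips_iInter_avoidsTriples_le a.succ_pos hl⟩
  refine measure_mono_null (fun s hs ↦ ?_)
    ((measureReal_eq_zero_iff).mp (hle.antisymm measureReal_nonneg))
  exact Set.mem_iInter.mpr fun b k x h ha _ htriple ↦ hs ⟨k, x, h, by omega, htriple⟩

end Iteration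

section IndependentSteps

variable {Ω : Type*} [MeasurableSpace Ω] {μ : Measure Ω} [IsProbabilityMeasure μ]

lemma map_eq_fairCoin {X : Ω → Bool} (hX : Measurable X) (htrue : μ (X ⁻¹' {true}) = 1 / 2) :
    μ.map X = fairCoin := by
  refine Measure.ext_of_singleton fun b ↦ ?_
  rw [Measure.map_apply hX (measurableSet_singleton b), fairCoin_singleton]
  cases b with
  | true => exact htrue
  | false =>
    rw [show ({false} : Set Bool) = {true}ᶜ by ext b; simp, Set.preimage_compl,
      prob_compl_eq_one_sub (hX (measurableSet_singleton true)), htrue]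
    norm_num

lemma map_eq_coinFlips {I : Type*} {X : I → Ω → Bool} (hX : ∀ i, Measurable (X i))
    (hindep : iIndepFun X μ) (htrue : ∀ i, μ (X i ⁻¹' {true}) = 1 / 2) :
    μ.map (fun ω i ↦ X i ω) = coinFlips I := by
  rw [(iIndepFun_iff_map_fun_eq_infinitePi_map hX).mp hindep, coinFlips]
  simp only [map_eq_fairCoin (hX _) (htrue _)]

lemma ae_eq_or_eq_of_add_eq_one {E : Type*} [MeasurableSpace E] [MeasurableSingletonClass E]
    {X : Ω → E} (hX : Measurable X) {a b : E} (hab : a ≠ b)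
    (h : μ {ω | X ω = a} + μ {ω | X ω = b} = 1) : ∀ᵐ ω ∂μ, X ω = a ∨ X ω = b := by
  have ha : MeasurableSet {ω | X ω = a} := hX (measurableSet_singleton a)
  have hb : MeasurableSet {ω | X ω = b} := hX (measurableSet_singleton b)
  have hdisj : Disjoint {ω | X ω = a} {ω | X ω = b} :=
    Set.disjoint_left.mpr fun ω hωa hωb ↦ hab (hωa.symm.trans hωb)
  rw [← measure_union hdisj hb] at h
  exact (prob_compl_eq_zero_iff (ha.union hb)).mpr h

end IndependentSteps

namespace WalkState

lemma pos_run_initial {x : ℕ → ℤ} (hx : ∀ i, x i = 1 ∨ x i = -1) (t : ℕ) :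
    (initial.run (fun i ↦ decide (x i = 1)) t).pos = ∑ i ∈ Finset.range t, x i := by
  induction t with
  | zero => rfl
  | succ t ih =>
    have hdir : direction (decide (x t = 1)) = x t := by
      rcases hx t with h | h <;> simp [h]
    rw [Finset.sum_range_succ, ← ih, run, step]
    simp only [hdir]

lemma localTime_run_initial {x : ℕ → ℤ} (hx : ∀ i, x i = 1 ∨ x i = -1) (t : ℕ) (y : ℤ) :
    (initial.run (fun i ↦ decide (x i = 1)) t).localTime y =
      ((Finset.Icc 1 t).filter fun k ↦ ∑ i ∈ Finset.range k, x i = y).card := by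
  simp only [← pos_run_initial hx]
  induction t with
  | zero => rfl
  | succ t ih =>
    rw [← Finset.insert_Icc_right_eq_Icc_add_one (by omega), Finset.filter_insert]
    by_cases hy : (initial.run (fun i ↦ decide (x i = 1)) (t + 1)).pos = y
    · rw [if_pos hy, Finset.card_insert_of_notMem (by simp), ← ih, ← hy, run, step]
      exact Function.update_self ..
    · rw [if_neg hy, ← ih, run, step]
      exact Function.update_of_ne (Ne.symm hy) ..

/-- The favorite sites of a walk state: the sites of maximal local time. -/
def favoriteSites (u : WalkState) : Set ℤ := {y | ∀ z, u.localTime z ≤ u.localTime y}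

lemma IsFavTriple.favoriteSites_eq {u : WalkState} {x : ℤ} {h : ℕ} (hu : u.IsFavTriple x h) :
    u.favoriteSites = {x, x + 1, x + 3} := by
  ext y
  refine ⟨fun hy ↦ hu.eq_of_le_localTime (hu.2.1 ▸ hy x), fun hy z ↦ ?_⟩
  refine (hu.localTime_le z).trans ?_
  rcases hy with rfl | rfl | rfl
  exacts [hu.2.1.ge, hu.2.2.1.ge, hu.2.2.2.1.ge]

lemma IsFavTriple.encard_favoriteSites {u : WalkState} {x : ℤ} {h : ℕ}
    (hu : u.IsFavTriple x h) : u.favoriteSites.encard = 3 :=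
  Set.encard_eq_three.mpr
    ⟨x, x + 1, x + 3, by omega, by omega, by omega, hu.favoriteSites_eq⟩

lemma IsFavTriple.pos_mem_favoriteSites {u : WalkState} {x : ℤ} {h : ℕ}
    (hu : u.IsFavTriple x h) : u.pos ∈ u.favoriteSites := by
  rw [hu.favoriteSites_eq, hu.1]
  exact Set.mem_insert ..

lemma localTime_run_initial_le (s : ℕ → Bool) (t : ℕ) (y : ℤ) :
    (initial.run s t).localTime y ≤ t := by
  induction t with
  | zero => exact le_rfl
  | succ t ih =>
    rw [run, step]
    simp only [Function.update_apply]
    split_ifs with h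
    · subst h; omega
    · omega

lemma encard_favTriple_times_eq_top {s : ℕ → Bool}
    (hs : ∀ a : ℕ, ∃ k x h, a ≤ h ∧ (initial.run s k).IsFavTriple x h) :
    {t | 1 ≤ t ∧ (initial.run s t).pos ∈ (initial.run s t).favoriteSites ∧
      (initial.run s t).favoriteSites.encard = 3}.encard = ⊤ := by
  refine Set.encard_eq_top (Set.infinite_of_not_bddAbove ?_)
  rintro ⟨M, hM⟩
  obtain ⟨k, x, h, hMh, htriple⟩ := hs (M + 1)
  have hhk : h ≤ k := htriple.2.1 ▸ localTime_run_initial_le s k x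
  have hkM : k ≤ M :=
    hM ⟨by omega, htriple.pos_mem_favoriteSites, htriple.encard_favoriteSites⟩
  omega

end WalkState

end FavoriteSites

/-- With probability 1, `f(3) = ∞`: almost surely there are infinitely many
times `t ≥ 1` at which the currently occupied site is a favorite site and there are exactly
three favorite sites. -/
theorem f_three_eq_top_almost_surely
    {Ω : Type*} [MeasurableSpace Ω] (μ : Measure Ω) [IsProbabilityMeasure μ]
    -- i.i.d. steps, each uniform on {−1, 1}
    (ξ : ℕ → Ω → ℤ) (hξmeas : ∀ i, Measurable (ξ i))
    (hξindep : iIndepFun ξ μ)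
    (hξ1 : ∀ i, μ {ω | ξ i ω = 1} = 1 / 2)
    (hξ2 : ∀ i, μ {ω | ξ i ω = -1} = 1 / 2)
    -- the simple random walk
    (S : ℕ → Ω → ℤ) (hS : ∀ t ω, S t ω = ∑ i ∈ Finset.range t, ξ i ω)
    -- local times
    (L : ℕ → ℤ → Ω → ℕ)
    (hL : ∀ t x ω, L t x ω = ((Finset.Icc 1 t).filter fun k => S k ω = x).card)
    -- favorite (most visited) sites
    (Fav : ℕ → Ω → Set ℤ)
    (hFav : ∀ t ω, Fav t ω = {y : ℤ | ∀ z : ℤ, L t z ω ≤ L t y ω})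
    -- `f3 ω` is the number of times `t ≥ 1` at which the currently occupied site is a
    -- favorite site and there are exactly three favorite sites
    (f3 : Ω → ℕ∞)
    (hf3 : ∀ ω, f3 ω =
      {t : ℕ | 1 ≤ t ∧ S t ω ∈ Fav t ω ∧ (Fav t ω).encard = 3}.encard) :
    μ {ω | f3 ω = ⊤} = 1 := by
  have hdecide : Measurable fun z : ℤ ↦ decide (z = 1) := measurable_of_countable _
  have hflips : ∀ i, Measurable fun ω ↦ decide (ξ i ω = 1) := fun i ↦ hdecide.comp (hξmeas i)
  have hlaw : μ.map (fun ω i ↦ decide (ξ i ω = 1)) = FavoriteSites.coinFlips ℕ :=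
    FavoriteSites.map_eq_coinFlips hflips (hξindep.comp _ fun _ ↦ hdecide) fun i ↦ by
      simpa [Set.preimage] using hξ1 i
  have htriples := FavoriteSites.ae_forall_exists_isFavTriple
  rw [← hlaw] at htriples
  have hsteps : ∀ᵐ ω ∂μ, ∀ i, ξ i ω = 1 ∨ ξ i ω = -1 := ae_all_iff.mpr fun i ↦
    FavoriteSites.ae_eq_or_eq_of_add_eq_one (hξmeas i) (by decide) <| by
      rw [hξ1, hξ2, ENNReal.add_halves]
  have hf3_top : ∀ᵐ ω ∂μ, f3 ω = ⊤ := by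
    filter_upwards [ae_of_ae_map (measurable_pi_lambda _ hflips).aemeasurable htriples, hsteps]
      with ω hω hsteps
    rw [hf3, ← FavoriteSites.WalkState.encard_favTriple_times_eq_top hω]
    simp only [hFav, hL, hS, FavoriteSites.WalkState.favoriteSites,
      FavoriteSites.WalkState.pos_run_initial hsteps,
      FavoriteSites.WalkState.localTime_run_initial hsteps]
  exact (measure_congr (Filter.eventuallyEq_univ.mpr hf3_top)).trans measure_univ
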